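/- Let X₁, X₂, … be i.i.d. real random variables with a bounded Lebesgue density p, mean 0 and variance 1, let S̄_n := max_{1≤k≤n} (X₁+…+X_k), and let p̄_n* denote the density of S̄_n/√n. Then there exists a sequence of positive reals ε_n → 0 such that for all sufficiently large n and almost every x ∈ (0,∞), | p̄_n*(x) − φ₊(x) − P(S̄_{n−1} < 0)·√n·p(√n·x) | ≤ ε_n / x. -/

import Mathlib

open MeasureTheory ProbabilityTheory Filter Set
open scoped ENNReal

/-- Convolution powers of a measure. -/
noncomputable def pw (μ : Measure ℝ) : ℕ → Measure ℝ
  | 0 => Measure.dirac 0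
  | k + 1 => μ.conv (pw μ k)

/-- Law of the maximum of `0` and the first `n` partial sums. -/
noncomputable def Hm (μ : Measure ℝ) : ℕ → Measure ℝ
  | 0 => Measure.dirac 0
  | n + 1 => (μ.conv (Hm μ n)).map (fun x => max x 0)

instance pw_prob (μ : Measure ℝ) [IsProbabilityMeasure μ] (k : ℕ) : IsProbabilityMeasure (pw μ k) := by
  induction k with
  | zero => unfold pw; infer_instance
  | succ k ih => unfold pw; infer_instance

instance Hm_prob (μ : Measure ℝ) [IsProbabilityMeasure μ] (k : ℕ) : IsProbabilityMeasure (Hm μ k) := by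
  induction k with
  | zero => unfold Hm; infer_instance
  | succ k ih => unfold Hm; exact Measure.isProbabilityMeasure_map (by fun_prop)

section
variable (μ : Measure ℝ) [IsProbabilityMeasure μ]

lemma lint_pw_zero (f : ℝ → ℝ≥0∞) (hf : Measurable f) : ∫⁻ x, f x ∂(pw μ 0) = f 0 := by
  simp [pw, lintegral_dirac' _ hf]

lemma lint_pw_succ (k : ℕ) (f : ℝ → ℝ≥0∞) (hf : Measurable f) :
    ∫⁻ x, f x ∂(pw μ (k + 1)) = ∫⁻ x, ∫⁻ y, f (x + y) ∂(pw μ k) ∂μ := by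
  rw [pw, Measure.lintegral_conv hf]

lemma lint_pw_one (f : ℝ → ℝ≥0∞) (hf : Measurable f) :
    ∫⁻ x, f x ∂(pw μ 1) = ∫⁻ x, f x ∂μ := by
  rw [lint_pw_succ _ _ _ hf]
  refine lintegral_congr fun x => ?_
  rw [lint_pw_zero μ _ (by fun_prop)]; simp

lemma pw_one : pw μ 1 = μ := Measure.ext_of_lintegral _ fun f hf => lint_pw_one μ f hf

lemma lint_Hm_zero (f : ℝ → ℝ≥0∞) (hf : Measurable f) : ∫⁻ x, f x ∂(Hm μ 0) = f 0 := by
  simp [Hm, lintegral_dirac' _ hf]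

lemma lint_Hm_succ (k : ℕ) (f : ℝ → ℝ≥0∞) (hf : Measurable f) :
    ∫⁻ x, f x ∂(Hm μ (k + 1)) = ∫⁻ x, ∫⁻ y, f (max (x + y) 0) ∂(Hm μ k) ∂μ := by
  rw [Hm, lintegral_map hf (by fun_prop), Measure.lintegral_conv (by fun_prop)]

lemma pw_add (a b : ℕ) : (pw μ a).conv (pw μ b) = pw μ (a + b) := by
  induction a with
  | zero => simp [pw]
  | succ a ih => rw [pw, Measure.conv_assoc, ih, Nat.succ_add, pw]

lemma lint_pw_add (a b : ℕ) (f : ℝ → ℝ≥0∞) (hf : Measurable f) :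
    ∫⁻ x, f x ∂(pw μ (a + b)) = ∫⁻ x, ∫⁻ y, f (x + y) ∂(pw μ b) ∂(pw μ a) := by
  rw [← pw_add, Measure.lintegral_conv hf]

/-- swapping a fresh step out. -/
lemma lint_pw_succ' (k : ℕ) (f : ℝ → ℝ≥0∞) (hf : Measurable f) :
    ∫⁻ x, f x ∂(pw μ (k + 1)) = ∫⁻ x, ∫⁻ y, f (x + y) ∂μ ∂(pw μ k) := by
  rw [lint_pw_add _ _ _ _ hf]
  refine lintegral_congr fun x => ?_
  rw [lint_pw_one μ _ (by fun_prop)]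

lemma Hm_Iio (n : ℕ) : Hm μ n (Iio 0) = 0 := by
  cases n with
  | zero => simp [Hm]
  | succ n =>
    rw [Hm, Measure.map_apply (by fun_prop) measurableSet_Iio]
    have : (fun x : ℝ => max x 0) ⁻¹' (Iio 0) = ∅ := by ext x; simp
    rw [this, measure_empty]

/-- The pointwise Baxter identity. -/
lemma baxter_pt (f : ℝ → ℝ≥0∞) (a b : ℝ) :
    f (max a 0 + max b 0) + f (max (a + b) 0) =
      f (max (a + max b 0) 0) + f (max (max a 0 + b) 0) := by
  rcases le_total a 0 with ha | ha <;> rcases le_total b 0 with hb | hb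
  · have : a + b ≤ 0 := by linarith
    simp [ha, hb, this]
  · simp [ha, hb, add_comm]
  · simp [ha, hb]
  · have : 0 ≤ a + b := by linarith
    simp [ha, hb, this]

/-- Spitzer's identity, functional form. -/
lemma spitzer_fun (n : ℕ) : ∀ f : ℝ → ℝ≥0∞, Measurable f → (∀ x, f x ≤ 1) →
    ∑ ij ∈ Finset.HasAntidiagonal.antidiagonal n, ∫⁻ s, ∫⁻ y, f (max s 0 + y) ∂(Hm μ ij.2) ∂(pw μ (ij.1 + 1))
      = (n + 1 : ℝ≥0∞) * ∫⁻ x, f x ∂(Hm μ (n + 1)) := by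
  induction n with
  | zero =>
    intro f hf _
    simp only [Finset.Nat.antidiagonal_zero, Finset.sum_singleton, zero_add]
    rw [lint_pw_one μ _ (by fun_prop)]
    simp only [CharP.cast_eq_zero, zero_add, one_mul]
    rw [show (1:ℕ) = 0 + 1 from rfl, lint_Hm_succ _ _ _ hf]
    refine lintegral_congr fun x => ?_
    rw [lint_Hm_zero μ _ (by fun_prop), lint_Hm_zero μ _ (by fun_prop)]; simp
  | succ n ih =>
    intro f hf hf1
    -- the quantity cancelled
    set Z : ℝ≥0∞ := ∑ ij ∈ Finset.HasAntidiagonal.antidiagonal n,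
      ∫⁻ s, ∫⁻ y, f (max (s + y) 0) ∂(Hm μ ij.2) ∂(pw μ (ij.1 + 2)) with hZ
    have hZfin : Z ≠ ⊤ := by
      rw [hZ]
      refine (ENNReal.sum_lt_top.2 fun ij _ => ?_).ne
      calc _ ≤ ∫⁻ s, ∫⁻ y, 1 ∂(Hm μ ij.2) ∂(pw μ (ij.1 + 2)) :=
            lintegral_mono fun s => lintegral_mono fun y => hf1 _
        _ < ⊤ := by simp
    have hA : ∀ i j : ℕ,
        (∫⁻ s, ∫⁻ y, f (max s 0 + y) ∂(Hm μ (j+1)) ∂(pw μ (i + 1))) +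
          ∫⁻ s, ∫⁻ y, f (max (s + y) 0) ∂(Hm μ j) ∂(pw μ (i + 2)) =
        (∫⁻ s, ∫⁻ y, f (max (s + y) 0) ∂(Hm μ (j+1)) ∂(pw μ (i + 1))) +
          ∫⁻ x, (∫⁻ s, ∫⁻ y, f (max (x + (max s 0 + y)) 0) ∂(Hm μ j) ∂(pw μ (i + 1))) ∂μ := by
      intro i j
      rw [lint_pw_succ' μ (i+1) _ (by fun_prop)]
      rw [lintegral_lintegral_swap (μ := μ) (by fun_prop)]
      rw [← lintegral_add_left (by fun_prop), ← lintegral_add_left (by fun_prop)]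
      refine lintegral_congr fun s => ?_
      rw [lint_Hm_succ _ _ _ (by fun_prop), lint_Hm_succ _ _ _ (by fun_prop)]
      rw [← lintegral_add_left (by fun_prop), ← lintegral_add_left (by fun_prop)]
      refine lintegral_congr fun x => ?_
      rw [← lintegral_add_left (by fun_prop), ← lintegral_add_left (by fun_prop)]
      refine lintegral_congr fun y => ?_
      have := baxter_pt f s (x + y)
      rw [show x + (max s 0 + y) = max s 0 + (x + y) by ring, show s + x + y = s + (x + y) by ring]
      exact this
    have hsum := Finset.sum_congr (rfl : Finset.HasAntidiagonal.antidiagonal n = _) (fun ij _ => hA ij.1 ij.2)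
    rw [Finset.sum_add_distrib, Finset.sum_add_distrib, ← lintegral_finsetSum _ (by fun_prop)] at hsum
    have hih : ∀ x : ℝ, ∑ ij ∈ Finset.HasAntidiagonal.antidiagonal n,
        ∫⁻ s, ∫⁻ y, f (max (x + (max s 0 + y)) 0) ∂(Hm μ ij.2) ∂(pw μ (ij.1 + 1))
        = (n + 1 : ℝ≥0∞) * ∫⁻ y, f (max (x + y) 0) ∂(Hm μ (n + 1)) := fun x =>
      ih (fun z => f (max (x + z) 0)) (by fun_prop) (fun _ => hf1 _)
    simp only [hih] at hsum
    rw [lintegral_const_mul _ (by fun_prop), ← lint_Hm_succ _ _ _ hf] at hsum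
    -- the A sum, two ways
    have hA1 : ∑ ij ∈ Finset.HasAntidiagonal.antidiagonal (n+1),
        ∫⁻ s, ∫⁻ y, f (max (s + y) 0) ∂(Hm μ ij.2) ∂(pw μ (ij.1 + 1)) =
        (∫⁻ s, f (max s 0) ∂(pw μ (n + 2))) + ∑ ij ∈ Finset.HasAntidiagonal.antidiagonal n,
        ∫⁻ s, ∫⁻ y, f (max (s + y) 0) ∂(Hm μ (ij.2 + 1)) ∂(pw μ (ij.1 + 1)) := by
      rw [Finset.Nat.sum_antidiagonal_succ']
      congr 1
      · refine lintegral_congr fun s => ?_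
        rw [lint_Hm_zero μ _ (by fun_prop)]; simp
    have hA2 : ∑ ij ∈ Finset.HasAntidiagonal.antidiagonal (n+1),
        ∫⁻ s, ∫⁻ y, f (max (s + y) 0) ∂(Hm μ ij.2) ∂(pw μ (ij.1 + 1)) =
        (∫⁻ x, f x ∂(Hm μ (n + 2))) + Z := by
      rw [Finset.Nat.sum_antidiagonal_succ, lint_Hm_succ _ _ _ hf]
      congr 1
      rw [zero_add, lint_pw_one μ _ (by fun_prop)]
    rw [Finset.Nat.sum_antidiagonal_succ']
    have h0 : ∫⁻ s, ∫⁻ y, f (max s 0 + y) ∂(Hm μ 0) ∂(pw μ (n + 1 + 1)) =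
        ∫⁻ s, f (max s 0) ∂(pw μ (n + 2)) := by
      refine lintegral_congr fun s => ?_
      rw [lint_Hm_zero μ _ (by fun_prop)]; simp
    simp only [h0]
    refine (ENNReal.add_left_inj hZfin).1 ?_
    rw [add_assoc, hsum, ← add_assoc, ← hA1, hA2]
    push_cast; ring

/-- The positive part push-forward. -/
noncomputable def Pm (ν : Measure ℝ) : Measure ℝ := ν.map (fun x => max x 0)

/-- The measure `x⁺ ν(dx)`. -/
noncomputable def Dm (ν : Measure ℝ) : Measure ℝ := ν.withDensity (fun x => ENNReal.ofReal x)

instance Pm_prob (ν : Measure ℝ) [IsProbabilityMeasure ν] : IsProbabilityMeasure (Pm ν) :=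
  Measure.isProbabilityMeasure_map (by fun_prop)

instance Dm_sfin (ν : Measure ℝ) [SFinite ν] : SFinite (Dm ν) := by unfold Dm; infer_instance

lemma lint_Dm (ν : Measure ℝ) (f : ℝ → ℝ≥0∞) (hf : Measurable f) :
    ∫⁻ x, f x ∂(Dm ν) = ∫⁻ x, ENNReal.ofReal x * f x ∂ν := by
  rw [Dm, lintegral_withDensity_eq_lintegral_mul _ (by fun_prop) hf]; rfl

lemma lint_Pm (ν : Measure ℝ) (f : ℝ → ℝ≥0∞) (hf : Measurable f) :
    ∫⁻ x, f x ∂(Pm ν) = ∫⁻ x, f (max x 0) ∂ν := by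
  rw [Pm, lintegral_map hf (by fun_prop)]

lemma spitzer_meas (n : ℕ) :
    ∑ ij ∈ Finset.HasAntidiagonal.antidiagonal n, (Pm (pw μ (ij.1 + 1))).conv (Hm μ ij.2)
      = (n + 1 : ℝ≥0∞) • Hm μ (n + 1) := by
  ext s hs
  have h := spitzer_fun μ n (s.indicator 1) (measurable_one.indicator hs)
    (fun x => by by_cases hx : x ∈ s <;> simp [hx])
  rw [lintegral_indicator_one hs] at h
  rw [Measure.smul_apply, smul_eq_mul, ← h, Measure.finsetSum_apply]
  refine Finset.sum_congr rfl fun ij _ => ?_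
  have hm : Measurable (s.indicator (1 : ℝ → ℝ≥0∞)) := measurable_one.indicator hs
  rw [← lintegral_indicator_one hs, Measure.lintegral_conv hm, lint_Pm _ _ (by fun_prop)]

lemma spitzer_fun' (n : ℕ) (f : ℝ → ℝ≥0∞) (hf : Measurable f) :
    ∑ ij ∈ Finset.HasAntidiagonal.antidiagonal n,
      ∫⁻ s, ∫⁻ y, f (max s 0 + y) ∂(Hm μ ij.2) ∂(pw μ (ij.1 + 1))
      = (n + 1 : ℝ≥0∞) * ∫⁻ x, f x ∂(Hm μ (n + 1)) := by
  have h := congrArg (fun ν => ∫⁻ x, f x ∂ν) (spitzer_meas μ n)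
  simp only [lintegral_smul_measure, lintegral_finsetSum_measure, smul_eq_mul] at h
  rw [← h]
  refine Finset.sum_congr rfl fun ij _ => ?_
  rw [Measure.lintegral_conv hf, lint_Pm _ _ (by fun_prop)]

lemma Hm_ae_nonneg (n : ℕ) : ∀ᵐ y ∂(Hm μ n), 0 ≤ y := by
  rw [ae_iff]
  simpa [Iio_def] using Hm_Iio μ n

lemma spitzer_deriv (n : ℕ) :
    (n + 1 : ℝ≥0∞) • Dm (Hm μ (n + 1)) = ∑ ij ∈ Finset.HasAntidiagonal.antidiagonal n,
      ((Dm (pw μ (ij.1 + 1))).conv (Hm μ ij.2) +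
        (Pm (pw μ (ij.1 + 1))).conv (Dm (Hm μ ij.2))) := by
  refine Measure.ext_of_lintegral _ fun f hf => ?_
  rw [lintegral_smul_measure, lint_Dm _ _ hf, smul_eq_mul, ← spitzer_fun' μ n _ (by fun_prop),
    lintegral_finsetSum_measure]
  refine Finset.sum_congr rfl fun ij _ => ?_
  rw [lintegral_add_measure, Measure.lintegral_conv hf, Measure.lintegral_conv hf,
    lint_Dm _ _ (by fun_prop), lint_Pm _ _ (by fun_prop),
    ← lintegral_add_left (by fun_prop)]
  refine lintegral_congr fun s => ?_
  rw [lint_Dm _ _ (by fun_prop)]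
  rcases le_total s 0 with hs | hs
  · simp [hs, ENNReal.ofReal_of_nonpos hs]
  · rw [← lintegral_const_mul _ (by fun_prop), ← lintegral_add_left (by fun_prop)]
    refine lintegral_congr_ae ?_
    filter_upwards [Hm_ae_nonneg μ ij.2] with y hy
    simp only [max_eq_left hs]
    rw [ENNReal.ofReal_add hs hy, add_mul]

lemma lint_pos_pw (h1 : ∫⁻ x, ENNReal.ofReal x ∂μ ≠ ⊤) (k : ℕ) :
    ∫⁻ x, ENNReal.ofReal x ∂(pw μ k) ≠ ⊤ := by
  induction k with
  | zero => rw [lint_pw_zero _ _ (by fun_prop)]; simp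
  | succ k ih =>
    rw [lint_pw_succ _ _ _ (by fun_prop)]
    refine ne_top_of_le_ne_top (b := ∫⁻ x, ∫⁻ y, (ENNReal.ofReal x + ENNReal.ofReal y) ∂(pw μ k) ∂μ) ?_
      (lintegral_mono fun x => lintegral_mono fun y => ENNReal.ofReal_add_le)
    simp only [lintegral_add_left measurable_const, lintegral_const, measure_univ, mul_one]
    rw [lintegral_add_left (by fun_prop)]
    simp [h1, ih]

lemma lint_pos_Hm (h1 : ∫⁻ x, ENNReal.ofReal x ∂μ ≠ ⊤) (k : ℕ) :
    ∫⁻ x, ENNReal.ofReal x ∂(Hm μ k) ≠ ⊤ := by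
  induction k with
  | zero => rw [lint_Hm_zero _ _ (by fun_prop)]; simp
  | succ k ih =>
    rw [lint_Hm_succ _ _ _ (by fun_prop)]
    refine ne_top_of_le_ne_top (b := ∫⁻ x, ∫⁻ y, (ENNReal.ofReal x + ENNReal.ofReal y) ∂(Hm μ k) ∂μ) ?_
      (lintegral_mono fun x => lintegral_mono fun y => ?_)
    · simp only [lintegral_add_left measurable_const, lintegral_const, measure_univ, mul_one]
      rw [lintegral_add_left (by fun_prop)]
      simp [h1, ih]
    · simp only [ENNReal.ofReal_max, ENNReal.ofReal_zero]
      simpa using ENNReal.ofReal_add_le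

lemma Dm_fin (ν : Measure ℝ) (h : ∫⁻ x, ENNReal.ofReal x ∂ν ≠ ⊤) : IsFiniteMeasure (Dm ν) :=
  isFiniteMeasure_withDensity h

/-- Power series lemma. -/
lemma ps_lemma (u v : ℕ → ℂ) (c e : ℕ → ℂ) (hv0 : v 0 = 0)
    (hu : ∀ n : ℕ, ((n : ℂ) + 1) * u (n + 1) =
      ∑ ij ∈ Finset.HasAntidiagonal.antidiagonal n, c ij.1 * u ij.2)
    (hv : ∀ n : ℕ, ((n : ℂ) + 1) * v (n + 1) =
      ∑ ij ∈ Finset.HasAntidiagonal.antidiagonal n, (e ij.1 * u ij.2 + c ij.1 * v ij.2)) (n : ℕ) :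
    v (n + 1) = ∑ ij ∈ Finset.HasAntidiagonal.antidiagonal n, (ij.1 + 1 : ℂ)⁻¹ * (e ij.1 * u ij.2) := by
  let U := PowerSeries.mk u
  let V := PowerSeries.mk v
  let C := PowerSeries.mk c
  let E := PowerSeries.mk e
  let F : PowerSeries ℂ := PowerSeries.mk (fun k => if k = 0 then 0 else (k : ℂ)⁻¹ * e (k - 1))
  have dU : PowerSeries.derivative ℂ U = C * U := by
    ext n; rw [PowerSeries.coeff_derivative, PowerSeries.coeff_mul]
    simp only [U, C, PowerSeries.coeff_mk]; rw [← hu, mul_comm]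
  have dV : PowerSeries.derivative ℂ V = E * U + C * V := by
    ext n; rw [PowerSeries.coeff_derivative, map_add, PowerSeries.coeff_mul, PowerSeries.coeff_mul]
    simp only [U, C, V, E, PowerSeries.coeff_mk]; rw [← Finset.sum_add_distrib, ← hv, mul_comm]
  have dF : PowerSeries.derivative ℂ F = E := by
    ext n; rw [PowerSeries.coeff_derivative]
    have : (n + 1 : ℂ) ≠ 0 := by exact_mod_cast Nat.succ_ne_zero n
    simp only [F, E, PowerSeries.coeff_mk]
    simp; field_simp
  let W := V - F * U
  have dW : PowerSeries.derivative ℂ W = C * W := by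
    simp only [W, map_sub, Derivation.leibniz, dU, dV, dF, smul_eq_mul]; ring
  have hW : ∀ n, PowerSeries.coeff n W = 0 := by
    intro n
    induction n using Nat.strong_induction_on with
    | _ n ih =>
      cases n with
      | zero => simp [W, V, F, hv0]
      | succ n =>
        have h := congrArg (PowerSeries.coeff n) dW
        rw [PowerSeries.coeff_derivative, PowerSeries.coeff_mul, Finset.sum_eq_zero] at h
        · have : (n + 1 : ℂ) ≠ 0 := by exact_mod_cast Nat.succ_ne_zero n
          exact (mul_eq_zero.1 h).resolve_right this
        · intro ij hij
          rw [ih ij.2 (by have := Finset.HasAntidiagonal.mem_antidiagonal.1 hij; omega), mul_zero]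
  have h := hW (n + 1)
  simp only [W, map_sub, sub_eq_zero, V, PowerSeries.coeff_mk] at h
  rw [h, PowerSeries.coeff_mul, Finset.Nat.sum_antidiagonal_succ]
  simp [F, U, mul_assoc]

lemma intble_cexp (m : Measure ℝ) [IsFiniteMeasure m] (t : ℝ) :
    Integrable (fun x : ℝ => Complex.exp (((inner ℝ x t : ℝ) : ℂ) * Complex.I)) m := by
  refine (integrable_const (1 : ℝ)).mono (by fun_prop) (ae_of_all _ fun a => ?_)
  rw [Complex.norm_exp_ofReal_mul_I]; simp

lemma charFun_finsetSum {ι : Type*} (s : Finset ι) (m : ι → Measure ℝ)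
    (hm : ∀ i ∈ s, IsFiniteMeasure (m i)) (t : ℝ) :
    charFun (∑ i ∈ s, m i) t = ∑ i ∈ s, charFun (m i) t := by
  simp only [charFun_apply]
  rw [integral_finsetSum_measure]
  intro i hi
  have := hm i hi
  exact intble_cexp _ t

lemma charFun_smul_ennreal (c : ℝ≥0∞) (m : Measure ℝ) (t : ℝ) :
    charFun (c • m) t = c.toReal * charFun m t := by
  simp only [charFun_apply, integral_smul_measure]
  simp

/-- Spitzer's identity, differentiated. -/
lemma spitzer_two (h1 : ∫⁻ x, ENNReal.ofReal x ∂μ ≠ ⊤) (n : ℕ) :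
    Dm (Hm μ (n + 1)) = ∑ ij ∈ Finset.HasAntidiagonal.antidiagonal n,
      ((ij.1 + 1 : ℝ≥0∞)⁻¹) • (Dm (pw μ (ij.1 + 1))).conv (Hm μ ij.2) := by
  have hD1 := fun k => Dm_fin (pw μ k) (lint_pos_pw μ h1 k)
  have hD2 := fun k => Dm_fin (Hm μ k) (lint_pos_Hm μ h1 k)
  have hinv : ∀ i : ℕ, ((i + 1 : ℝ≥0∞)⁻¹) ≠ ⊤ := fun i => by simp
  have hf : ∀ ij : ℕ × ℕ, IsFiniteMeasure
      (((ij.1 + 1 : ℝ≥0∞)⁻¹) • (Dm (pw μ (ij.1 + 1))).conv (Hm μ ij.2)) := fun ij =>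
    Measure.smul_finite _ (hinv _)
  refine Measure.ext_of_charFun ?_
  ext t
  rw [charFun_finsetSum _ _ (fun i _ => hf i)]
  rw [ps_lemma (fun n => charFun (Hm μ n) t) (fun n => charFun (Dm (Hm μ n)) t)
    (fun k => charFun (Pm (pw μ (k + 1))) t) (fun k => charFun (Dm (pw μ (k + 1))) t)]
  · refine Finset.sum_congr rfl fun ij _ => ?_
    rw [charFun_smul_ennreal, charFun_conv]
    congr 1
    rw [ENNReal.toReal_inv]
    have : ((ij.1 + 1 : ℝ≥0∞).toReal) = (ij.1 + 1 : ℝ) := by norm_cast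
    rw [this]; push_cast; rfl
  · have : Dm (Hm μ 0) = 0 := Measure.ext_of_lintegral _ fun f hf => by
      rw [lint_Dm _ _ hf, lint_Hm_zero _ _ (by fun_prop)]; simp
    simp [this]
  · intro n
    have h := congrArg (fun ν => charFun ν t) (spitzer_meas μ n)
    beta_reduce at h
    rw [charFun_finsetSum _ _ (fun _ _ => inferInstance), charFun_smul_ennreal] at h
    simp only [charFun_conv] at h
    rw [h]; norm_cast
  · intro n
    have h := congrArg (fun ν => charFun ν t) (spitzer_deriv μ n)
    beta_reduce at h
    rw [charFun_finsetSum _ _ (fun _ _ => inferInstance), charFun_smul_ennreal] at h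
    have : ((n + 1 : ℝ≥0∞).toReal : ℂ) = (n + 1 : ℂ) := by norm_cast
    rw [this] at h
    rw [h]
    refine Finset.sum_congr rfl fun ij _ => ?_
    rw [← charFun_conv, ← charFun_conv]
    simp only [charFun_apply]
    rw [integral_add_measure]
    · exact intble_cexp _ t
    · exact intble_cexp _ t
end

section
variable (μ : Measure ℝ) [IsProbabilityMeasure μ]

lemma Hm_anti_step (n : ℕ) : ∀ f : ℝ → ℝ≥0∞, Antitone f →
    ∫⁻ x, f x ∂(Hm μ (n + 1)) ≤ ∫⁻ x, f x ∂(Hm μ n) := by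
  induction n with
  | zero =>
    intro f hf
    have hm := hf.measurable
    rw [lint_Hm_succ _ _ _ hm, lint_Hm_zero _ _ hm]
    calc _ ≤ ∫⁻ x, ∫⁻ y, f 0 ∂(Hm μ 0) ∂μ :=
          lintegral_mono fun x => lintegral_mono fun y => hf (le_max_right _ _)
      _ = f 0 := by simp
  | succ n ih =>
    intro f hf
    have hm := hf.measurable
    rw [lint_Hm_succ _ _ _ hm, lint_Hm_succ _ _ _ hm]
    exact lintegral_mono fun x => ih _ (fun a b h => hf (max_le_max (by linarith) le_rfl))

lemma Hm_anti {m n : ℕ} (h : m ≤ n) (f : ℝ → ℝ≥0∞) (hf : Antitone f) :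
    ∫⁻ x, f x ∂(Hm μ n) ≤ ∫⁻ x, f x ∂(Hm μ m) := by
  induction n, h using Nat.le_induction with
  | base => rfl
  | succ n _ ih => exact (Hm_anti_step μ n f hf).trans ih

lemma Hm_add_le (m n : ℕ) : ∀ f : ℝ → ℝ≥0∞, Antitone f →
    ∫⁻ x, f x ∂(Hm μ (m + n)) ≤ ∫⁻ s, ∫⁻ y, f (max (s + y) 0) ∂(Hm μ n) ∂(pw μ m) := by
  induction m with
  | zero =>
    intro f hf
    have hm := hf.measurable
    rw [lint_pw_zero _ _ (by fun_prop), zero_add]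
    refine le_of_eq (lintegral_congr_ae ?_)
    filter_upwards [Hm_ae_nonneg μ n] with y hy
    simp [hy]
  | succ m ih =>
    intro f hf
    have hm := hf.measurable
    rw [show m + 1 + n = (m + n) + 1 by ring, lint_Hm_succ _ _ _ hm,
      lint_pw_succ _ _ _ (by fun_prop)]
    refine lintegral_mono fun x => ?_
    refine (ih _ (fun a b h => hf (max_le_max (by linarith) le_rfl))).trans ?_
    refine lintegral_mono fun s => lintegral_mono fun y => hf ?_
    refine max_le_max ?_ le_rfl
    linarith [le_max_left (s + y) 0]

lemma Hm_skel (m N : ℕ) : ∀ f : ℝ → ℝ≥0∞, Antitone f →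
    ∫⁻ x, f x ∂(Hm μ (m * N)) ≤ ∫⁻ x, f x ∂(Hm (pw μ m) N) := by
  induction N with
  | zero => intro f hf; simp [Hm]
  | succ N ih =>
    intro f hf
    have hm := hf.measurable
    rw [show m * (N + 1) = m + m * N by ring, lint_Hm_succ _ _ _ hm]
    refine (Hm_add_le μ _ _ f hf).trans ?_
    exact lintegral_mono fun x => ih _ (fun a b h => hf (max_le_max (by linarith) le_rfl))

lemma anti_ind (u : ℝ) : Antitone ((Iic u).indicator (1 : ℝ → ℝ≥0∞)) := by
  intro a b h
  by_cases hb : b ≤ u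
  · simp [hb, h.trans hb]
  · simp [hb]

lemma Hm_Iic_anti {m n : ℕ} (h : m ≤ n) (u : ℝ) : Hm μ n (Iic u) ≤ Hm μ m (Iic u) := by
  have := Hm_anti μ h _ (anti_ind u)
  rwa [lintegral_indicator_one measurableSet_Iic, lintegral_indicator_one measurableSet_Iic] at this

lemma Hm_Iic_skel (m N : ℕ) (u : ℝ) : Hm μ (m * N) (Iic u) ≤ Hm (pw μ m) N (Iic u) := by
  have := Hm_skel μ m N _ (anti_ind u)
  rwa [lintegral_indicator_one measurableSet_Iic, lintegral_indicator_one measurableSet_Iic] at this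

lemma pw_pw (m k : ℕ) : pw (pw μ m) k = pw μ (m * k) := by
  induction k with
  | zero => simp [pw]
  | succ k ih => rw [pw, ih, pw_add, show m * (k + 1) = m + m * k by ring]

lemma spitzer_zero (n : ℕ) :
    ∑ ij ∈ Finset.HasAntidiagonal.antidiagonal n, pw μ (ij.1 + 1) (Iic 0) * Hm μ ij.2 {0}
      = (n + 1 : ℝ≥0∞) * Hm μ (n + 1) {0} := by
  have h := spitzer_fun' μ n (({0} : Set ℝ).indicator 1)
    (measurable_one.indicator (measurableSet_singleton 0))
  rw [lintegral_indicator_one (measurableSet_singleton 0)] at h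
  rw [← h]
  refine Finset.sum_congr rfl fun ij _ => ?_
  rw [← lintegral_indicator_one (measurableSet_singleton 0),
    ← lintegral_indicator_one (measurableSet_Iic), ← lintegral_mul_const]
  · refine lintegral_congr fun s => ?_
    rw [← lintegral_const_mul]
    · refine lintegral_congr_ae ?_
      filter_upwards [Hm_ae_nonneg μ ij.2] with y hy
      by_cases hs : s ≤ 0
      · simp [hs]
      · push Not at hs
        have : max s 0 + y ≠ 0 := by rw [max_eq_left hs.le]; positivity
        simp [hs, this]
    · exact (measurable_one.indicator (measurableSet_singleton 0))
  · exact (measurable_one.indicator (measurableSet_Iic))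

lemma b_bound (h34 : ∀ k, 1 ≤ k → (pw μ k).real (Iic 0) ≤ 3 / 4) (N : ℕ) :
    ((Hm μ (N + 1)).real {0}) ^ 8 * (N + 1) ≤ 1 := by
  set b : ℕ → ℝ := fun n => (Hm μ n).real {0} with hb
  have hb0 : ∀ n, 0 ≤ b n := fun n => measureReal_nonneg
  have hrec : ∀ n : ℕ, ((n : ℝ) + 1) * b (n + 1) ≤ 3 / 4 * ∑ j ∈ Finset.range (n + 1), b j := by
    intro n
    have h := congrArg ENNReal.toReal (spitzer_zero μ n)
    rw [ENNReal.toReal_sum (by intro a _; finiteness), ENNReal.toReal_mul] at h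
    simp only [ENNReal.toReal_mul] at h
    have e : (n + 1 : ℝ≥0∞).toReal = (n : ℝ) + 1 := by norm_cast
    rw [e] at h
    change _ = ((n : ℝ) + 1) * b (n + 1) at h
    rw [← h, Finset.Nat.sum_antidiagonal_eq_sum_range_succ
      (fun i j => ((pw μ (i + 1)) (Iic 0)).toReal * ((Hm μ j) {0}).toReal), Finset.mul_sum,
      ← Finset.sum_range_reflect]
    refine Finset.sum_le_sum fun j hj => ?_
    have hj' : j < n + 1 := Finset.mem_range.1 hj
    have : n - (n + 1 - 1 - j) = j := by omega
    rw [this]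
    exact mul_le_mul_of_nonneg_right (h34 _ (by omega)) (hb0 j)
  have hT0 : ∀ n, 0 ≤ ∑ j ∈ Finset.range n, b j := fun n => Finset.sum_nonneg fun j _ => hb0 j
  have hT : ∀ n : ℕ, (∑ j ∈ Finset.range (n + 1), b j) ^ 8 ≤ ((n : ℝ) + 1) ^ 7 := by
    intro n
    induction n with
    | zero =>
      have : b 0 ≤ 1 := measureReal_le_one
      simp only [zero_add, Finset.sum_range_one, Nat.cast_zero, one_pow]
      exact pow_le_one₀ (hb0 0) this
    | succ n ih =>
      have hn : (0 : ℝ) < (n : ℝ) + 1 := by positivity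
      set T := ∑ j ∈ Finset.range (n + 1), b j with hTdef
      rw [Finset.sum_range_succ]
      have h1 : T + b (n + 1) ≤ T * (1 + 3 / 4 * (1 / ((n : ℝ) + 1))) := by
        have := hrec n
        rw [mul_comm, ← le_div_iff₀ hn] at this
        have e : T * (1 + 3 / 4 * (1 / ((n : ℝ) + 1))) = T + 3 / 4 * T / ((n : ℝ) + 1) := by
          field_simp
        rw [e]; linarith
      have h2 : (T + b (n + 1)) ^ 8 ≤ (T * (1 + 3 / 4 * (1 / ((n : ℝ) + 1)))) ^ 8 :=
        pow_le_pow_left₀ (add_nonneg (hT0 _) (hb0 _)) h1 8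
      refine h2.trans ?_
      rw [mul_pow]
      set x := 1 / ((n : ℝ) + 1) with hx
      have hx0 : 0 ≤ x := by positivity
      have hx1 : x ≤ 1 := by rw [hx, div_le_one hn]; linarith [n.cast_nonneg (α := ℝ)]
      have h3 : (1 + 3 / 4 * x) ^ 8 ≤ (1 + x) ^ 7 := by
        have a1 : (1 + 3 / 4 * x) ^ 4 ≤ (1 + x) ^ 3 * (1 + 3/8 * x^2) := by
          nlinarith [pow_nonneg hx0 2, pow_nonneg hx0 3, pow_nonneg hx0 4, pow_nonneg hx0 5,
            mul_nonneg hx0 (sub_nonneg.2 hx1), mul_nonneg (pow_nonneg hx0 2) (sub_nonneg.2 hx1)]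
        have a2 : (1 + 3/8 * x^2)^2 ≤ 1 + x := by
          have := pow_le_one₀ hx0 hx1 (n := 2)
          nlinarith [pow_nonneg hx0 2, pow_nonneg hx0 4, mul_nonneg hx0 (sub_nonneg.2 hx1)]
        calc (1 + 3 / 4 * x) ^ 8 = ((1 + 3 / 4 * x) ^ 4) ^ 2 := by ring
          _ ≤ ((1 + x) ^ 3 * (1 + 3/8 * x^2)) ^ 2 := pow_le_pow_left₀ (by positivity) a1 2
          _ = (1 + x) ^ 6 * (1 + 3/8 * x^2) ^ 2 := by ring
          _ ≤ (1 + x) ^ 6 * (1 + x) := by gcongr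
          _ = _ := by ring
      calc T ^ 8 * (1 + 3 / 4 * x) ^ 8 ≤ ((n : ℝ) + 1) ^ 7 * (1 + x) ^ 7 := by gcongr
        _ = (((n : ℝ) + 1) * (1 + x)) ^ 7 := by ring
        _ = _ := by
          congr 1; rw [hx]; field_simp; push_cast; ring
  have hn : (0 : ℝ) < (N : ℝ) + 1 := by positivity
  have h1 : ((N : ℝ) + 1) * b (N + 1) ≤ ∑ j ∈ Finset.range (N + 1), b j := by
    linarith [hrec N, hT0 (N + 1)]
  have h2 := pow_le_pow_left₀ (mul_nonneg hn.le (hb0 _)) h1 8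
  have h3 := h2.trans (hT N)
  rw [mul_pow] at h3
  have : ((N : ℝ) + 1) ^ 7 * ((b (N + 1)) ^ 8 * (N + 1)) ≤ ((N : ℝ) + 1) ^ 7 * 1 := by
    calc _ = ((N : ℝ) + 1) ^ 8 * b (N + 1) ^ 8 := by ring
      _ ≤ _ := by simpa using h3
  exact le_of_mul_le_mul_left this (by positivity)

lemma Hm_zero_lower (N : ℕ) (h : ℝ) :
    μ (Iic (-h)) * Hm μ N (Iic h) ≤ Hm μ (N + 1) {0} := by
  have hm : Measurable (({0} : Set ℝ).indicator (1 : ℝ → ℝ≥0∞)) :=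
    (measurable_one.indicator (measurableSet_singleton 0))
  have hm' : Measurable ((Iic h).indicator (1 : ℝ → ℝ≥0∞)) :=
    (measurable_one.indicator (measurableSet_Iic))
  rw [← lintegral_indicator_one (measurableSet_singleton 0), lint_Hm_succ _ _ _ hm,
    ← lintegral_indicator_one (measurableSet_Iic), ← lintegral_indicator_one (measurableSet_Iic),
    ← lintegral_mul_const _ ((measurable_one.indicator (measurableSet_Iic)))]
  refine lintegral_mono fun x => ?_
  beta_reduce
  rw [← lintegral_const_mul _ hm']
  refine lintegral_mono fun y => ?_
  by_cases hx : x ≤ -h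
  · by_cases hy : y ≤ h
    · have : max (x + y) 0 = 0 := max_eq_right (by linarith)
      simp [hx, hy, this]
    · simp [hy]
  · simp [hx]

/-- Concentration at the origin. -/
lemma conc_zero (hclt : ∃ c > 0, ∃ m0 : ℕ, 1 ≤ m0 ∧ ∀ m ≥ m0, (pw μ m).real (Iic 0) ≤ 3 / 4 ∧
      c ≤ (pw μ m).real (Iic (-Real.sqrt m))) :
    ∃ C > 0, ∀ n m : ℕ, 1 ≤ n → 1 ≤ m →
      ((Hm μ n).real (Iic (Real.sqrt m))) ^ 8 ≤ C * (m / n) := by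
  obtain ⟨c, hc, m0, hm0, H⟩ := hclt
  have key : ∀ n m : ℕ, 1 ≤ n → m0 ≤ m →
      ((Hm μ n).real (Iic (Real.sqrt m))) ^ 8 ≤ (1 / c) ^ 8 * (m / n) := by
    intro n m hn hm
    have hm1 : 0 < m := by omega
    set N := n / m with hN
    have h1 : (Hm μ n).real (Iic (Real.sqrt m)) ≤ (Hm (pw μ m) N).real (Iic (Real.sqrt m)) := by
      refine ENNReal.toReal_mono (by finiteness) ?_
      exact (Hm_Iic_anti μ (Nat.mul_div_le n m) _).trans (Hm_Iic_skel μ m N _)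
    have h2 : c * (Hm (pw μ m) N).real (Iic (Real.sqrt m)) ≤ (Hm (pw μ m) (N + 1)).real {0} := by
      have := ENNReal.toReal_mono (by finiteness) (Hm_zero_lower (pw μ m) N (Real.sqrt m))
      rw [ENNReal.toReal_mul] at this
      exact (mul_le_mul_of_nonneg_right (H m hm).2 measureReal_nonneg).trans this
    have h3 := b_bound (pw μ m) (fun k hk => by
      rw [pw_pw]; exact (H (m * k) (hm.trans (Nat.le_mul_of_pos_right m hk))).1) N
    have hNn : (n : ℝ) / m ≤ (N : ℝ) + 1 := by
      rw [div_le_iff₀ (by exact_mod_cast hm1)]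
      have : n < (N + 1) * m := (Nat.div_lt_iff_lt_mul hm1).1 (Nat.lt_succ_self _)
      exact_mod_cast this.le
    have h4 : (c * (Hm μ n).real (Iic (Real.sqrt m))) ^ 8 * ((n : ℝ) / m) ≤ 1 := by
      refine le_trans ?_ h3
      have : c * (Hm μ n).real (Iic (Real.sqrt m)) ≤ (Hm (pw μ m) (N + 1)).real {0} :=
        (mul_le_mul_of_nonneg_left h1 hc.le).trans h2
      gcongr
    have hn' : (0 : ℝ) < n := by exact_mod_cast hn
    have hm' : (0 : ℝ) < m := by exact_mod_cast hm1
    rw [mul_pow, ← le_div_iff₀ (by positivity)] at h4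
    calc _ = (1 / c) ^ 8 * (c ^ 8 * (Hm μ n).real (Iic (Real.sqrt m)) ^ 8) := by
          field_simp
      _ ≤ (1 / c) ^ 8 * (1 / (n / m)) := by gcongr
      _ = _ := by field_simp
  refine ⟨(1 / c) ^ 8 * m0, by positivity, fun n m hn hm => ?_⟩
  have hm' : (1 : ℝ) ≤ m := by exact_mod_cast hm
  have hn' : (0 : ℝ) < n := by exact_mod_cast hn
  have hm0' : (1 : ℝ) ≤ m0 := by exact_mod_cast hm0
  rcases le_total m0 m with h | h
  · refine (key n m hn h).trans ?_
    gcongr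
    nlinarith [pow_pos (one_div_pos.2 hc) 8]
  · have h1 : (Hm μ n).real (Iic (Real.sqrt m)) ≤ (Hm μ n).real (Iic (Real.sqrt m0)) :=
      measureReal_mono (Iic_subset_Iic.2 (Real.sqrt_le_sqrt (by exact_mod_cast h)))
    calc _ ≤ _ := pow_le_pow_left₀ measureReal_nonneg h1 8
      _ ≤ _ := key n m0 hn le_rfl
      _ = (1 / c) ^ 8 * m0 * (1 / n) := by ring
      _ ≤ _ := by gcongr

lemma conc_ind (a b : ℕ) (h : ℝ) : ∀ u : ℝ, Hm μ (a + b) (Icc u (u + h)) ≤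
    Hm μ b (Iic h) + ((pw μ a).conv (Hm μ b)) (Icc u (u + h)) := by
  induction a with
  | zero => intro u; simp [pw]
  | succ a ih =>
    intro u
    rcases le_or_gt u 0 with hu | hu
    · refine le_trans ?_ le_self_add
      refine (measure_mono (t := Iic h) fun y hy => ?_).trans (Hm_Iic_anti μ (by omega) h)
      exact hy.2.trans (by linarith)
    · have hm : ∀ v, Measurable ((Icc v (v + h)).indicator (1 : ℝ → ℝ≥0∞)) := fun v =>
        (measurable_one.indicator (measurableSet_Icc))
      have hsh : ∀ v x y : ℝ, (Icc v (v + h)).indicator (1 : ℝ → ℝ≥0∞) (x + y)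
          = (Icc (v - x) (v - x + h)).indicator (1 : ℝ → ℝ≥0∞) y := fun v x y => by
        simp only [indicator_apply, mem_Icc]
        congr 1
        simp only [eq_iff_iff]
        constructor <;> rintro ⟨h1, h2⟩ <;> constructor <;> linarith
      have e1 : Hm μ (a + 1 + b) (Icc u (u + h)) =
          ∫⁻ x, Hm μ (a + b) (Icc (u - x) (u - x + h)) ∂μ := by
        rw [show a + 1 + b = a + b + 1 by ring, ← lintegral_indicator_one measurableSet_Icc,
          lint_Hm_succ _ _ _ (hm u)]
        refine lintegral_congr fun x => ?_
        rw [← lintegral_indicator_one measurableSet_Icc]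
        refine lintegral_congr fun y => ?_
        rw [← hsh u x y]
        rcases le_total 0 (x + y) with hx | hx
        · rw [max_eq_left hx]
        · rw [max_eq_right hx]
          have h1 : (0 : ℝ) ∉ Icc u (u + h) := fun h => by linarith [h.1]
          have h2 : (x + y) ∉ Icc u (u + h) := fun h => by linarith [h.1]
          simp only [indicator_of_notMem h1, indicator_of_notMem h2]
      have e2 : ((pw μ (a + 1)).conv (Hm μ b)) (Icc u (u + h)) =
          ∫⁻ x, ((pw μ a).conv (Hm μ b)) (Icc (u - x) (u - x + h)) ∂μ := by
        rw [pw, Measure.conv_assoc, ← lintegral_indicator_one measurableSet_Icc,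
          Measure.lintegral_conv (hm u)]
        refine lintegral_congr fun x => ?_
        rw [← lintegral_indicator_one measurableSet_Icc]
        exact lintegral_congr fun y => hsh u x y
      rw [e1, e2]
      calc _ ≤ ∫⁻ x, (Hm μ b (Iic h) + ((pw μ a).conv (Hm μ b)) (Icc (u - x) (u - x + h))) ∂μ :=
            lintegral_mono fun x => ih (u - x)
        _ = _ := by rw [lintegral_add_left measurable_const]; simp

lemma conv_bdd_density (ν η : Measure ℝ) [IsProbabilityMeasure η] [SFinite ν] (D : ℝ≥0∞)
    (hD : ∀ s, MeasurableSet s → ν s ≤ D * volume s) (s : Set ℝ) (hs : MeasurableSet s) :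
    (ν.conv η) s ≤ D * volume s := by
  have hm : Measurable (s.indicator (1 : ℝ → ℝ≥0∞)) := (measurable_one.indicator hs)
  rw [Measure.conv_comm, ← lintegral_indicator_one hs, Measure.lintegral_conv hm]
  calc _ ≤ ∫⁻ x, D * volume s ∂η := by
        refine lintegral_mono fun x => ?_
        have : ∀ y, s.indicator (1 : ℝ → ℝ≥0∞) (x + y) = ((x + ·) ⁻¹' s).indicator 1 y :=
          fun y => rfl
        simp only [this]
        rw [lintegral_indicator_one (hs.preimage (by fun_prop))]
        refine (hD _ (hs.preimage (by fun_prop))).trans ?_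
        rw [measure_preimage_add]
    _ = _ := by simp

/-- Concentration. -/
lemma conc (hclt : ∃ c > 0, ∃ m0 : ℕ, 1 ≤ m0 ∧ ∀ m ≥ m0, (pw μ m).real (Iic 0) ≤ 3 / 4 ∧
      c ≤ (pw μ m).real (Iic (-Real.sqrt m)))
    (D : ℝ) (hD0 : 0 ≤ D) (hD : ∀ k : ℕ, 1 ≤ k → ∀ s, MeasurableSet s →
      pw μ k s ≤ ENNReal.ofReal (D / Real.sqrt k) * volume s) :
    ∃ C > 0, ∀ n m : ℕ, 1 ≤ m → m ≤ n → ∀ u : ℝ,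
      ((Hm μ n).real (Icc u (u + Real.sqrt m))) ≤ C * ((m : ℝ) / n) ^ (1 / 8 : ℝ) := by
  obtain ⟨C, hC, H⟩ := conc_zero μ hclt
  refine ⟨1 + 2 * C ^ (1 / 8 : ℝ) + 2 * D, by positivity, fun n m hm hmn u => ?_⟩
  have hm' : (1 : ℝ) ≤ m := by exact_mod_cast hm
  have hmn' : (m : ℝ) ≤ n := by exact_mod_cast hmn
  have hn' : (1 : ℝ) ≤ n := by linarith
  rcases Nat.lt_or_ge n 2 with h2 | h2
  · have hn1 : n = 1 := by omega
    have hm1 : m = 1 := by omega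
    have e : ((m : ℝ) / n) ^ (1 / 8 : ℝ) = 1 := by rw [hn1, hm1]; simp
    rw [e]
    have : (Hm μ n).real (Icc u (u + Real.sqrt m)) ≤ 1 := measureReal_le_one
    have h3 : 0 ≤ C ^ (1 / 8 : ℝ) := by positivity
    linarith
  · set a := n / 2 with ha
    set b := n - a with hb
    have hab : a + b = n := by omega
    have ha1 : 1 ≤ a := by omega
    have hb1 : 1 ≤ b := by omega
    have ha3 : (n : ℝ) ≤ 4 * a := by exact_mod_cast (by omega : n ≤ 4 * a)
    have hb2 : (n : ℝ) ≤ 2 * b := by exact_mod_cast (by omega : n ≤ 2 * b)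
    have ha' : (1 : ℝ) ≤ a := by exact_mod_cast ha1
    have hb' : (1 : ℝ) ≤ b := by exact_mod_cast hb1
    have h1 := conc_ind μ a b (Real.sqrt m) u
    have h3 := conv_bdd_density (pw μ a) (Hm μ b) _ (hD a ha1) (Icc u (u + Real.sqrt m))
      measurableSet_Icc
    have h4 := h1.trans (add_le_add le_rfl h3)
    rw [hab, Real.volume_Icc, ← ENNReal.ofReal_mul (by positivity)] at h4
    have h5 := ENNReal.toReal_mono (by finiteness) h4
    rw [ENNReal.toReal_add (by finiteness) (by finiteness), ENNReal.toReal_ofReal (by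
      have := Real.sqrt_nonneg m; rw [show u + Real.sqrt m - u = Real.sqrt m by ring]; positivity)] at h5
    have h6 : (Hm μ b).real (Iic (Real.sqrt m)) ≤ 2 * C ^ (1 / 8 : ℝ) * ((m : ℝ) / n) ^ (1 / 8 : ℝ) := by
      have e1 := H b m hb1 hm
      have e2 : (m : ℝ) / b ≤ 2 * (m / n) := by
        rw [div_le_iff₀ (by positivity)]
        calc (m : ℝ) = m / n * n := by field_simp
          _ ≤ m / n * (2 * b) := by gcongr
          _ = _ := by ring
      have e3 : (Hm μ b).real (Iic (Real.sqrt m)) ^ 8 ≤ 2 * (C * (m / n)) :=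
        e1.trans ((mul_le_mul_of_nonneg_left e2 hC.le).trans (le_of_eq (by ring)))
      refine le_of_pow_le_pow_left₀ (n := 8) (by norm_num) (by positivity) (e3.trans ?_)
      rw [mul_pow, mul_pow, ← Real.rpow_natCast (C ^ _), ← Real.rpow_natCast ((_ : ℝ) ^ (1 / 8 : ℝ)),
        ← Real.rpow_mul hC.le, ← Real.rpow_mul (by positivity)]
      norm_num
      have : 0 ≤ C * ((m : ℝ) / n) := by positivity
      nlinarith
    have h7 : D / Real.sqrt a * (u + Real.sqrt m - u) ≤ 2 * D * ((m : ℝ) / n) ^ (1 / 8 : ℝ) := by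
      have e1 : Real.sqrt m / Real.sqrt a ≤ 2 * Real.sqrt (m / n) := by
        rw [← Real.sqrt_div (by positivity), show (2 : ℝ) = Real.sqrt 4 by
          rw [show (4 : ℝ) = 2 ^ 2 by norm_num]; simp, ← Real.sqrt_mul (by norm_num)]
        refine Real.sqrt_le_sqrt ?_
        rw [div_le_iff₀ (by positivity)]
        calc (m : ℝ) = m / n * n := by field_simp
          _ ≤ m / n * (4 * a) := by gcongr
          _ = _ := by ring
      have e2 : Real.sqrt ((m : ℝ) / n) ≤ ((m : ℝ) / n) ^ (1 / 8 : ℝ) := by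
        rw [Real.sqrt_eq_rpow]
        refine Real.rpow_le_rpow_of_exponent_ge (by positivity) ?_ (by norm_num)
        rw [div_le_one (by positivity)]; exact hmn'
      calc _ = D * (Real.sqrt m / Real.sqrt a) := by ring
        _ ≤ D * (2 * ((m : ℝ) / n) ^ (1 / 8 : ℝ)) := by gcongr; linarith
        _ = _ := by ring
    have h8 : 0 ≤ ((m : ℝ) / n) ^ (1 / 8 : ℝ) := by positivity
    have h9 : (Hm μ n).real (Icc u (u + Real.sqrt m)) ≤ (Hm μ b).real (Iic (Real.sqrt m)) +
      D / Real.sqrt a * (u + Real.sqrt m - u) := h5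
    nlinarith

lemma Hm_dens (n : ℕ) (D : ℝ≥0∞) (hD : ∀ s, MeasurableSet s → μ s ≤ D * volume s)
    (s : Set ℝ) (hs : MeasurableSet s) (h0 : s ⊆ Ioi 0) :
    Hm μ (n + 1) s ≤ D * volume s := by
  refine le_trans (le_of_eq ?_) (conv_bdd_density μ (Hm μ n) D hD s hs)
  rw [Hm, Measure.map_apply (by fun_prop) hs]
  congr 1
  ext y
  simp only [mem_preimage]
  rcases le_total y 0 with h | h
  · rw [max_eq_right h]
    exact ⟨fun h' => absurd (h0 h') (by simp), fun h' => absurd (h0 h') (by simpa using h)⟩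
  · rw [max_eq_left h]
end

/-- Standing moment assumptions. -/
structure Mom (μ : Measure ℝ) : Prop where
  i2 : Integrable (fun x : ℝ => x ^ 2) μ
  m1 : ∫ x, x ∂μ = 0
  m2 : ∫ x, x ^ 2 ∂μ = 1

lemma int_of_sq (μ : Measure ℝ) [IsFiniteMeasure μ] (h : Integrable (fun x : ℝ => x ^ 2) μ) :
    Integrable (fun x : ℝ => x) μ := by
  refine ((integrable_const (1 : ℝ)).add h).mono (by fun_prop) (ae_of_all _ fun x => ?_)
  simp only [Real.norm_eq_abs, Pi.add_apply]
  rw [abs_of_nonneg (by positivity : (0:ℝ) ≤ 1 + x ^ 2)]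
  nlinarith [sq_nonneg (|x| - 1), sq_abs x, abs_nonneg x]

section
variable (μ : Measure ℝ) [IsProbabilityMeasure μ]

lemma pw_mom (h : Mom μ) (k : ℕ) : Integrable (fun x : ℝ => x ^ 2) (pw μ k) ∧
    ∫ x, x ∂(pw μ k) = 0 ∧ ∫ x, x ^ 2 ∂(pw μ k) = k := by
  induction k with
  | zero =>
    refine ⟨?_, by simp [pw], by simp [pw]⟩
    exact integrable_dirac (by simp)
  | succ k ih =>
    obtain ⟨i, j1, j2⟩ := ih
    have a1 := int_of_sq μ h.i2
    have a2 := int_of_sq (pw μ k) i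
    have hadd : AEMeasurable (fun p : ℝ × ℝ => p.1 + p.2) (μ.prod (pw μ k)) := by fun_prop
    have e : (fun p : ℝ × ℝ => (p.1 + p.2) ^ 2) =
        fun p => (p.1 ^ 2 + 2 * (p.1 * p.2)) + p.2 ^ 2 := by ext p; ring
    have b1 : Integrable (fun p : ℝ × ℝ => p.1 ^ 2) (μ.prod (pw μ k)) := h.i2.comp_fst _
    have b2 : Integrable (fun p : ℝ × ℝ => p.2 ^ 2) (μ.prod (pw μ k)) := i.comp_snd _
    have b3 : Integrable (fun p : ℝ × ℝ => p.1 * p.2) (μ.prod (pw μ k)) := a1.mul_prod a2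
    have b4 : Integrable (fun p : ℝ × ℝ => p.1 ^ 2 + 2 * (p.1 * p.2)) (μ.prod (pw μ k)) :=
      b1.add (b3.const_mul 2)
    have c1 : Integrable (fun p : ℝ × ℝ => p.1) (μ.prod (pw μ k)) := a1.comp_fst _
    have c2 : Integrable (fun p : ℝ × ℝ => p.2) (μ.prod (pw μ k)) := a2.comp_snd _
    have hd : pw μ (k + 1) = (μ.prod (pw μ k)).map (fun p : ℝ × ℝ => p.1 + p.2) := rfl
    rw [hd]
    refine ⟨?_, ?_, ?_⟩
    · rw [integrable_map_measure (by fun_prop) hadd]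
      change Integrable (fun p : ℝ × ℝ => (p.1 + p.2) ^ 2) _
      rw [e]
      exact (b1.add (b3.const_mul 2)).add b2
    · rw [integral_map hadd (by fun_prop), integral_add c1 c2, integral_fun_fst (fun x => x),
        integral_fun_snd (fun x => x)]
      simp [h.m1, j1]
    · rw [integral_map hadd (by fun_prop), e, integral_add b4 b2,
        integral_add b1 (b3.const_mul 2), integral_const_mul, integral_prod_mul (fun x => x) (fun x => x),
        integral_fun_fst (fun x => x ^ 2), integral_fun_snd (fun x => x ^ 2), h.m1, h.m2, j2]
      simp; ring

lemma pw_cheb (h : Mom μ) (k : ℕ) (a : ℝ) (ha : 0 < a) :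
    (pw μ k).real {x | a ≤ |x|} ≤ k / a ^ 2 := by
  obtain ⟨i, -, j2⟩ := pw_mom μ h k
  have := mul_meas_ge_le_integral_of_nonneg (μ := pw μ k) (ae_of_all _ fun x => sq_nonneg x) i (a ^ 2)
  rw [j2] at this
  rw [le_div_iff₀ (by positivity), mul_comm]
  have e : {x : ℝ | a ≤ |x|} = {x : ℝ | a ^ 2 ≤ x ^ 2} := by
    refine Set.ext fun x => ?_
    change a ≤ |x| ↔ a ^ 2 ≤ x ^ 2
    rw [← sq_abs x]
    exact (pow_le_pow_iff_left₀ ha.le (abs_nonneg x) (by norm_num)).symm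
  rw [e]; exact this

lemma pw_abs (h : Mom μ) (k : ℕ) : ∫ x, |x| ∂(pw μ k) ≤ Real.sqrt k := by
  obtain ⟨i, -, j2⟩ := pw_mom μ h k
  rcases Nat.eq_zero_or_pos k with hk | hk
  · subst hk; simp [pw]
  have hs : 0 < Real.sqrt k := Real.sqrt_pos.2 (by exact_mod_cast hk)
  have i1 := (int_of_sq _ i).abs
  have : ∫ x, (2 * Real.sqrt k) * |x| ∂(pw μ k) ≤ ∫ x, (x ^ 2 + k) ∂(pw μ k) := by
    refine integral_mono (i1.const_mul _) (i.add (integrable_const _)) fun x => ?_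
    have := Real.sq_sqrt (Nat.cast_nonneg k : (0:ℝ) ≤ k)
    simp only
    nlinarith [sq_nonneg (|x| - Real.sqrt k), sq_abs x]
  rw [integral_const_mul, integral_add i (integrable_const _), j2] at this
  simp only [integral_const, probReal_univ, smul_eq_mul, one_mul] at this
  have h2 := Real.sq_sqrt (Nat.cast_nonneg k : (0:ℝ) ≤ k)
  have : 2 * Real.sqrt k * (∫ x, |x| ∂(pw μ k)) ≤ 2 * Real.sqrt k * Real.sqrt k := by nlinarith
  exact le_of_mul_le_mul_left this (by positivity)

lemma charFun_pw (k : ℕ) (t : ℝ) : charFun (pw μ k) t = (charFun μ t) ^ k := by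
  induction k with
  | zero => simp [pw, charFun_apply]
  | succ k ih => rw [pw, charFun_conv, ih, pow_succ']

/-- Gaussian tail. -/
noncomputable def Gt (x : ℝ) : ℝ := (gaussianReal 0 1).real (Ioi x)

lemma clt_weak (h : Mom μ) (x : ℝ) (s : Set ℝ) (hs : s = Ioi x ∨ s = Iic x) :
    Tendsto (fun n : ℕ => ((pw μ n).map (fun y => (Real.sqrt n)⁻¹ * y)).real s) atTop
      (nhds ((gaussianReal 0 1).real s)) := by
  have hp : ∀ n : ℕ, IsProbabilityMeasure ((pw μ n).map (fun y => (Real.sqrt n)⁻¹ * y)) := fun n =>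
    Measure.isProbabilityMeasure_map (by fun_prop)
  let P : ℕ → ProbabilityMeasure ℝ := fun n => ⟨_, hp n⟩
  let Q : ProbabilityMeasure ℝ := ⟨gaussianReal 0 1, inferInstance⟩
  have hPQ : Tendsto P atTop (nhds Q) := by
    refine ProbabilityMeasure.tendsto_iff_tendsto_charFun.2 fun t => ?_
    have := tendsto_charFun_inv_sqrt_mul_pow (P := μ) (X := id) aemeasurable_id
      (by simpa using h.m1) (by simpa using h.m2) t
    simp only [Measure.map_id] at this
    have e1 : ∀ n : ℕ, charFun (P n : Measure ℝ) t = charFun μ ((Real.sqrt n)⁻¹ * t) ^ n := by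
      intro n
      change charFun ((pw μ n).map (fun y => (Real.sqrt n)⁻¹ * y)) t = _
      rw [charFun_map_mul, charFun_pw]
    simp only [e1]
    have e2 : charFun (Q : Measure ℝ) t = Complex.exp (- t ^ 2 / 2) := by
      change charFun (gaussianReal 0 1) t = _
      rw [charFun_gaussianReal]; simp [neg_div]
    rw [e2]; exact_mod_cast this
  have hfr : (Q : Measure ℝ) (frontier s) = 0 := by
    have : frontier s = {x} := by rcases hs with rfl | rfl <;> simp
    rw [this]
    exact gaussianReal_absolutelyContinuous 0 (one_ne_zero) (by simp)
  have := ProbabilityMeasure.tendsto_measure_of_null_frontier_of_tendsto' hPQ hfr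
  exact (ENNReal.tendsto_toReal (by finiteness)).comp this

lemma clt_Ioi (h : Mom μ) (x : ℝ) :
    Tendsto (fun n : ℕ => (pw μ n).real (Ioi (x * Real.sqrt n))) atTop (nhds (Gt x)) := by
  refine (clt_weak μ h x (Ioi x) (Or.inl rfl)).congr' ?_
  filter_upwards [eventually_ge_atTop 1] with n hn
  have hs : 0 < Real.sqrt n := Real.sqrt_pos.2 (by exact_mod_cast hn)
  rw [map_measureReal_apply (by fun_prop) measurableSet_Ioi]
  congr 1; ext y
  simp only [mem_preimage, mem_Ioi]
  rw [inv_mul_eq_div, lt_div_iff₀ hs]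

lemma clt_Iic (h : Mom μ) (x : ℝ) :
    Tendsto (fun n : ℕ => (pw μ n).real (Iic (x * Real.sqrt n))) atTop
      (nhds ((gaussianReal 0 1).real (Iic x))) := by
  refine (clt_weak μ h x (Iic x) (Or.inr rfl)).congr' ?_
  filter_upwards [eventually_ge_atTop 1] with n hn
  have hs : 0 < Real.sqrt n := Real.sqrt_pos.2 (by exact_mod_cast hn)
  rw [map_measureReal_apply (by fun_prop) measurableSet_Iic]
  congr 1; ext y
  simp only [mem_preimage, mem_Iic]
  rw [inv_mul_eq_div, div_le_iff₀ hs]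

lemma gauss_zero : (gaussianReal 0 1).real (Iic 0) = 1 / 2 ∧ Gt 0 = 1 / 2 := by
  have h1 : (gaussianReal 0 1).real (Iic 0) + Gt 0 = 1 := by
    have := probReal_compl_eq_one_sub (μ := gaussianReal 0 1) (s := Iic 0) measurableSet_Iic
    rw [compl_Iic] at this
    rw [Gt, this]; ring
  have hz : (gaussianReal 0 1) {0} = 0 :=
    gaussianReal_absolutelyContinuous 0 (one_ne_zero) (by simp)
  have h2 : Gt 0 = (gaussianReal 0 1).real (Iic 0) := by
    have e : (gaussianReal 0 1) = (gaussianReal 0 1).map (fun x => -x) := by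
      rw [gaussianReal_map_neg]; simp
    have e2 : (gaussianReal 0 1).real (Iic 0) = (gaussianReal 0 1).real (Iio 0) := by
      refine measureReal_congr ?_
      have : ∀ᵐ x ∂(gaussianReal 0 1), x ≠ 0 := by rw [ae_iff]; simpa using hz
      filter_upwards [this] with x hx
      simp only [eq_iff_iff]
      exact ⟨fun h => lt_of_le_of_ne h hx, fun h => le_of_lt h⟩
    rw [e2, Gt]
    conv_lhs => rw [e]
    rw [map_measureReal_apply (by fun_prop) measurableSet_Ioi]
    congr 1; ext y; simp
  constructor <;> linarith

lemma hclt_of_mom (h : Mom μ) :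
    ∃ c > 0, ∃ m0 : ℕ, 1 ≤ m0 ∧ ∀ m ≥ m0, (pw μ m).real (Iic 0) ≤ 3 / 4 ∧
      c ≤ (pw μ m).real (Iic (-Real.sqrt m)) := by
  have hpos : 0 < (gaussianReal 0 1).real (Iic (-1)) := by
    refine ENNReal.toReal_pos ?_ (by finiteness)
    intro h0
    have := gaussianReal_absolutelyContinuous' 0 (one_ne_zero (α := NNReal)) h0
    simp at this
  have h1 := clt_Iic μ h 0
  have h2 := clt_Iic μ h (-1)
  rw [gauss_zero.1] at h1
  have e1 := h1.eventually (eventually_le_nhds (show (1:ℝ)/2 < 3/4 by norm_num))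
  have e2 := h2.eventually (eventually_ge_nhds (half_lt_self hpos))
  obtain ⟨m0, hm0⟩ := eventually_atTop.1 (e1.and e2)
  refine ⟨_, half_pos hpos, max m0 1, le_max_right _ _, fun m hm => ?_⟩
  have := hm0 m ((le_max_left _ _).trans hm)
  simpa using this

lemma Hm_Ioi_succ (n : ℕ) (u : ℝ) (hu : 0 ≤ u) :
    Hm μ (n + 1) (Ioi u) = ∫⁻ x, Hm μ n (Ioi (u - x)) ∂μ := by
  have hm : Measurable ((Ioi u).indicator (1 : ℝ → ℝ≥0∞)) := (measurable_one.indicator measurableSet_Ioi)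
  rw [← lintegral_indicator_one measurableSet_Ioi, lint_Hm_succ _ _ _ hm]
  refine lintegral_congr fun x => ?_
  rw [← lintegral_indicator_one measurableSet_Ioi]
  refine lintegral_congr fun y => ?_
  simp only [indicator_apply, mem_Ioi]
  congr 1
  simp only [eq_iff_iff, lt_max_iff]
  constructor
  · rintro (h | h) <;> linarith
  · intro h; left; linarith

lemma pw_Ioi_succ (n : ℕ) (u : ℝ) :
    pw μ (n + 1) (Ioi u) = ∫⁻ x, pw μ n (Ioi (u - x)) ∂μ := by
  have hm : Measurable ((Ioi u).indicator (1 : ℝ → ℝ≥0∞)) := (measurable_one.indicator measurableSet_Ioi)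
  rw [← lintegral_indicator_one measurableSet_Ioi, lint_pw_succ _ _ _ hm]
  refine lintegral_congr fun x => ?_
  rw [← lintegral_indicator_one measurableSet_Ioi]
  refine lintegral_congr fun y => ?_
  simp only [indicator_apply, mem_Ioi]
  congr 1
  simp only [eq_iff_iff]
  constructor <;> intro h <;> linarith

lemma Hm_Ioi_neg (n : ℕ) (u : ℝ) (hu : u < 0) : Hm μ n (Ioi u) = 1 := by
  refine (prob_compl_eq_zero_iff measurableSet_Ioi).1 ?_
  have : ∀ᵐ y ∂(Hm μ n), y ∈ Ioi u := by
    filter_upwards [Hm_ae_nonneg μ n] with y hy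
    exact lt_of_lt_of_le hu hy
  exact mem_ae_iff.1 this

lemma refl_up (h : ℝ) (hh : 0 ≤ h) (c : ℝ≥0∞) (n : ℕ) (hc : ∀ j ≤ n, c ≤ pw μ j (Ioi (-h))) :
    ∀ u, c * Hm μ n (Ioi u) ≤ pw μ n (Ioi (u - h)) := by
  have hneg : ∀ m ≤ n, ∀ u < 0, c * Hm μ m (Ioi u) ≤ pw μ m (Ioi (u - h)) := by
    intro m hm u hu
    calc _ ≤ c := mul_le_of_le_one_right' prob_le_one
      _ ≤ _ := hc m hm
      _ ≤ _ := measure_mono (Ioi_subset_Ioi (by linarith))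
  induction n with
  | zero =>
    intro u
    rcases lt_or_ge u 0 with hu | hu
    · exact hneg 0 le_rfl u hu
    · simp [Hm, hu]
  | succ n ih =>
    intro u
    rcases lt_or_ge u 0 with hu | hu
    · exact hneg _ le_rfl u hu
    · rw [Hm_Ioi_succ μ n u hu, pw_Ioi_succ]
      have hmeas : Measurable (fun x => Hm μ n (Ioi (u - x))) := by
        refine Monotone.measurable fun a b hab => measure_mono (Ioi_subset_Ioi (by linarith))
      rw [← lintegral_const_mul _ hmeas]
      refine lintegral_mono fun x => ?_
      have := ih (fun j hj => hc j (by omega)) (fun m hm => hneg m (by omega)) (u - x)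
      rwa [sub_right_comm] at this

lemma refl_lo (h : ℝ) (hh : 0 ≤ h) (d : ℝ≥0∞) (n : ℕ) (hd : ∀ j ≤ n, pw μ j (Ioi (h / 2)) ≤ d) :
    ∀ u, 0 ≤ u → pw μ n (Ioi (u + h)) ≤ d * Hm μ n (Ioi u) + n * μ (Ioi (h / 2)) := by
  induction n with
  | zero =>
    intro u hu
    have : pw μ 0 (Ioi (u + h)) = 0 := by simp [pw]; linarith
    rw [this]; exact bot_le
  | succ n ih =>
    intro u hu
    rw [Hm_Ioi_succ μ n u hu, pw_Ioi_succ]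
    have hmeas : Measurable (fun x => Hm μ n (Ioi (u - x))) := by
      refine Monotone.measurable fun a b hab => measure_mono (Ioi_subset_Ioi (by linarith))
    rw [← lintegral_const_mul _ hmeas, ← lintegral_indicator_one measurableSet_Ioi]
    have : (↑(n + 1) : ℝ≥0∞) * ∫⁻ a, (Ioi (h / 2)).indicator 1 a ∂μ =
        ∫⁻ x, n * μ (Ioi (h / 2)) ∂μ + ∫⁻ a, (Ioi (h / 2)).indicator 1 a ∂μ := by
      rw [lintegral_indicator_one measurableSet_Ioi]; simp; ring
    rw [this, ← lintegral_add_left measurable_const, ← lintegral_add_left (by fun_prop)]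
    refine lintegral_mono fun x => ?_
    beta_reduce
    have hcomm : u + h - x = (u - x) + h := by ring
    rw [hcomm]
    rcases le_or_gt x u with hx | hx
    · refine (ih (fun j hj => hd j (by omega)) (u - x) (by linarith)).trans ?_
      rw [← add_assoc]; exact le_self_add
    · rcases le_or_gt x (u + h / 2) with hx2 | hx2
      · rw [Hm_Ioi_neg μ n _ (by linarith), mul_one]
        refine le_trans ?_ le_self_add
        exact (measure_mono (Ioi_subset_Ioi (by linarith))).trans (hd n (by omega))
      · have : x ∈ Ioi (h / 2) := by simp; linarith
        rw [indicator_of_mem this, ← add_assoc]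
        exact prob_le_one.trans le_add_self
end

lemma gpdf_le (x : ℝ) : gaussianPDFReal 0 1 x ≤ 1 := by
  rw [gaussianPDFReal_def]
  have h1 : 1 ≤ Real.sqrt (2 * Real.pi * ((1 : NNReal) : ℝ)) := by
    rw [Real.one_le_sqrt]; simp; nlinarith [Real.pi_gt_three]
  have h2 : (Real.sqrt (2 * Real.pi * ((1 : NNReal) : ℝ)))⁻¹ ≤ 1 := inv_le_one_of_one_le₀ h1
  have h3 : Real.exp (-(x - 0) ^ 2 / (2 * ((1 : NNReal) : ℝ))) ≤ 1 := by
    rw [Real.exp_le_one_iff]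
    exact div_nonpos_of_nonpos_of_nonneg (by linarith [sq_nonneg (x - 0)]) (by positivity)
  exact mul_le_one₀ h2 (Real.exp_pos _).le h3

lemma Gt_sub {a b : ℝ} (hab : a ≤ b) : Gt a - Gt b = ∫ x in a..b, gaussianPDFReal 0 1 x := by
  have h1 : Gt a - Gt b = (gaussianReal 0 1).real (Ioc a b) := by
    unfold Gt
    have : Ioi a \ Ioi b = Ioc a b := by ext x; simp
    rw [← this, measureReal_sdiff (Ioi_subset_Ioi hab) measurableSet_Ioi]
  rw [h1, intervalIntegral.integral_of_le hab, measureReal_def,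
    gaussianReal_apply_eq_integral 0 one_ne_zero, ENNReal.toReal_ofReal]
  exact integral_nonneg fun x => gaussianPDFReal_nonneg _ _ _

lemma Gt_lip {a b : ℝ} (hab : a ≤ b) : Gt a - Gt b ≤ b - a := by
  rw [Gt_sub hab]
  have : ∫ x in a..b, gaussianPDFReal 0 1 x ≤ ∫ x in a..b, (1 : ℝ) :=
    intervalIntegral.integral_mono_on hab ((integrable_gaussianPDFReal 0 1).intervalIntegrable)
      (by simp) (fun x _ => gpdf_le x)
  simpa using this

lemma Gt_anti {a b : ℝ} (hab : a ≤ b) : Gt b ≤ Gt a :=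
  measureReal_mono (Ioi_subset_Ioi hab)

section
variable (μ : Measure ℝ) [IsProbabilityMeasure μ]

lemma Hm_tail (h : Mom μ) (n : ℕ) (hn : 1 ≤ n) (x : ℝ) (hx : 0 < x) :
    (Hm μ n).real (Ioi (x * Real.sqrt n)) ≤ 16 / x ^ 2 := by
  have hs : 0 < Real.sqrt n := Real.sqrt_pos.2 (by exact_mod_cast hn)
  have hs2 := Real.sq_sqrt (Nat.cast_nonneg n : (0:ℝ) ≤ n)
  have hn' : (1 : ℝ) ≤ n := by exact_mod_cast hn
  rcases le_or_gt x 4 with h4 | h4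
  · refine (measureReal_le_one).trans ?_
    rw [le_div_iff₀ (by positivity)]; nlinarith
  · have hc : ∀ j ≤ n, ENNReal.ofReal (3 / 4) ≤ pw μ j (Ioi (-(2 * Real.sqrt n))) := by
      intro j hj
      have h1 := pw_cheb μ h j (2 * Real.sqrt n) (by positivity)
      have h2 : (j : ℝ) / (2 * Real.sqrt n) ^ 2 ≤ 1 / 4 := by
        rw [mul_pow, hs2, div_le_iff₀ (by positivity)]
        have : (j : ℝ) ≤ n := by exact_mod_cast hj
        linarith
      have h3 : (pw μ j).real (Ioi (-(2 * Real.sqrt n)))ᶜ ≤ 1 / 4 := by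
        refine le_trans (measureReal_mono ?_) (h1.trans h2)
        intro y hy
        simp only [compl_Ioi, mem_Iic] at hy
        change 2 * Real.sqrt n ≤ |y|
        rw [abs_of_nonpos (by linarith)]; linarith
      rw [probReal_compl_eq_one_sub measurableSet_Ioi] at h3
      rw [ENNReal.ofReal_le_iff_le_toReal (by finiteness)]
      change _ ≤ (pw μ j).real _
      linarith
    have h1 := refl_up μ (2 * Real.sqrt n) (by positivity) _ n hc (x * Real.sqrt n)
    have h2 := ENNReal.toReal_mono (by finiteness) h1
    rw [ENNReal.toReal_mul, ENNReal.toReal_ofReal (by norm_num)] at h2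
    change 3 / 4 * (Hm μ n).real _ ≤ (pw μ n).real _ at h2
    have h3 := pw_cheb μ h n ((x - 2) * Real.sqrt n) (mul_pos (by linarith) hs)
    have h4' : (pw μ n).real (Ioi (x * Real.sqrt n - 2 * Real.sqrt n)) ≤
        (pw μ n).real {y | (x - 2) * Real.sqrt n ≤ |y|} := by
      refine measureReal_mono fun y hy => ?_
      change (x - 2) * Real.sqrt n ≤ |y|
      simp only [mem_Ioi] at hy
      exact le_trans (by linarith) (le_abs_self y)
    have h5 : (n : ℝ) / ((x - 2) * Real.sqrt n) ^ 2 ≤ 4 / x ^ 2 := by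
      rw [mul_pow, hs2, div_le_div_iff₀ (by have : 0 < x - 2 := by linarith
                                            positivity) (by positivity)]
      have : x ^ 2 ≤ 4 * (x - 2) ^ 2 := by nlinarith
      nlinarith
    have h6 : 16 / x ^ 2 = 4 * (4 / x ^ 2) := by ring
    have h7 : 0 < 4 / x ^ 2 := by positivity
    rw [h6]; linarith

lemma tail_q (h : Mom μ) (η : ℝ) (hη : 0 < η) :
    Tendsto (fun n : ℕ => (n : ℝ) * μ.real (Ioi (η * Real.sqrt n))) atTop (nhds 0) := by
  -- n μ(X > η √n) ≤ η⁻² E[X²; X > η √n] → 0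
  have hd : Tendsto (fun n : ℕ => ∫ x, (Ioi (η * Real.sqrt n)).indicator (fun x => x ^ 2) x ∂μ) atTop
      (nhds (∫ x, (0 : ℝ) ∂μ)) := by
    refine tendsto_integral_of_dominated_convergence (fun x => x ^ 2) ?_ h.i2 ?_ ?_
    · intro n; exact ((measurable_id.pow_const 2).indicator measurableSet_Ioi).aestronglyMeasurable
    · intro n; refine ae_of_all _ fun x => ?_
      by_cases hx : x ∈ Ioi (η * Real.sqrt n)
      · simp [indicator_of_mem hx]
      · simp [indicator_of_notMem hx]; positivity
    · refine ae_of_all _ fun x => ?_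
      have : Tendsto (fun n : ℕ => η * Real.sqrt n) atTop atTop :=
        (Real.tendsto_sqrt_atTop.comp tendsto_natCast_atTop_atTop).const_mul_atTop hη
      refine tendsto_const_nhds.congr' ?_
      filter_upwards [this.eventually_ge_atTop x] with n hn
      rw [indicator_of_notMem]; simpa using hn
  simp only [integral_zero] at hd
  have hd2 := hd.const_mul (1 / η ^ 2)
  rw [mul_zero] at hd2
  refine squeeze_zero (fun n => by positivity) (fun n => ?_) hd2
  have hs2 := Real.sq_sqrt (Nat.cast_nonneg n : (0:ℝ) ≤ n)
  have hs0 := Real.sqrt_nonneg (n : ℝ)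
  rw [← integral_indicator_one measurableSet_Ioi, ← integral_const_mul, ← integral_const_mul]
  refine integral_mono ?_ ?_ fun x => ?_
  · exact ((integrable_const (1:ℝ)).indicator measurableSet_Ioi).const_mul _
  · exact (h.i2.indicator measurableSet_Ioi).const_mul _
  · by_cases hx : x ∈ Ioi (η * Real.sqrt n)
    · simp only [indicator_of_mem hx, Pi.one_apply, mul_one]
      rw [one_div, inv_mul_eq_div, le_div_iff₀ (by positivity)]
      have hx' : η * Real.sqrt n < x := hx
      calc (n : ℝ) * η ^ 2 = (η * Real.sqrt n) ^ 2 := by rw [mul_pow, hs2]; ring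
        _ ≤ x ^ 2 := by gcongr
    · simp [indicator_of_notMem hx]

lemma pw_half (h : Mom μ) (η : ℝ) (hη : 0 < η) (ε : ℝ) (hε : 0 < ε) (hε2 : ε ≤ 1 / 2):
    ∀ᶠ n : ℕ in atTop, ∀ j ≤ n, ENNReal.ofReal (1 / 2 - ε) ≤ pw μ j (Ioi (-(η * Real.sqrt n))) ∧
      pw μ j (Ioi (η * Real.sqrt n)) ≤ ENNReal.ofReal (1 / 2 + ε) := by
  have h1 := clt_Ioi μ h 0
  rw [gauss_zero.2] at h1
  obtain ⟨K, hK⟩ := eventually_atTop.1 ((h1.eventually (eventually_le_nhds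
    (show (1:ℝ)/2 < 1/2 + ε by linarith))).and
    (h1.eventually (eventually_ge_nhds (show (1:ℝ)/2 - ε < 1/2 by linarith))))
  have ht : Tendsto (fun n : ℕ => (n : ℝ) * (η ^ 2 / 2)) atTop atTop :=
    tendsto_natCast_atTop_atTop.atTop_mul_const (by positivity)
  filter_upwards [ht.eventually_ge_atTop K, eventually_ge_atTop 1] with n hn hn1 j hj
  have hs : 0 < Real.sqrt n := Real.sqrt_pos.2 (by exact_mod_cast hn1)
  have hs2 := Real.sq_sqrt (Nat.cast_nonneg n : (0:ℝ) ≤ n)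
  have hp : 0 < η * Real.sqrt n := by positivity
  rw [ENNReal.ofReal_le_iff_le_toReal (by finiteness), ENNReal.le_ofReal_iff_toReal_le (by finiteness)
    (by linarith)]
  change _ ≤ (pw μ j).real _ ∧ (pw μ j).real _ ≤ _
  rcases Nat.lt_or_ge j K with hjK | hjK
  · have c1 := pw_cheb μ h j (η * Real.sqrt n) hp
    have c2 : (j : ℝ) / (η * Real.sqrt n) ^ 2 ≤ 1 / 2 := by
      rw [mul_pow, hs2, div_le_iff₀ (by positivity)]
      have : (j : ℝ) ≤ K := by exact_mod_cast hjK.le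
      linarith
    have c3 := c1.trans c2
    constructor
    · have h3 : (pw μ j).real (Ioi (-(η * Real.sqrt n)))ᶜ ≤ 1 / 2 := by
        refine le_trans (measureReal_mono ?_) c3
        intro y hy
        simp only [compl_Ioi, mem_Iic] at hy
        change η * Real.sqrt n ≤ |y|
        rw [abs_of_nonpos (by linarith)]; linarith
      rw [probReal_compl_eq_one_sub measurableSet_Ioi] at h3
      linarith
    · refine le_trans (measureReal_mono ?_) (c3.trans (by linarith))
      intro y hy
      exact (le_of_lt hy).trans (le_abs_self y)
  · have := hK j hjK
    simp only [zero_mul] at this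
    constructor
    · exact this.2.trans (measureReal_mono (Ioi_subset_Ioi (by linarith)))
    · exact le_trans (measureReal_mono (Ioi_subset_Ioi (by linarith))) this.1

lemma Hm_clt (h : Mom μ) (x : ℝ) (hx : 0 < x) :
    Tendsto (fun n : ℕ => (Hm μ n).real (Ioi (x * Real.sqrt n))) atTop (nhds (2 * Gt x)) := by
  rw [Metric.tendsto_atTop']
  intro e he
  -- choose small parameter
  set η := min (e / 16) (1 / 4) with hη
  have hη0 : 0 < η := by positivity
  have hη1 : η ≤ e / 16 := min_le_left _ _
  have hη2 : η ≤ 1 / 4 := min_le_right _ _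
  have A1 := pw_half μ h η hη0 η hη0 (by linarith)
  have A2 := pw_half μ h (η / 2) (by positivity) η hη0 (by linarith)
  have A3 := (tail_q μ h (η / 2) (by positivity)).eventually (eventually_le_nhds hη0)
  have A4 := (clt_Ioi μ h (x - η)).eventually (eventually_le_nhds (lt_add_of_pos_right _ hη0))
  have A5 := (clt_Ioi μ h (x + η)).eventually (eventually_ge_nhds (sub_lt_self _ hη0))
  have A := ((((A1.and A2).and A3).and A4).and A5)
  obtain ⟨N, hN⟩ := eventually_atTop.1 A
  refine ⟨N, fun n hn => ?_⟩
  obtain ⟨⟨⟨⟨a1, a2⟩, a3⟩, a4⟩, a5⟩ := hN n hn.le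
  have hs := Real.sqrt_nonneg (n : ℝ)
  set F := (Hm μ n).real (Ioi (x * Real.sqrt n)) with hF
  have hF1 : F ≤ 1 := measureReal_le_one
  have hF0 : 0 ≤ F := measureReal_nonneg
  have u1 := refl_up μ (η * Real.sqrt n) (by positivity) _ n (fun j hj => (a1 j hj).1) (x * Real.sqrt n)
  have u2 := ENNReal.toReal_mono (by finiteness) u1
  rw [ENNReal.toReal_mul, ENNReal.toReal_ofReal (by linarith),
    show x * Real.sqrt n - η * Real.sqrt n = (x - η) * Real.sqrt n by ring] at u2
  change (1 / 2 - η) * F ≤ (pw μ n).real _ at u2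
  have l1 := refl_lo μ (η * Real.sqrt n) (by positivity) _ n (fun j hj => by
    rw [show η * Real.sqrt n / 2 = η / 2 * Real.sqrt n by ring]; exact (a2 j hj).2)
    (x * Real.sqrt n) (by positivity)
  have l2 := ENNReal.toReal_mono (by finiteness) l1
  rw [ENNReal.toReal_add (by finiteness) (by finiteness), ENNReal.toReal_mul, ENNReal.toReal_mul,
    ENNReal.toReal_ofReal (by linarith), ENNReal.toReal_natCast,
    show x * Real.sqrt n + η * Real.sqrt n = (x + η) * Real.sqrt n by ring,
    show η * Real.sqrt n / 2 = η / 2 * Real.sqrt n by ring] at l2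
  change (pw μ n).real _ ≤ (1 / 2 + η) * F + n * μ.real _ at l2
  have g1 := Gt_lip (show x - η ≤ x by linarith)
  have g2 := Gt_lip (show x ≤ x + η by linarith)
  rw [Real.dist_eq, abs_lt]
  constructor <;> nlinarith
end

lemma charFun_swap (σ τ : Measure ℝ) [IsProbabilityMeasure σ] [IsProbabilityMeasure τ] :
    ∫ t, charFun σ t ∂τ = ∫ x, charFun τ x ∂σ := by
  simp only [charFun_apply_real]
  rw [integral_integral_swap]
  · simp only [mul_comm]
  · refine Integrable.of_bound (C := 1) (by fun_prop) (ae_of_all _ fun p => ?_)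
    simp only [Function.uncurry]
    rw [show (p.1 : ℂ) * p.2 * Complex.I = ((p.1 * p.2 : ℝ) : ℂ) * Complex.I by push_cast; ring,
      Complex.norm_exp_ofReal_mul_I]

section
variable (μ : Measure ℝ) [IsProbabilityMeasure μ]

lemma charFun_symm (t : ℝ) :
    charFun (μ.conv (μ.map ((-1:ℝ) * ·))) t = ((‖charFun μ t‖ ^ 2 : ℝ) : ℂ) := by
  have : IsProbabilityMeasure (μ.map ((-1:ℝ) * ·)) :=
    Measure.isProbabilityMeasure_map (by fun_prop)
  rw [charFun_conv, charFun_map_mul, neg_one_mul, charFun_neg, Complex.mul_conj,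
    Complex.normSq_eq_norm_sq]

lemma phi_sq_gauss (M : ℝ) (hM0 : 0 ≤ M)
    (hM : ∀ s, MeasurableSet s → μ s ≤ ENNReal.ofReal M * volume s) (w : NNReal) (hw : 0 < w) :
    ∫ t, ‖charFun μ t‖ ^ 2 ∂(gaussianReal 0 w) ≤ M * Real.sqrt (2 * Real.pi / w) := by
  have : IsProbabilityMeasure (μ.map ((-1:ℝ) * ·)) :=
    Measure.isProbabilityMeasure_map (by fun_prop)
  set σ := μ.conv (μ.map ((-1:ℝ) * ·)) with hσ
  have hw' : (0:ℝ) < w := hw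
  have h1 := charFun_swap σ (gaussianReal 0 w)
  simp only [hσ, charFun_symm] at h1
  rw [integral_complex_ofReal] at h1
  rw [← hσ] at h1
  have h2 : ∀ x : ℝ, charFun (gaussianReal 0 w) x = ((Real.exp (-(w/2:ℝ) * x ^ 2) : ℝ) : ℂ) := by
    intro x
    rw [charFun_gaussianReal]
    push_cast
    congr 1
    ring
  simp only [h2] at h1
  rw [integral_complex_ofReal] at h1
  rw [Complex.ofReal_inj.1 h1]
  have h3 : ∀ s, MeasurableSet s → σ s ≤ ENNReal.ofReal M * volume s :=
    fun s hs => conv_bdd_density μ _ _ hM s hs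
  have h4 : σ ≤ ENNReal.ofReal M • volume := Measure.le_iff.2 fun s hs => by
    simpa using h3 s hs
  have hi : Integrable (fun x : ℝ => Real.exp (-(w/2:ℝ) * x ^ 2)) :=
    integrable_exp_neg_mul_sq (by positivity)
  calc ∫ x, Real.exp (-(w/2:ℝ) * x ^ 2) ∂σ
      ≤ ∫ x, Real.exp (-(w/2:ℝ) * x ^ 2) ∂(ENNReal.ofReal M • volume) :=
        integral_mono_measure h4 (ae_of_all _ fun x => by positivity)
          (hi.smul_measure (by finiteness))
    _ = M * Real.sqrt (2 * Real.pi / w) := by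
        rw [integral_smul_measure, integral_gaussian, ENNReal.toReal_ofReal hM0, smul_eq_mul]
        congr 2
        field_simp

lemma phi_sq_int (M : ℝ) (hM0 : 0 ≤ M)
    (hM : ∀ s, MeasurableSet s → μ s ≤ ENNReal.ofReal M * volume s) :
    Integrable (fun t => ‖charFun μ t‖ ^ 2) := by
  have hmeas : Measurable fun t => ‖charFun μ t‖ ^ 2 := by
    have := measurable_charFun (μ := μ)
    fun_prop
  refine ⟨hmeas.aestronglyMeasurable, ?_⟩
  rw [hasFiniteIntegral_iff_ofReal (ae_of_all _ fun x => by positivity)]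
  have key : ∀ n : ℕ, ∫⁻ t, ENNReal.ofReal (Real.exp (-t^2/(2*(n+1))) * ‖charFun μ t‖ ^ 2) ≤
      ENNReal.ofReal (2 * Real.pi * M) := by
    intro n
    set w : NNReal := n + 1 with hw
    have hwc : (w : ℝ) = n + 1 := by simp [hw]
    have hw0 : 0 < w := by rw [hw]; positivity
    have hwr : (0:ℝ) < w := hw0
    have h1 := phi_sq_gauss μ M hM0 hM w hw0
    have hIntg : Integrable (fun t => ‖charFun μ t‖ ^ 2) (gaussianReal 0 w) := by
      refine Integrable.of_bound (C := 1) hmeas.aestronglyMeasurable (ae_of_all _ fun t => ?_)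
      rw [Real.norm_of_nonneg (by positivity)]
      exact pow_le_one₀ (norm_nonneg _) (norm_charFun_le_one _)
    have h2 := ofReal_integral_eq_lintegral_ofReal hIntg (ae_of_all _ fun x => by positivity)
    rw [gaussianReal_of_var_ne_zero _ hw0.ne', lintegral_withDensity_eq_lintegral_mul _
      (measurable_gaussianPDF _ _) (by fun_prop)] at h2
    rw [← gaussianReal_of_var_ne_zero _ hw0.ne'] at h2
    have e : ∀ t, ENNReal.ofReal (Real.exp (-t^2/(2*(n+1))) * ‖charFun μ t‖ ^ 2) =
      ENNReal.ofReal (Real.sqrt (2 * Real.pi * w)) * (gaussianPDF 0 w * fun t => ENNReal.ofReal (‖charFun μ t‖ ^ 2)) t := by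
      intro t
      simp only [Pi.mul_apply, gaussianPDF, gaussianPDFReal]
      rw [← ENNReal.ofReal_mul (by positivity), ← ENNReal.ofReal_mul (by positivity), hwc]
      congr 1
      have : Real.sqrt (2 * Real.pi * (n+1)) ≠ 0 := by positivity
      field_simp
      simp [mul_comm]
    simp only [e]
    rw [lintegral_const_mul _ (by have := measurable_gaussianPDF 0 w; fun_prop), ← h2,
      ← ENNReal.ofReal_mul (by positivity)]
    apply ENNReal.ofReal_le_ofReal
    calc _ ≤ Real.sqrt (2 * Real.pi * w) * (M * Real.sqrt (2 * Real.pi / w)) := by gcongr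
      _ = 2 * Real.pi * M := by
        rw [Real.sqrt_mul (by positivity), Real.sqrt_div (by positivity)]
        have h3 : Real.sqrt w ≠ 0 := by positivity
        have h4 := Real.mul_self_sqrt (show 0 ≤ 2 * Real.pi by positivity)
        field_simp
        rw [Real.sq_sqrt (by positivity)]
  have hlim : ∀ t, Tendsto (fun n : ℕ => ENNReal.ofReal (Real.exp (-t^2/(2*(n+1))) * ‖charFun μ t‖ ^ 2)) atTop
      (nhds (ENNReal.ofReal (‖charFun μ t‖ ^ 2))) := by
    intro t
    apply ENNReal.tendsto_ofReal
    have : Tendsto (fun n : ℕ => -t^2/(2*((n:ℝ)+1))) atTop (nhds 0) := by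
      have := (tendsto_one_div_add_atTop_nhds_zero_nat (𝕜 := ℝ)).const_mul (-t^2/2)
      rw [mul_zero] at this
      refine this.congr fun n => ?_
      field_simp
    have := ((Real.continuous_exp.tendsto 0).comp this).mul_const (‖charFun μ t‖ ^ 2)
    simpa using this
  have h5 : ∫⁻ t, ENNReal.ofReal (‖charFun μ t‖ ^ 2) ≤ ENNReal.ofReal (2 * Real.pi * M) := by
    calc _ = ∫⁻ t, liminf (fun n : ℕ => ENNReal.ofReal (Real.exp (-t^2/(2*(n+1))) * ‖charFun μ t‖ ^ 2)) atTop := by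
          refine lintegral_congr fun t => (hlim t).liminf_eq.symm
      _ ≤ _ := lintegral_liminf_le fun n => by fun_prop
      _ ≤ _ := liminf_le_of_le (by isBoundedDefault) (by
          intro b hb
          obtain ⟨n, hn⟩ := hb.exists
          exact hn.trans (key n))
  exact h5.trans_lt ENNReal.ofReal_lt_top

end

open scoped FourierTransform in
lemma inv_dens (ν : Measure ℝ) [IsProbabilityMeasure ν] (hac : ν ≪ volume)
    (hIntg : Integrable (fun ξ : ℝ => charFun ν (2 * Real.pi * ξ))) :
    ν = volume.withDensity
      (fun y => ENNReal.ofReal ((𝓕 (fun ξ : ℝ => charFun ν (2 * Real.pi * ξ))) y).re) := by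
  set Ψ := fun ξ : ℝ => charFun ν (2 * Real.pi * ξ) with hΨ
  set r := fun y => ((𝓕 Ψ) y).re with hr
  have hrc : Continuous (𝓕 Ψ) := by
    exact VectorFourier.fourierIntegral_continuous Real.continuous_fourierChar
      (by exact continuous_inner) hIntg
  have hrc' : Continuous r := Complex.continuous_re.comp hrc
  set f := fun x => (ν.rnDeriv volume x).toReal with hf
  have hfi : Integrable f := Measure.integrable_toReal_rnDeriv
  have htest : ∀ g : ℝ → ℝ, ContDiff ℝ (⊤ : ℕ∞) g → HasCompactSupport g →
      ∫ x, g x • f x = ∫ x, g x • r x := by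
    intro ψ hψ hs
    have hψc : ContDiff ℝ (⊤ : ℕ∞) (fun x => (ψ x : ℂ)) := Complex.ofRealCLM.contDiff.comp hψ
    have hsc : HasCompactSupport (fun x => (ψ x : ℂ)) := hs.comp_left (g := Complex.ofReal) rfl
    set S : SchwartzMap ℝ ℂ := hsc.toSchwartzMap hψc with hS
    have hSf : ∀ x, S x = (ψ x : ℂ) := fun x => rfl
    set G : SchwartzMap ℝ ℂ := 𝓕⁻ S with hG
    have hGS : 𝓕 G = S := by rw [hG]; simp
    have hGi : Integrable G := G.integrable
    have hSi : Integrable S := S.integrable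
    have e1 : ∀ x, S x = VectorFourier.fourierIntegral Real.fourierChar volume (innerₗ ℝ) G x := by
      intro x
      rw [← hGS]
      rfl
    have e2 : ∀ ξ, G ξ = VectorFourier.fourierIntegral Real.fourierChar volume (innerₗ ℝ) S (-ξ) := by
      intro x
      rw [hG]
      have : (𝓕⁻ S) x = (𝓕⁻ (S : ℝ → ℂ)) x := by rw [SchwartzMap.fourierInv_coe]
      rw [this, Real.fourierInv_eq_fourier_neg]
      rfl
    have hcontL : Continuous fun p : ℝ × ℝ ↦ (innerₗ ℝ) p.1 p.2 := continuous_inner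
    have hflip : (innerₗ ℝ : ℝ →ₗ[ℝ] ℝ →ₗ[ℝ] ℝ).flip = innerₗ ℝ := by
      ext; simp
    have s1 : ∫ x, S x ∂ν = ∫ ξ, G ξ * Ψ (-ξ) := by
      have := VectorFourier.integral_fourierIntegral_smul_eq_flip (μ := volume) (ν := ν)
        (L := innerₗ ℝ) (e := Real.fourierChar) (f := (G : ℝ → ℂ)) (g := fun _ => (1:ℂ))
        Real.continuous_fourierChar hcontL hGi (integrable_const _)
      simp only [← e1, smul_eq_mul, mul_one, hflip] at this
      rw [this]
      congr 1
      ext ξ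
      congr 1
      rw [hΨ]
      beta_reduce
      rw [charFun_eq_fourierIntegral']
      have : (-(2 * Real.pi)⁻¹ • (2 * Real.pi * -ξ)) = ξ := by
        simp only [smul_eq_mul]; field_simp
      rw [this]
      rfl
    have s2 : ∫ ξ, G ξ * Ψ (-ξ) =
        ∫ ξ, VectorFourier.fourierIntegral Real.fourierChar volume (innerₗ ℝ) S ξ * Ψ ξ := by
      rw [← integral_neg_eq_self (fun ξ => VectorFourier.fourierIntegral Real.fourierChar volume (innerₗ ℝ) S ξ * Ψ ξ)]
      simp only [e2]
    have s3 := VectorFourier.integral_fourierIntegral_smul_eq_flip (μ := volume) (ν := volume)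
        (L := innerₗ ℝ) (e := Real.fourierChar) (f := (S : ℝ → ℂ)) (g := Ψ)
        Real.continuous_fourierChar hcontL hSi hIntg
    rw [hflip] at s3
    simp only [smul_eq_mul] at s3
    have s4 : ∫ x, (ψ x : ℂ) ∂ν = ∫ x, (ψ x : ℂ) * (𝓕 Ψ) x := by
      calc _ = ∫ x, S x ∂ν := rfl
        _ = _ := by rw [s1, s2, s3]; rfl
    rw [integral_complex_ofReal] at s4
    have s5 := congrArg Complex.re s4
    rw [Complex.ofReal_re] at s5
    have hI : Integrable (fun x => (ψ x : ℂ) * (𝓕 Ψ) x) := by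
      apply Continuous.integrable_of_hasCompactSupport
      · exact (Complex.continuous_ofReal.comp hψ.continuous).mul hrc
      · exact hsc.mul_right
    have s6 := integral_re hI
    simp only [RCLike.re_to_complex] at s6
    rw [← s6] at s5
    simp only [Complex.re_ofReal_mul] at s5
    simp only [smul_eq_mul]
    rw [← s5]
    have s7 := integral_rnDeriv_smul (μ := ν) (ν := volume) hac (f := ψ)
    rw [← s7]
    congr 1
    ext x
    rw [smul_eq_mul, mul_comm]
  have hae := ae_eq_of_integral_contDiff_smul_eq hfi.locallyIntegrable hrc'.locallyIntegrable htest
  conv_lhs => rw [← Measure.withDensity_rnDeriv_eq ν volume hac]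
  refine withDensity_congr_ae ?_
  filter_upwards [hae, Measure.rnDeriv_lt_top ν volume] with x hx hx'
  change _ = ENNReal.ofReal (r x)
  rw [← hx, hf]
  beta_reduce
  rw [ENNReal.ofReal_toReal hx'.ne]

open scoped FourierTransform in
lemma four_bound (Ψ : ℝ → ℂ) (y : ℝ) : ‖(𝓕 Ψ) y‖ ≤ ∫ ξ, ‖Ψ ξ‖ := by
  exact VectorFourier.norm_fourierIntegral_le_integral_norm _ _ _ _ _

open scoped FourierTransform in
lemma four_diff (Ψ : ℝ → ℂ) (hi : Integrable Ψ) (y y' : ℝ) (B : ℝ → ℝ) (hB : Integrable B)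
    (hB1 : ∀ ξ, ‖Ψ ξ‖ * min 2 (2 * Real.pi * |ξ| * |y - y'|) ≤ B ξ) :
    ‖(𝓕 Ψ) y - (𝓕 Ψ) y'‖ ≤ ∫ ξ, B ξ := by
  rw [Real.fourier_eq', Real.fourier_eq']
  have hc : ∀ z : ℝ, Integrable (fun v : ℝ => Complex.exp (↑(-2 * Real.pi * inner ℝ v z) * Complex.I) • Ψ v) := by
    intro z
    have hm : AEStronglyMeasurable (fun v : ℝ => Complex.exp (↑(-2 * Real.pi * inner ℝ v z) * Complex.I)) volume := by
      apply Continuous.aestronglyMeasurable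
      fun_prop
    have hm2 : AEStronglyMeasurable (fun v : ℝ => Complex.exp (↑(-2 * Real.pi * inner ℝ v z) * Complex.I) * Ψ v) volume :=
      hm.mul hi.1
    simp only [smul_eq_mul]
    refine hi.norm.mono' hm2 (ae_of_all _ fun v => ?_)
    rw [norm_mul, Complex.norm_exp_ofReal_mul_I, one_mul]
  rw [← integral_sub (hc y) (hc y')]
  refine norm_integral_le_of_norm_le hB (ae_of_all _ fun v => ?_)
  rw [← sub_smul, norm_smul, mul_comm]
  refine le_trans ?_ (hB1 v)
  gcongr
  refine le_min ?_ ?_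
  · refine (norm_sub_le _ _).trans ?_
    rw [Complex.norm_exp_ofReal_mul_I, Complex.norm_exp_ofReal_mul_I]; norm_num
  · set a := -2 * Real.pi * inner ℝ v y
    set b := -2 * Real.pi * inner ℝ v y' with hb
    have : Complex.exp (↑a * Complex.I) - Complex.exp (↑b * Complex.I) =
        Complex.exp (↑b * Complex.I) * (Complex.exp (Complex.I * ((a - b : ℝ) : ℂ)) - 1) := by
      rw [mul_sub, ← Complex.exp_add, mul_one]
      congr 2
      push_cast; ring
    rw [this, norm_mul, Complex.norm_exp_ofReal_mul_I, one_mul]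
    refine (Real.norm_exp_I_mul_ofReal_sub_one_le).trans (le_of_eq ?_)
    have : a - b = -(2 * Real.pi) * v * (y - y') := by
      simp [a, b]; ring
    rw [this, Real.norm_eq_abs, abs_mul, abs_mul, abs_neg, abs_of_nonneg (by positivity : 0 ≤ 2 * Real.pi)]

section
variable (μ : Measure ℝ) [IsProbabilityMeasure μ]

lemma ac_of_bdd (D : ℝ≥0∞) (hM : ∀ s, MeasurableSet s → μ s ≤ D * volume s) :
    μ ≪ volume := by
  refine Measure.AbsolutelyContinuous.mk fun s hs h0 => ?_
  have := hM s hs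
  rw [h0, mul_zero] at this
  exact le_antisymm this bot_le

lemma cf_near (h : Mom μ) : ∃ r > 0, ∀ ξ : ℝ, |ξ| ≤ r →
    ‖charFun μ (2 * Real.pi * ξ)‖ ≤ Real.exp (-ξ ^ 2) := by
  have h1 := taylor_charFun_two (P := μ) (X := id) aemeasurable_id h.m1 h.m2
  rw [Measure.map_id] at h1
  have h2 := h1.def (c := 1/4) (by norm_num)
  obtain ⟨r, hr, hr'⟩ := Metric.eventually_nhds_iff.1 h2
  refine ⟨min (r / 8) (1/8), by positivity, fun ξ hξ => ?_⟩
  have hpi := Real.pi_gt_three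
  have hpi4 := Real.pi_lt_d2
  set t := 2 * Real.pi * ξ with ht
  have ha : |t| = 2 * Real.pi * |ξ| := by
    rw [ht, abs_mul, abs_of_pos (by positivity)]
  have ha1 : |t| ≤ 7 * |ξ| := by rw [ha]; nlinarith [abs_nonneg ξ]
  have hx1 : |ξ| ≤ r / 8 := hξ.trans (min_le_left _ _)
  have hx2 : |ξ| ≤ 1 / 8 := hξ.trans (min_le_right _ _)
  have h3 := @hr' t (by rw [Real.dist_eq, sub_zero]; linarith [abs_nonneg ξ])
  rw [norm_pow, Real.norm_eq_abs, sq_abs] at h3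
  have ht2 : t ^ 2 ≤ 1 := by rw [← sq_abs]; nlinarith [abs_nonneg t, abs_nonneg ξ]
  have h4 : ‖(1 - (t:ℂ) ^ 2 / 2)‖ = 1 - t ^ 2 / 2 := by
    rw [show (1 - (t:ℂ) ^ 2 / 2) = ((1 - t ^ 2 / 2 : ℝ) : ℂ) by push_cast; ring, Complex.norm_real,
      Real.norm_of_nonneg (by linarith)]
  have h5 : ‖charFun μ t‖ ≤ 1 - t ^ 2 / 4 := by
    calc ‖charFun μ t‖ = ‖(charFun μ t - (1 - (t:ℂ) ^ 2 / 2)) + (1 - (t:ℂ) ^ 2 / 2)‖ := by ring_nf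
      _ ≤ _ := norm_add_le _ _
      _ ≤ 1/4 * t ^ 2 + (1 - t ^ 2 / 2) := by rw [h4]; gcongr
      _ = _ := by ring
  have h6 : ξ ^ 2 ≤ t ^ 2 / 4 := by
    rw [ht]; nlinarith [sq_nonneg ξ, mul_nonneg (sq_nonneg ξ) (by nlinarith : 0 ≤ Real.pi ^ 2 - 1)]
  have h7 := Real.add_one_le_exp (-ξ ^ 2)
  linarith

lemma cf_lt_one (hac : μ ≪ volume) (t : ℝ) (ht : t ≠ 0) : ‖charFun μ t‖ < 1 := by
  refine lt_of_le_of_ne (norm_charFun_le_one _) fun h1 => ?_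
  set c := charFun μ t with hc
  -- rotate so that the expectation of the real part is one
  have hi : Integrable (fun x : ℝ => (starRingEnd ℂ c * Complex.exp (t * x * Complex.I)).re) μ := by
    refine Integrable.of_bound (C := 1) (by fun_prop) (ae_of_all _ fun x => ?_)
    refine (Complex.abs_re_le_norm _).trans ?_
    rw [norm_mul, RCLike.norm_conj, h1, show (t : ℂ) * x * Complex.I = ((t * x : ℝ) : ℂ) * Complex.I by push_cast; ring,
      Complex.norm_exp_ofReal_mul_I, one_mul]
  have hi' : Integrable (fun x : ℝ => starRingEnd ℂ c * Complex.exp (t * x * Complex.I)) μ := by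
    refine Integrable.of_bound (C := 1) (by fun_prop) (ae_of_all _ fun x => ?_)
    rw [norm_mul, RCLike.norm_conj, h1, show (t : ℂ) * x * Complex.I = ((t * x : ℝ) : ℂ) * Complex.I by push_cast; ring,
      Complex.norm_exp_ofReal_mul_I, one_mul]
  have e1 : ∫ x : ℝ, (starRingEnd ℂ c * Complex.exp (t * x * Complex.I)).re ∂μ = 1 := by
    have := integral_re hi'
    simp only [RCLike.re_to_complex] at this
    rw [this, integral_const_mul, ← charFun_apply_real, ← hc, mul_comm, Complex.mul_conj,
      Complex.normSq_eq_norm_sq, h1]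
    simp
  have e2 : ∫ x : ℝ, (1 - (starRingEnd ℂ c * Complex.exp (t * x * Complex.I)).re) ∂μ = 0 := by
    rw [integral_sub (integrable_const _) hi, e1]; simp
  have e3 := (integral_eq_zero_iff_of_nonneg (fun x => by
    simp only [Pi.zero_apply, Pi.sub_apply]
    rw [sub_nonneg]
    have := (Complex.abs_re_le_norm (starRingEnd ℂ c * Complex.exp (t * x * Complex.I)))
    rw [norm_mul, RCLike.norm_conj, h1, show (t : ℂ) * x * Complex.I = ((t * x : ℝ) : ℂ) * Complex.I by push_cast; ring,
      Complex.norm_exp_ofReal_mul_I, one_mul] at this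
    have := le_abs_self ((starRingEnd ℂ c * Complex.exp (((t * x : ℝ) : ℂ) * Complex.I)).re)
    rw [show (t : ℂ) * x * Complex.I = ((t * x : ℝ) : ℂ) * Complex.I by push_cast; ring]
    linarith) ((integrable_const _).sub hi)).1 e2
  have e4 : ∀ᵐ x ∂μ, Complex.exp (((t * x : ℝ) : ℂ) * Complex.I) = c := by
    filter_upwards [e3] with x hx
    have hx : 1 - (starRingEnd ℂ c * Complex.exp (t * x * Complex.I)).re = 0 := hx
    rw [show (t : ℂ) * x * Complex.I = ((t * x : ℝ) : ℂ) * Complex.I by push_cast; ring] at hx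
    set z := Complex.exp (((t * x : ℝ) : ℂ) * Complex.I) with hz
    have hzn : ‖z‖ = 1 := Complex.norm_exp_ofReal_mul_I _
    have h3 : z.re ^ 2 + z.im ^ 2 = 1 := by
      have := Complex.sq_norm_sub_sq_re z; rw [hzn] at this; linarith
    have h4 : c.re ^ 2 + c.im ^ 2 = 1 := by
      have := Complex.sq_norm_sub_sq_re c; rw [h1] at this; linarith
    rw [Complex.mul_re, Complex.conj_re, Complex.conj_im] at hx
    have h5 : (z.re - c.re) ^ 2 + (z.im - c.im) ^ 2 = 0 := by nlinarith
    have h6 : z.re - c.re = 0 := by nlinarith [sq_nonneg (z.re - c.re), sq_nonneg (z.im - c.im)]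
    have h7 : z.im - c.im = 0 := by nlinarith [sq_nonneg (z.re - c.re), sq_nonneg (z.im - c.im)]
    exact Complex.ext (by linarith) (by linarith)
  have hcount : {x : ℝ | Complex.exp (((t * x : ℝ) : ℂ) * Complex.I) = c}.Countable := by
    by_cases hne : ∃ x0 : ℝ, Complex.exp (((t * x0 : ℝ) : ℂ) * Complex.I) = c
    · obtain ⟨x0, hx0⟩ := hne
      refine (countable_range (fun n : ℤ => x0 + n * (2 * Real.pi) / t)).mono fun x hx => ?_
      have hx : Complex.exp (((t * x : ℝ) : ℂ) * Complex.I) = c := hx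
      rw [← hx0, Complex.exp_eq_exp_iff_exists_int] at hx
      obtain ⟨n, hn⟩ := hx
      have := congrArg Complex.im hn
      simp at this
      refine ⟨n, ?_⟩
      beta_reduce
      field_simp
      linarith
    · push Not at hne
      convert countable_empty
      exact Set.eq_empty_of_forall_notMem fun x hx => hne x hx
  have hz := hac (hcount.measure_zero volume)
  have : ∀ᵐ x ∂μ, False := by
    filter_upwards [e4, measure_eq_zero_iff_ae_notMem.1 hz] with x h1 h2
    exact h2 h1
  simp at this
  exact IsProbabilityMeasure.ne_zero μ this

open scoped FourierTransform in
lemma cf_infty (hac : μ ≪ volume) :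
    Tendsto (fun ξ : ℝ => charFun μ (2 * Real.pi * ξ)) (cocompact ℝ) (nhds 0) := by
  have h1 := Real.zero_at_infty_fourier (fun x : ℝ => ((μ.rnDeriv volume x).toReal : ℂ))
  have h2 := h1.comp (Homeomorph.neg ℝ).isClosedEmbedding.tendsto_cocompact
  refine h2.congr fun ξ => ?_
  change (𝓕 (fun x : ℝ => ((μ.rnDeriv volume x).toReal : ℂ))) (-ξ) = _
  rw [charFun_apply_real, ← integral_rnDeriv_smul hac, Real.fourier_eq']
  congr 1
  ext x
  rw [smul_eq_mul, mul_comm]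
  change _ = (_ : ℝ) • _
  rw [Complex.real_smul]
  congr 2
  simp; ring

lemma cf_bounds (h : Mom μ) (hac : μ ≪ volume) : ∃ r > 0, ∃ ρ : ℝ, 0 < ρ ∧ ρ < 1 ∧
    (∀ ξ : ℝ, |ξ| ≤ r → ‖charFun μ (2 * Real.pi * ξ)‖ ≤ Real.exp (-ξ ^ 2)) ∧
    (∀ ξ : ℝ, r ≤ |ξ| → ‖charFun μ (2 * Real.pi * ξ)‖ ≤ ρ) := by
  obtain ⟨r, hr, h1⟩ := cf_near μ h
  have hcont : Continuous fun ξ : ℝ => ‖charFun μ (2 * Real.pi * ξ)‖ := by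
    have : Continuous (charFun μ) := continuous_charFun
    fun_prop
  have h2 := (cf_infty μ hac).norm.eventually (gt_mem_nhds (show ‖(0:ℂ)‖ < 1/2 by simp))
  obtain ⟨K, hK, hK'⟩ := mem_cocompact.1 h2
  have hKc : IsCompact (K ∩ {ξ | r ≤ |ξ|}) :=
    hK.inter_right (isClosed_le continuous_const continuous_abs)
  by_cases hne : (K ∩ {ξ | r ≤ |ξ|}).Nonempty
  · obtain ⟨ξ0, hξ0, hmax⟩ := hKc.exists_isMaxOn hne hcont.continuousOn
    have hlt := cf_lt_one μ hac (2 * Real.pi * ξ0) (by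
      have : |ξ0| ≠ 0 := (lt_of_lt_of_le hr hξ0.2).ne'
      have := abs_ne_zero.1 this
      have := Real.pi_ne_zero
      positivity)
    refine ⟨r, hr, max (1/2) (‖charFun μ (2 * Real.pi * ξ0)‖), by positivity, max_lt (by norm_num) hlt, h1,
      fun ξ hξ => ?_⟩
    by_cases hk : ξ ∈ K
    · exact le_max_of_le_right (hmax ⟨hk, hξ⟩)
    · exact le_max_of_le_left (le_of_lt (hK' hk))
  · refine ⟨r, hr, 1/2, by norm_num, by norm_num, h1, fun ξ hξ => ?_⟩
    have hk : ξ ∉ K := fun hk => hne ⟨ξ, hk, hξ⟩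
    exact le_of_lt (hK' hk)

end

lemma geo_bound (ρ : ℝ) (h0 : 0 < ρ) (h1 : ρ < 1) :
    ∃ C > 0, ∀ k : ℕ, 2 ≤ k → ρ ^ (k - 2) ≤ C / k := by
  have h := tendsto_self_mul_const_pow_of_lt_one h0.le h1
  obtain ⟨B, hB⟩ := h.bddAbove_range
  refine ⟨max B 1 / ρ ^ 2, by positivity, fun k hk => ?_⟩
  have hk' : (0:ℝ) < k := by positivity
  have := hB (mem_range_self k)
  beta_reduce at this
  rw [le_div_iff₀ hk', le_div_iff₀ (by positivity)]
  calc ρ ^ (k-2) * k * ρ ^ 2 = k * ρ ^ (k - 2 + 2) := by rw [pow_add]; ring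
    _ = k * ρ ^ k := by rw [Nat.sub_add_cancel hk]
    _ ≤ _ := this.trans (le_max_left _ _)

lemma abs_exp_le (k : ℕ) (hk : 1 ≤ k) (ξ : ℝ) :
    |ξ| * Real.exp (-(k:ℝ) * ξ ^ 2) ≤ (1 / Real.sqrt k) * Real.exp (-(k/2:ℝ) * ξ ^ 2) := by
  have hk' : (0:ℝ) < k := by positivity
  have hs : 0 < Real.sqrt k := by positivity
  have hs2 := Real.sq_sqrt hk'.le
  have h1 : Real.sqrt k * |ξ| ≤ Real.exp ((k/2:ℝ) * ξ ^ 2) := by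
    have := Real.add_one_le_exp ((k/2:ℝ) * ξ ^ 2)
    have h2 : (Real.sqrt k * |ξ|) ^ 2 = k * ξ ^ 2 := by rw [mul_pow, hs2, sq_abs]
    nlinarith [sq_nonneg (Real.sqrt k * |ξ| - 1)]
  have h3 : Real.exp (-(k/2:ℝ) * ξ ^ 2) = Real.exp ((k/2:ℝ) * ξ ^ 2) * Real.exp (-(k:ℝ) * ξ ^ 2) := by
    rw [← Real.exp_add]; ring_nf
  rw [h3, ← mul_assoc]
  gcongr
  rw [one_div, inv_mul_eq_div, le_div_iff₀ hs]
  linarith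

section
variable (μ : Measure ℝ) [IsProbabilityMeasure μ]

lemma pw_ac (D : ℝ≥0∞) (hM : ∀ s, MeasurableSet s → μ s ≤ D * volume s) (k : ℕ) :
    pw μ (k + 1) ≪ volume := by
  refine ac_of_bdd _ D fun s hs => ?_
  have : pw μ (k+1) = μ.conv (pw μ k) := rfl
  rw [this]
  exact conv_bdd_density μ _ D hM s hs

open scoped FourierTransform in
lemma dens_pw (h : Mom μ) (M : ℝ) (hM0 : 0 ≤ M)
    (hM : ∀ s, MeasurableSet s → μ s ≤ ENNReal.ofReal M * volume s) :
    ∃ C > 0, ∀ k : ℕ, 2 ≤ k → ∃ d : ℝ → ℝ, Continuous d ∧ (∀ z, 0 ≤ d z) ∧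
      (∀ z, d z ≤ C / Real.sqrt k) ∧
      pw μ k = volume.withDensity (fun z => ENNReal.ofReal (d z)) ∧
      ∀ z z', |d z - d z'| ≤ C * (|z - z'| + 1) / k := by
  have hac := ac_of_bdd μ _ hM
  obtain ⟨r, hr, ρ, hρ0, hρ1, hn, hf⟩ := cf_bounds μ h hac
  obtain ⟨C1, hC1, hgeo⟩ := geo_bound ρ hρ0 hρ1
  set Ψ := fun ξ : ℝ => charFun μ (2 * Real.pi * ξ) with hΨ
  have hpi := Real.pi_pos
  have hsq : Integrable (fun ξ => ‖Ψ ξ‖ ^ 2) := by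
    have := (phi_sq_int μ M hM0 hM).comp_mul_left' (R := 2 * Real.pi) (by positivity)
    exact this
  set I := ∫ ξ, ‖Ψ ξ‖ ^ 2 with hI
  have hI0 : 0 ≤ I := integral_nonneg fun ξ => by positivity
  have hcont : Continuous Ψ := by
    have : Continuous (charFun μ) := continuous_charFun
    fun_prop
  have hmaj : ∀ k : ℕ, 2 ≤ k → ∀ ξ, ‖Ψ ξ‖ ^ k ≤ Real.exp (-(k:ℝ) * ξ ^ 2) + C1 / k * ‖Ψ ξ‖ ^ 2 := by
    intro k hk ξ
    rcases le_total |ξ| r with hx | hx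
    · have h1 : ‖Ψ ξ‖ ^ k ≤ (Real.exp (-ξ ^ 2)) ^ k := by gcongr; exact hn ξ hx
      rw [← Real.exp_nat_mul] at h1
      have : (k:ℝ) * -ξ ^ 2 = -(k:ℝ) * ξ ^ 2 := by ring
      rw [this] at h1
      have : 0 ≤ C1 / k * ‖Ψ ξ‖ ^ 2 := by positivity
      linarith
    · have h1 : ‖Ψ ξ‖ ^ k = ‖Ψ ξ‖ ^ (k - 2) * ‖Ψ ξ‖ ^ 2 := by
        rw [← pow_add, Nat.sub_add_cancel hk]
      have h2 : ‖Ψ ξ‖ ^ (k - 2) ≤ C1 / k := by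
        refine le_trans ?_ (hgeo k hk)
        gcongr
        exact hf ξ hx
      rw [h1]
      have := mul_le_mul_of_nonneg_right h2 (sq_nonneg ‖Ψ ξ‖)
      have := Real.exp_pos (-(k:ℝ) * ξ ^ 2)
      linarith
  set C := Real.sqrt Real.pi + C1 * I + 2 * Real.pi * Real.sqrt (2 * Real.pi) + 2 * C1 * I + 1 with hC
  have hCpos : 0 < C := by positivity
  refine ⟨C, hCpos, fun k hk => ?_⟩
  have hk0 : (0:ℝ) < k := by positivity
  have hk1 : (1:ℝ) ≤ k := by exact_mod_cast (by omega : 1 ≤ k)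
  have hsk : 0 < Real.sqrt k := by positivity
  have hsk2 := Real.sq_sqrt hk0.le
  have hsk3 : Real.sqrt k ≤ k := by
    rw [← Real.sqrt_one] at *
    nlinarith [Real.sqrt_le_sqrt hk1, Real.sqrt_one]
  have he : Integrable (fun ξ : ℝ => Real.exp (-(k:ℝ) * ξ ^ 2)) := integrable_exp_neg_mul_sq hk0
  have he2 : Integrable (fun ξ : ℝ => Real.exp (-(k/2:ℝ) * ξ ^ 2)) := integrable_exp_neg_mul_sq (by positivity)
  have hki : Integrable (fun ξ => Ψ ξ ^ k) := by
    refine (he.add (hsq.const_mul (C1 / k))).mono' (by fun_prop) (ae_of_all _ fun ξ => ?_)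
    rw [norm_pow]
    exact hmaj k hk ξ
  have hcf : (fun ξ : ℝ => charFun (pw μ k) (2 * Real.pi * ξ)) = fun ξ => Ψ ξ ^ k := by
    ext ξ
    rw [charFun_pw]
  have hack : pw μ k ≪ volume := by
    obtain ⟨j, rfl⟩ : ∃ j, k = j + 1 := ⟨k - 1, by omega⟩
    exact pw_ac μ _ hM j
  have hinv := inv_dens (pw μ k) hack (by rw [hcf]; exact hki)
  rw [hcf] at hinv
  have hrc : Continuous (𝓕 (fun ξ => Ψ ξ ^ k)) := by
    exact VectorFourier.fourierIntegral_continuous Real.continuous_fourierChar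
      (by exact continuous_inner) hki
  have hmaxc : Continuous (fun z : ℝ => max (0:ℝ) ((𝓕 (fun ξ => Ψ ξ ^ k)) z).re) := by
    fun_prop
  refine ⟨fun z : ℝ => max (0:ℝ) ((𝓕 (fun ξ => Ψ ξ ^ k)) z).re,
    hmaxc, fun z => le_max_left _ _, fun z => ?_, ?_, fun z z' => ?_⟩
  · refine max_le (by positivity) ?_
    refine (Complex.re_le_norm _).trans ((four_bound _ z).trans ?_)
    calc ∫ ξ, ‖Ψ ξ ^ k‖ ≤ ∫ ξ, (Real.exp (-(k:ℝ) * ξ ^ 2) + C1 / k * ‖Ψ ξ‖ ^ 2) := by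
          refine integral_mono hki.norm (he.add (hsq.const_mul (C1 / k))) fun ξ => ?_
          beta_reduce
          rw [norm_pow]
          exact hmaj k hk ξ
      _ = Real.sqrt Real.pi / Real.sqrt k + C1 * I / k := by
          rw [integral_add he (hsq.const_mul _), integral_gaussian, integral_const_mul,
            Real.sqrt_div hpi.le]
          ring
      _ ≤ Real.sqrt Real.pi / Real.sqrt k + C1 * I / Real.sqrt k := by gcongr
      _ = (Real.sqrt Real.pi + C1 * I) / Real.sqrt k := by ring
      _ ≤ C / Real.sqrt k := by
          gcongr
          have : 0 ≤ 2 * Real.pi * Real.sqrt (2 * Real.pi) + 2 * C1 * I := by positivity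
          rw [hC]; linarith
  · conv_lhs => rw [hinv]
    congr 1
    ext z
    simp
  · have hm := abs_max_sub_max_le_abs ((𝓕 (fun ξ => Ψ ξ ^ k)) z).re ((𝓕 (fun ξ => Ψ ξ ^ k)) z').re 0
    rw [max_comm, max_comm _ (0:ℝ)] at hm
    refine hm.trans ?_
    rw [← Complex.sub_re]
    refine (Complex.abs_re_le_norm _).trans ?_
    set D := |z - z'| with hD
    have hD0 : 0 ≤ D := abs_nonneg _
    refine (four_diff _ hki z z' (fun ξ => 2 * Real.pi * D * (1 / Real.sqrt k) * Real.exp (-(k/2:ℝ) * ξ ^ 2)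
      + 2 * (C1 / k) * ‖Ψ ξ‖ ^ 2) ((he2.const_mul _).add (hsq.const_mul _)) fun ξ => ?_).trans ?_
    · rw [norm_pow, ← hD]
      have hm0 : 0 ≤ min 2 (2 * Real.pi * |ξ| * D) := by positivity
      calc ‖Ψ ξ‖ ^ k * min 2 (2 * Real.pi * |ξ| * D)
          ≤ (Real.exp (-(k:ℝ) * ξ ^ 2) + C1 / k * ‖Ψ ξ‖ ^ 2) * min 2 (2 * Real.pi * |ξ| * D) := by
            gcongr; exact hmaj k hk ξ
        _ = Real.exp (-(k:ℝ) * ξ ^ 2) * min 2 (2 * Real.pi * |ξ| * D) +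
            C1 / k * ‖Ψ ξ‖ ^ 2 * min 2 (2 * Real.pi * |ξ| * D) := by ring
        _ ≤ Real.exp (-(k:ℝ) * ξ ^ 2) * (2 * Real.pi * |ξ| * D) + C1 / k * ‖Ψ ξ‖ ^ 2 * 2 := by
            gcongr
            · exact min_le_right _ _
            · exact min_le_left _ _
        _ = 2 * Real.pi * D * (|ξ| * Real.exp (-(k:ℝ) * ξ ^ 2)) + 2 * (C1 / k) * ‖Ψ ξ‖ ^ 2 := by ring
        _ ≤ 2 * Real.pi * D * ((1 / Real.sqrt k) * Real.exp (-(k/2:ℝ) * ξ ^ 2)) + 2 * (C1 / k) * ‖Ψ ξ‖ ^ 2 := by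
            have := abs_exp_le k (by omega) ξ
            have h0 : 0 ≤ 2 * Real.pi * D := by positivity
            linarith [mul_le_mul_of_nonneg_left this h0]
        _ = _ := by ring
    · rw [integral_add (he2.const_mul _) (hsq.const_mul _), integral_const_mul, integral_const_mul,
        integral_gaussian, ← hI]
      have e1 : Real.sqrt (Real.pi / (k/2:ℝ)) = Real.sqrt (2 * Real.pi) / Real.sqrt k := by
        rw [← Real.sqrt_div (by positivity)]
        congr 1
        field_simp
      rw [e1]
      have e2 : 2 * Real.pi * D * (1 / Real.sqrt k) * (Real.sqrt (2 * Real.pi) / Real.sqrt k) + 2 * (C1 / k) * I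
        = (2 * Real.pi * Real.sqrt (2 * Real.pi) * D + 2 * C1 * I) / k := by
        have : 2 * Real.pi * D * (1 / Real.sqrt k) * (Real.sqrt (2 * Real.pi) / Real.sqrt k) =
            2 * Real.pi * D * Real.sqrt (2 * Real.pi) / (Real.sqrt k) ^ 2 := by ring
        rw [this, hsk2]
        ring
      rw [e2]
      gcongr
      have h1 : 0 ≤ Real.sqrt Real.pi + C1 * I + 1 := by positivity
      have h2 : 0 ≤ 2 * Real.pi * Real.sqrt (2 * Real.pi) := by positivity
      have h3 : 0 ≤ 2 * C1 * I := by positivity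
      rw [hC]
      nlinarith [mul_nonneg h1 hD0, mul_nonneg h3 hD0]

end

lemma int_dens (ν : Measure ℝ) (f : ℝ → ℝ) (hf : Measurable f) (hf0 : ∀ x, 0 ≤ f x)
    (hν : ν = volume.withDensity (fun x => ENNReal.ofReal (f x))) (h : ℝ → ℝ) :
    ∫ x, h x ∂ν = ∫ x, f x * h x := by
  rw [hν, integral_withDensity_eq_integral_toReal_smul (by fun_prop) (ae_of_all _ fun x => by finiteness)]
  simp [ENNReal.toReal_ofReal (hf0 _)]

lemma shift_asm (g : ℝ → ℝ) (hg : Measurable g) (z : ℝ) (ν : Measure ℝ) :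
    AEStronglyMeasurable (fun u => g (z - u)) ν :=
  (hg.comp (by fun_prop : Measurable fun u : ℝ => z - u)).aestronglyMeasurable

section
variable (ν τ : Measure ℝ) [IsProbabilityMeasure ν] [IsProbabilityMeasure τ] (f g : ℝ → ℝ)

lemma swap_dens (hf : Measurable f) (hf0 : ∀ x, 0 ≤ f x)
    (hν : ν = volume.withDensity (fun x => ENNReal.ofReal (f x)))
    (hg : Measurable g) (hg0 : ∀ x, 0 ≤ g x)
    (hτ : τ = volume.withDensity (fun x => ENNReal.ofReal (g x))) (h : ℝ → ℝ) (z : ℝ) :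
    ∫ u, h (z - u) * g (z - u) ∂ν = ∫ w, h w * f (z - w) ∂τ := by
  rw [int_dens ν f hf hf0 hν, int_dens τ g hg hg0 hτ]
  rw [← integral_sub_left_eq_self (fun w => g w * (h w * f (z - w))) _ z]
  congr 1
  ext u
  rw [sub_sub_cancel]
  ring

lemma conv_dens (hg : Measurable g) (hg0 : ∀ x, 0 ≤ g x) (B : ℝ) (hB : ∀ x, g x ≤ B)
    (hτ : τ = volume.withDensity (fun x => ENNReal.ofReal (g x))) :
    ν.conv τ = volume.withDensity (fun z => ENNReal.ofReal (∫ u, g (z - u) ∂ν)) := by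
  ext s hs
  have e : ∀ z, ENNReal.ofReal (∫ u, g (z - u) ∂ν) = ∫⁻ u, ENNReal.ofReal (g (z - u)) ∂ν := by
    intro z
    refine ofReal_integral_eq_lintegral_ofReal ?_ (ae_of_all _ fun u => hg0 _)
    refine Integrable.of_bound (C := B) (shift_asm g hg z ν) (ae_of_all _ fun u => ?_)
    rw [Real.norm_of_nonneg (hg0 _)]
    exact hB _
  simp only [e]
  rw [withDensity_apply _ hs, lintegral_lintegral_swap (by fun_prop), ← lintegral_indicator_one hs,
    Measure.lintegral_conv (measurable_one.indicator hs)]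
  refine lintegral_congr fun u => ?_
  have hm : Measurable fun y : ℝ => s.indicator (1 : ℝ → ℝ≥0∞) (u + y) :=
    (measurable_one.indicator hs).comp (by fun_prop : Measurable fun y : ℝ => u + y)
  rw [hτ, lintegral_withDensity_eq_lintegral_mul _ (by fun_prop) hm, ← lintegral_indicator hs, ← lintegral_add_left_eq_self (s.indicator fun x => ENNReal.ofReal (g (x - u))) u]
  refine lintegral_congr fun w => ?_
  by_cases hw : u + w ∈ s <;> simp [indicator, hw]

lemma conv_dens_mul (hf : Measurable f) (hf0 : ∀ x, 0 ≤ f x)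
    (hν : ν = volume.withDensity (fun x => ENNReal.ofReal (f x)))
    (hg : Measurable g) (hg0 : ∀ x, 0 ≤ g x) (B : ℝ) (hB : ∀ x, g x ≤ B)
    (hτ : τ = volume.withDensity (fun x => ENNReal.ofReal (g x)))
    (i1 : Integrable (fun x : ℝ => x ^ 2) ν) (z : ℝ) :
    z * ∫ u, g (z - u) ∂ν = (∫ u, u * g (z - u) ∂ν) + ∫ w, w * f (z - w) ∂τ := by
  have i0 := int_of_sq ν i1
  have ig : Integrable (fun u => g (z - u)) ν :=
    Integrable.of_bound (C := B) (shift_asm g hg z ν) (ae_of_all _ fun u => by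
      rw [Real.norm_of_nonneg (hg0 _)]; exact hB _)
  have iug : Integrable (fun u => u * g (z - u)) ν :=
    i0.mul_bdd (c := B) (shift_asm g hg z ν) (ae_of_all _ fun u => by
      rw [Real.norm_of_nonneg (hg0 _)]; exact hB _)
  have := swap_dens ν τ f g hf hf0 hν hg hg0 hτ (fun x => x) z
  rw [← this, ← integral_const_mul, ← integral_add iug]
  · congr 1; ext u; ring
  · have : (fun u => (z - u) * g (z - u)) = fun u => z * g (z - u) - u * g (z - u) := by
      ext u; ring
    rw [this]
    exact (ig.const_mul z).sub iug

lemma conv_dens_sq (hf : Measurable f) (hf0 : ∀ x, 0 ≤ f x) (A : ℝ) (hA : ∀ x, f x ≤ A)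
    (hν : ν = volume.withDensity (fun x => ENNReal.ofReal (f x)))
    (hg : Measurable g) (hg0 : ∀ x, 0 ≤ g x) (B : ℝ) (hB : ∀ x, g x ≤ B)
    (hτ : τ = volume.withDensity (fun x => ENNReal.ofReal (g x)))
    (i1 : Integrable (fun x : ℝ => x ^ 2) ν) (i2 : Integrable (fun x : ℝ => x ^ 2) τ) (z : ℝ) :
    z ^ 2 * ∫ u, g (z - u) ∂ν ≤ 2 * (B * (∫ u, u ^ 2 ∂ν) + A * ∫ w, w ^ 2 ∂τ) := by
  have i0 := int_of_sq ν i1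
  have hgb : ∀ᵐ u ∂ν, ‖g (z - u)‖ ≤ B := ae_of_all _ fun u => by
      rw [Real.norm_of_nonneg (hg0 _)]; exact hB _
  have ig : Integrable (fun u => g (z - u)) ν := Integrable.of_bound (C := B) (shift_asm g hg z ν) hgb
  have iug : Integrable (fun u => u ^ 2 * g (z - u)) ν := i1.mul_bdd (c := B) (shift_asm g hg z ν) hgb
  have iug' : Integrable (fun u => (z - u) ^ 2 * g (z - u)) ν := by
    refine Integrable.mul_bdd (c := B) ?_ (shift_asm g hg z ν) hgb
    have : (fun u : ℝ => (z - u) ^ 2) = fun u => z ^ 2 - 2 * z * u + u ^ 2 := by ext u; ring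
    rw [this]
    exact ((integrable_const _).sub (i0.const_mul _)).add i1
  have := swap_dens ν τ f g hf hf0 hν hg hg0 hτ (fun x => x ^ 2) z
  beta_reduce at this
  calc z ^ 2 * ∫ u, g (z - u) ∂ν = ∫ u, z ^ 2 * g (z - u) ∂ν := by rw [integral_const_mul]
    _ ≤ ∫ u, 2 * (u ^ 2 * g (z - u) + (z - u) ^ 2 * g (z - u)) ∂ν := by
        refine integral_mono (ig.const_mul _) ((iug.add iug').const_mul _) fun u => ?_
        change z ^ 2 * g (z - u) ≤ 2 * (u ^ 2 * g (z - u) + (z - u) ^ 2 * g (z - u))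
        have : 0 ≤ (2 * (u ^ 2 + (z - u) ^ 2) - z ^ 2) * g (z - u) :=
          mul_nonneg (by nlinarith [sq_nonneg (z - 2 * u)]) (hg0 _)
        linarith
    _ = 2 * ((∫ u, u ^ 2 * g (z - u) ∂ν) + ∫ w, w ^ 2 * f (z - w) ∂τ) := by
        rw [integral_const_mul, integral_add iug iug', this]
    _ ≤ _ := by
        gcongr
        · rw [← integral_const_mul]
          refine integral_mono iug (i1.const_mul B) fun u => ?_
          beta_reduce
          rw [mul_comm]
          exact mul_le_mul_of_nonneg_right (hB _) (sq_nonneg _)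
        · rw [← integral_const_mul]
          refine integral_mono_of_nonneg (ae_of_all _ fun u => mul_nonneg (sq_nonneg _) (hf0 _)) (i2.const_mul A) (ae_of_all _ fun u => ?_)
          beta_reduce
          rw [mul_comm]
          exact mul_le_mul_of_nonneg_right (hA _) (sq_nonneg _)

lemma abs_int_le (B α : ℝ) (h : ℝ → ℝ) (hB0 : 0 ≤ B) (hB : ∀ x, |h x| ≤ B)
    (i1 : Integrable (fun x : ℝ => x ^ 2) ν) (hα : ∫ u, |u| ∂ν ≤ α) :
    |∫ u, u * h u ∂ν| ≤ B * α := by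
  have i0 := int_of_sq ν i1
  calc |∫ u, u * h u ∂ν| ≤ ∫ u, B * |u| ∂ν := by
        rw [← Real.norm_eq_abs]
        refine norm_integral_le_of_norm_le (i0.abs.const_mul B) (ae_of_all _ fun u => ?_)
        rw [Real.norm_eq_abs, abs_mul, mul_comm]
        exact mul_le_mul_of_nonneg_right (hB _) (abs_nonneg _)
    _ = B * ∫ u, |u| ∂ν := integral_const_mul _ _
    _ ≤ _ := by gcongr

lemma mul_int_sub (B : ℝ) (g : ℝ → ℝ) (hg : Measurable g) (hB : ∀ x, |g x| ≤ B)
    (i1 : Integrable (fun x : ℝ => x ^ 2) ν) (z z' : ℝ) :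
    (∫ u, u * g (z - u) ∂ν) - (∫ u, u * g (z' - u) ∂ν) = ∫ u, u * (g (z - u) - g (z' - u)) ∂ν := by
  have i0 := int_of_sq ν i1
  have hi : ∀ z, Integrable (fun u => u * g (z - u)) ν := fun z =>
    i0.mul_bdd (c := B) (shift_asm g hg z ν) (ae_of_all _ fun u => by
      rw [Real.norm_eq_abs]; exact hB _)
  rw [← integral_sub (hi z) (hi z')]
  congr 1; ext u; ring

end

section
variable (μ : Measure ℝ) [IsProbabilityMeasure μ]

lemma dens_all (h : Mom μ) (p : ℝ → ℝ) (hp : Measurable p) (hp0 : ∀ x, 0 ≤ p x) (M : ℝ)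
    (hpM : ∀ x, p x ≤ M) (hμ : μ = volume.withDensity (fun x => ENNReal.ofReal (p x))) :
    ∃ C > 0, ∃ d : ℕ → ℝ → ℝ, ∀ k : ℕ, 1 ≤ k → Measurable (d k) ∧ (∀ z, 0 ≤ d k z) ∧
      (∀ z, d k z ≤ C / Real.sqrt k) ∧
      pw μ k = volume.withDensity (fun z => ENNReal.ofReal (d k z)) ∧
      (2 ≤ k → ∀ z z', |d k z - d k z'| ≤ C * (|z - z'| + 1) / k) := by
  have hM0 : 0 ≤ M := (hp0 0).trans (hpM 0)
  have hM : ∀ s, MeasurableSet s → μ s ≤ ENNReal.ofReal M * volume s := by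
    intro s hs
    rw [hμ, withDensity_apply _ hs]
    calc ∫⁻ x in s, ENNReal.ofReal (p x) ≤ ∫⁻ x in s, ENNReal.ofReal M :=
          lintegral_mono fun x => ENNReal.ofReal_le_ofReal (hpM x)
      _ = _ := by simp
  obtain ⟨C, hC, H⟩ := dens_pw μ h M hM0 hM
  have H' : ∀ k : ℕ, ∃ d : ℝ → ℝ, 1 ≤ k → Measurable d ∧ (∀ z, 0 ≤ d z) ∧
      (∀ z, d z ≤ (C + M) / Real.sqrt k) ∧
      pw μ k = volume.withDensity (fun z => ENNReal.ofReal (d z)) ∧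
      (2 ≤ k → ∀ z z', |d z - d z'| ≤ (C + M) * (|z - z'| + 1) / k) := by
    intro k
    rcases Nat.lt_or_ge k 2 with hk | hk
    · refine ⟨p, fun h1 => ?_⟩
      obtain rfl : k = 1 := by omega
      refine ⟨hp, hp0, fun z => ?_, by rw [pw_one]; exact hμ, fun h => by omega⟩
      simp; linarith [hpM z]
    · obtain ⟨d, h1, h2, h3, h4, h5⟩ := H k hk
      refine ⟨d, fun _ => ⟨h1.measurable, h2, fun z => (h3 z).trans ?_, h4, fun _ z z' => (h5 z z').trans ?_⟩⟩
      · gcongr; linarith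
      · gcongr; linarith
  choose d hd using H'
  exact ⟨C + M, by linarith, d, hd⟩

lemma Dm_dens (ν : Measure ℝ) (c : ℝ → ℝ) (hc : Measurable c) (hc0 : ∀ x, 0 ≤ c x)
    (hν : ν = volume.withDensity (fun z => ENNReal.ofReal (c z))) :
    Dm ν = volume.withDensity (fun z => ENNReal.ofReal (max z 0 * c z)) := by
  rw [Dm, hν, ← withDensity_mul _ (by fun_prop) (by fun_prop)]
  congr 1
  ext z
  rw [Pi.mul_apply, mul_comm, ENNReal.ofReal_mul (le_max_right _ _), ENNReal.ofReal_max]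
  simp

set_option maxHeartbeats 1000000 in
lemma g_all (h : Mom μ) (p : ℝ → ℝ) (hp : Measurable p) (hp0 : ∀ x, 0 ≤ p x) (M : ℝ)
    (hpM : ∀ x, p x ≤ M) (hμ : μ = volume.withDensity (fun x => ENNReal.ofReal (p x))) :
    ∃ C > 0, ∃ g : ℕ → ℝ → ℝ, ∀ k : ℕ, 2 ≤ k → Measurable (g k) ∧ (∀ z, 0 ≤ g k z) ∧
      (∀ z, g k z ≤ C) ∧ (∀ z, g k z * |z| ≤ C * Real.sqrt k) ∧
      Dm (pw μ k) = volume.withDensity (fun z => ENNReal.ofReal (g k z)) ∧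
      (4 ≤ k → ∀ z z', |g k z - g k z'| ≤ C * (|z - z'| + 1) / Real.sqrt k) := by
  obtain ⟨C, hC, d, hd⟩ := dens_all μ h p hp hp0 M hpM hμ
  refine ⟨6 * C, by positivity, fun k z => max z 0 * ∫ u, d (k - k / 2) (z - u) ∂(pw μ (k / 2)), fun k hk => ?_⟩
  set a := k / 2 with ha
  set b := k - k / 2 with hb
  have hak : 1 ≤ a := by omega
  have hab : a ≤ b := by omega
  have hb2 : b ≤ 2 * a := by omega
  have hkb : k ≤ 2 * b := by omega
  have hbk : b ≤ k := by omega
  have hsum : a + b = k := by omega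
  obtain ⟨am, a0, aC, aeq, amod⟩ := hd a hak
  obtain ⟨bm, b0, bC, beq, bmod⟩ := hd b (by omega)
  obtain ⟨ai, -, asq⟩ := pw_mom μ h a
  obtain ⟨bi, -, bsq⟩ := pw_mom μ h b
  have aab := pw_abs μ h a
  have bab := pw_abs μ h b
  set c := fun z => ∫ u, d b (z - u) ∂(pw μ a) with hc
  have hc0 : ∀ z, 0 ≤ c z := fun z => integral_nonneg fun u => b0 _
  have hcm : Measurable c := by
    have : StronglyMeasurable (Function.uncurry fun z u : ℝ => d b (z - u)) := by
      apply Measurable.stronglyMeasurable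
      change Measurable fun q : ℝ × ℝ => d b (q.1 - q.2)
      fun_prop
    exact this.integral_prod_right.measurable
  have hconv := conv_dens (pw μ a) (pw μ b) (d b) bm b0 _ bC beq
  rw [pw_add, hsum] at hconv
  have hmul := conv_dens_mul (pw μ a) (pw μ b) (d a) (d b) am a0 aeq bm b0 _ bC beq ai
  have hsq := conv_dens_sq (pw μ a) (pw μ b) (d a) (d b) am a0 _ aC aeq bm b0 _ bC beq ai bi
  have hA : (0:ℝ) < a := by positivity
  have hBB : (0:ℝ) < b := by exact_mod_cast (by omega : 0 < b)
  have hab' : (a:ℝ) ≤ b := by exact_mod_cast hab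
  have hb2' : (b:ℝ) ≤ 2 * a := by exact_mod_cast hb2
  have hkb' : (k:ℝ) ≤ 2 * b := by exact_mod_cast hkb
  have hbk' : (b:ℝ) ≤ k := by exact_mod_cast hbk
  have hK : (0:ℝ) < k := by positivity
  set sa := Real.sqrt a with hsa
  set sb := Real.sqrt b with hsb
  set sk := Real.sqrt k with hsk
  have sa0 : 0 < sa := by positivity
  have sb0 : 0 < sb := by positivity
  have sk0 : 0 < sk := by positivity
  have sa2 : sa ^ 2 = a := Real.sq_sqrt hA.le
  have sb2 : sb ^ 2 = b := Real.sq_sqrt hBB.le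
  have sk2 : sk ^ 2 = k := Real.sq_sqrt hK.le
  have sab : sa ≤ sb := Real.sqrt_le_sqrt hab'
  have sba : sb ≤ 2 * sa := by nlinarith
  have sbk : sb ≤ sk := Real.sqrt_le_sqrt hbk'
  have skb : 2 * sk ≤ 3 * sb := by nlinarith
  have aabs : ∀ x, |d a x| ≤ C / sa := fun x => by rw [abs_of_nonneg (a0 x)]; exact aC x
  have babs : ∀ x, |d b x| ≤ C / sb := fun x => by rw [abs_of_nonneg (b0 x)]; exact bC x
  have hgeq : ∀ z, max z 0 * c z = max (z * c z) 0 := by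
    intro z
    rw [max_mul_of_nonneg _ _ (hc0 z), zero_mul]
  have hzc : ∀ z, |z * c z| ≤ 6 * C := by
    intro z
    rw [hc]; beta_reduce
    rw [hmul z]
    refine (abs_add_le _ _).trans ?_
    have t1 := abs_int_le (pw μ a) (C / sb) sa (fun u => d b (z - u)) (by positivity) (fun u => babs _) ai aab
    have t2 := abs_int_le (pw μ b) (C / sa) sb (fun u => d a (z - u)) (by positivity) (fun u => aabs _) bi bab
    have t3 : C / sb * sa ≤ C := by rw [div_mul_eq_mul_div, div_le_iff₀ sb0]; gcongr
    have t4 : C / sa * sb ≤ 2 * C := by rw [div_mul_eq_mul_div, div_le_iff₀ sa0]; nlinarith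
    linarith
  refine ⟨(by fun_prop : Measurable fun z => max z 0 * c z), fun z => mul_nonneg (le_max_right _ _) (hc0 z), fun z => ?_, fun z => ?_,
    Dm_dens _ c hcm hc0 hconv, fun hk4 z z' => ?_⟩
  · change max z 0 * c z ≤ _
    rw [hgeq]
    exact max_le ((le_abs_self _).trans (hzc z)) (by positivity)
  · change max z 0 * c z * |z| ≤ _
    have t1 : max z 0 * c z * |z| ≤ z ^ 2 * c z := by
      have : max z 0 ≤ |z| := max_le (le_abs_self _) (abs_nonneg _)
      calc _ ≤ |z| * c z * |z| := by gcongr; exact hc0 z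
        _ = z ^ 2 * c z := by rw [← sq_abs z]; ring
    refine t1.trans ((hsq z).trans ?_)
    rw [asq, bsq]
    have t3 : C / sb * a ≤ C * sk := by
      rw [div_mul_eq_mul_div, div_le_iff₀ sb0, mul_assoc]; gcongr; nlinarith
    have t4 : C / sa * b ≤ 2 * C * sk := by
      rw [div_mul_eq_mul_div, div_le_iff₀ sa0, mul_comm 2 C, mul_assoc, mul_assoc]; gcongr; nlinarith
    linarith
  · change |max z 0 * c z - max z' 0 * c z'| ≤ _
    rw [hgeq, hgeq]
    refine (abs_max_sub_max_le_abs _ _ _).trans ?_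
    rw [hc]; beta_reduce
    rw [hmul z, hmul z', add_sub_add_comm, mul_int_sub (pw μ a) _ (d b) bm babs ai,
      mul_int_sub (pw μ b) _ (d a) am aabs bi]
    refine (abs_add_le _ _).trans ?_
    set D := |z - z'| with hD
    have hD0 : 0 ≤ D := abs_nonneg _
    have t1 := abs_int_le (pw μ a) (C * (D + 1) / b) sa (fun u => d b (z - u) - d b (z' - u)) (by positivity)
      (fun u => by
        have := bmod (by omega) (z - u) (z' - u)
        rwa [sub_sub_sub_cancel_right] at this) ai aab
    have t2 := abs_int_le (pw μ b) (C * (D + 1) / a) sb (fun u => d a (z - u) - d a (z' - u)) (by positivity)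
      (fun u => by
        have := amod (by omega) (z - u) (z' - u)
        rwa [sub_sub_sub_cancel_right] at this) bi bab
    beta_reduce at t1 t2
    have hE : 0 < C * (D + 1) := by positivity
    set E := C * (D + 1) with hEd
    have t3 : E / b * sa ≤ (3 / 2) * E / sk := by
      rw [div_mul_eq_mul_div, div_le_div_iff₀ hBB sk0]
      have h1 : sa * sk ≤ sb * (3 / 2 * sb) := by gcongr; linarith
      have h2 : sa * sk ≤ 3 / 2 * b := by rw [← sb2]; linarith
      have := mul_le_mul_of_nonneg_left h2 hE.le
      linarith
    have t4 : E / a * sb ≤ 3 * E / sk := by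
      rw [div_mul_eq_mul_div, div_le_div_iff₀ hA sk0]
      have h1 : sb * sk ≤ sb * (3 / 2 * sb) := by gcongr; linarith
      have h2 : sb * (3 / 2 * sb) = 3 / 2 * b := by rw [← sb2]; ring
      have := mul_le_mul_of_nonneg_left (show sb * sk ≤ 3 * a by linarith) hE.le
      linarith
    have t5 : (3 / 2) * E / sk + 3 * E / sk ≤ 6 * C * (D + 1) / sk := by
      rw [← add_div]; gcongr; linarith
    linarith

end

lemma conv_dens_l (ν τ : Measure ℝ) [SFinite ν] [SFinite τ] (g : ℝ → ℝ) (hg : Measurable g)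
    (hτ : τ = volume.withDensity (fun x => ENNReal.ofReal (g x))) :
    τ.conv ν = volume.withDensity (fun z => ∫⁻ u, ENNReal.ofReal (g (z - u)) ∂ν) := by
  ext s hs
  rw [withDensity_apply _ hs, lintegral_lintegral_swap (by fun_prop), ← lintegral_indicator_one hs,
    Measure.lintegral_conv (measurable_one.indicator hs), lintegral_lintegral_swap]
  swap
  · exact ((measurable_one.indicator hs).comp (by fun_prop : Measurable fun q : ℝ × ℝ => q.1 + q.2)).aemeasurable
  refine lintegral_congr fun u => ?_
  have hm : Measurable fun y : ℝ => s.indicator (1 : ℝ → ℝ≥0∞) (y + u) :=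
    (measurable_one.indicator hs).comp (by fun_prop : Measurable fun y : ℝ => y + u)
  rw [hτ, lintegral_withDensity_eq_lintegral_mul _ (by fun_prop) hm, ← lintegral_indicator hs, ← lintegral_add_right_eq_self (s.indicator fun x => ENNReal.ofReal (g (x - u))) u]
  refine lintegral_congr fun w => ?_
  by_cases hw : w + u ∈ s <;> simp [indicator, hw]

structure Setup (μ : Measure ℝ) (p : ℝ → ℝ) (g : ℕ → ℝ → ℝ) (M C : ℝ) : Prop where
  mom : Mom μ
  hp : Measurable p
  hp0 : ∀ x, 0 ≤ p x
  hpM : ∀ x, p x ≤ M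
  hμ : μ = volume.withDensity (fun x => ENNReal.ofReal (p x))
  hC : 0 < C
  hM : 0 ≤ M
  g1 : g 1 = fun z => max z 0 * p z
  gm : ∀ k, 1 ≤ k → Measurable (g k)
  g0 : ∀ k, 1 ≤ k → ∀ z, 0 ≤ g k z
  gd : ∀ k, 1 ≤ k → Dm (pw μ k) = volume.withDensity (fun z => ENNReal.ofReal (g k z))
  gC : ∀ k, 2 ≤ k → ∀ z, g k z ≤ C
  gz : ∀ k, 2 ≤ k → ∀ z, g k z * |z| ≤ C * Real.sqrt k
  gl : ∀ k, 4 ≤ k → ∀ z z', |g k z - g k z'| ≤ C * (|z - z'| + 1) / Real.sqrt k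
  hc : ∀ n m : ℕ, 1 ≤ m → m ≤ n → ∀ u, (Hm μ n).real (Icc u (u + Real.sqrt m)) ≤ C * ((m:ℝ)/n)^(1/8:ℝ)
  hpos : ∫⁻ x, ENNReal.ofReal x ∂μ ≠ ⊤

lemma setup_exists (μ : Measure ℝ) [IsProbabilityMeasure μ] (h : Mom μ) (p : ℝ → ℝ) (hp : Measurable p) (hp0 : ∀ x, 0 ≤ p x) (M : ℝ)
    (hpM : ∀ x, p x ≤ M) (hμ : μ = volume.withDensity (fun x => ENNReal.ofReal (p x))) :
    ∃ g C, Setup μ p g M C := by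
  obtain ⟨C1, hC1, d, hd⟩ := dens_all μ h p hp hp0 M hpM hμ
  obtain ⟨C2, hC2, g, hg⟩ := g_all μ h p hp hp0 M hpM hμ
  obtain ⟨C3, hC3, hc⟩ := conc μ (hclt_of_mom μ h) C1 hC1.le (fun k hk s hs => by
    obtain ⟨h1, h2, h3, h4, -⟩ := hd k hk
    rw [h4, withDensity_apply _ hs, ← setLIntegral_const]
    exact lintegral_mono fun x => ENNReal.ofReal_le_ofReal (h3 x))
  have e1 : ∀ k, 2 ≤ k → Function.update g 1 (fun z => max z 0 * p z) k = g k := fun k hk => by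
    rw [Function.update_of_ne]; omega
  refine ⟨Function.update g 1 (fun z => max z 0 * p z), max C2 C3, ?_⟩
  have hl : C2 ≤ max C2 C3 := le_max_left _ _
  constructor
  · exact h
  · exact hp
  · exact hp0
  · exact hpM
  · exact hμ
  · positivity
  · exact (hp0 0).trans (hpM 0)
  · simp
  · intro k hk
    rcases hk.eq_or_lt with rfl | hk
    · simp only [Function.update_self]; fun_prop
    · rw [e1 k hk]; exact (hg k hk).1
  · intro k hk
    rcases hk.eq_or_lt with rfl | hk
    · simp only [Function.update_self]; exact fun z => mul_nonneg (le_max_right _ _) (hp0 _)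
    · rw [e1 k hk]; exact (hg k hk).2.1
  · intro k hk
    rcases hk.eq_or_lt with rfl | hk
    · simp only [Function.update_self]
      exact Dm_dens _ p hp hp0 ((pw_one μ).trans hμ)
    · rw [e1 k hk]; exact (hg k hk).2.2.2.2.1
  · intro k hk z
    rw [e1 k hk]; exact ((hg k hk).2.2.1 z).trans hl
  · intro k hk z
    rw [e1 k hk]; refine ((hg k hk).2.2.2.1 z).trans ?_
    gcongr
  · intro k hk z z'
    rw [e1 k (by omega)]
    refine ((hg k (by omega)).2.2.2.2.2 hk z z').trans ?_
    gcongr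
  · intro n m hm hmn u
    refine (hc n m hm hmn u).trans ?_
    gcongr
    exact le_max_right _ _
  · have := (int_of_sq μ h.i2).lintegral_lt_top
    exact this.ne

section
variable {μ : Measure ℝ} [IsProbabilityMeasure μ] {p : ℝ → ℝ} {g : ℕ → ℝ → ℝ} {M C : ℝ} 

noncomputable def Lf (μ : Measure ℝ) (g : ℕ → ℝ → ℝ) (n : ℕ) (y : ℝ) : ℝ :=
  (∫ u in Ioi 0, g 1 (y - u) ∂(Hm μ n)) +
    ∑ i ∈ Finset.range n, (1 / ((i:ℝ) + 2)) * ∫ u, g (i + 2) (y - u) ∂(Hm μ (n - (i + 1)))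

lemma g1_int (S : Setup μ p g M C) (n : ℕ) (y : ℝ) : Integrable (fun u => g 1 (y - u)) (Hm μ n) := by
  refine Integrable.of_bound (C := max y 0 * M) (shift_asm _ (S.gm 1 le_rfl) y _) ?_
  filter_upwards [Hm_ae_nonneg μ n] with u hu
  rw [Real.norm_of_nonneg (S.g0 1 le_rfl _), S.g1]
  have : max (y - u) 0 ≤ max y 0 := max_le_max (by linarith) le_rfl
  exact mul_le_mul this (S.hpM _) (S.hp0 _) (le_max_right _ _)

lemma gk_int (S : Setup μ p g M C) (n k : ℕ) (hk : 2 ≤ k) (y : ℝ) : Integrable (fun u => g k (y - u)) (Hm μ n) := by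
  refine Integrable.of_bound (C := C) (shift_asm _ (S.gm k (by omega)) y _) (ae_of_all _ fun u => ?_)
  rw [Real.norm_of_nonneg (S.g0 k (by omega) _)]
  exact S.gC k hk _

lemma Lf_nonneg (S : Setup μ p g M C) (n : ℕ) (y : ℝ) : 0 ≤ Lf μ g n y := by
  refine add_nonneg (integral_nonneg fun u => S.g0 1 le_rfl _) (Finset.sum_nonneg fun i _ => mul_nonneg (by positivity) (integral_nonneg fun u => S.g0 _ (by omega) _))

lemma g1_split (S : Setup μ p g M C) (n : ℕ) (y : ℝ) : ∫ u, g 1 (y - u) ∂(Hm μ n) =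
    (Hm μ n).real {0} * (max y 0 * p y) + ∫ u in Ioi 0, g 1 (y - u) ∂(Hm μ n) := by
  have hi := g1_int S n y
  have e : Hm μ n = (Hm μ n).restrict ({0} ∪ Ioi 0) := by
    symm
    rw [Measure.restrict_eq_self_of_ae_mem]
    filter_upwards [Hm_ae_nonneg μ n] with u hu
    rcases hu.eq_or_lt with rfl | hu
    · simp
    · right; exact hu
  conv_lhs => rw [e]
  rw [setIntegral_union (by simp) measurableSet_Ioi hi.integrableOn hi.integrableOn]
  congr 1
  rw [Measure.restrict_singleton, integral_smul_measure, integral_dirac, S.g1]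
  simp [Measure.real]

lemma Dm_Hm (S : Setup μ p g M C) (n : ℕ) :
    Dm (Hm μ (n + 1)) = volume.withDensity (fun y => ENNReal.ofReal
      ((Hm μ n).real {0} * (max y 0 * p y) + Lf μ g n y)) := by
  have key : ∀ y, ENNReal.ofReal ((Hm μ n).real {0} * (max y 0 * p y) + Lf μ g n y) =
      ∑ ij ∈ Finset.HasAntidiagonal.antidiagonal n, ((ij.1 + 1 : ℝ≥0∞)⁻¹) * ∫⁻ u, ENNReal.ofReal (g (ij.1 + 1) (y - u)) ∂(Hm μ ij.2) := by
    intro y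
    rw [Finset.Nat.sum_antidiagonal_eq_sum_range_succ_mk, Finset.sum_range_succ', Lf, ← add_assoc, ← g1_split S n y,
      ENNReal.ofReal_add (integral_nonneg fun u => S.g0 1 le_rfl _) (Finset.sum_nonneg fun i _ => mul_nonneg (by positivity) (integral_nonneg fun u => S.g0 _ (by omega) _)), add_comm]
    congr 1
    · rw [ENNReal.ofReal_sum_of_nonneg fun i _ => mul_nonneg (by positivity) (integral_nonneg fun u => S.g0 _ (by omega) _)]
      refine Finset.sum_congr rfl fun i _ => ?_
      rw [ENNReal.ofReal_mul (by positivity), ofReal_integral_eq_lintegral_ofReal (gk_int S _ _ (by omega) y) (ae_of_all _ fun u => S.g0 _ (by omega) _)]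
      congr 1
      rw [one_div, ENNReal.ofReal_inv_of_pos (by positivity)]
      congr 1
      rw [ENNReal.ofReal_add (by positivity) (by norm_num)]
      push_cast
      rw [ENNReal.ofReal_natCast, add_assoc]
      norm_num
    · rw [ofReal_integral_eq_lintegral_ofReal (g1_int S n y) (ae_of_all _ fun u => S.g0 _ le_rfl _)]
      simp
  simp only [key]
  rw [spitzer_two μ S.hpos n]
  ext s hs
  have hm : ∀ k, 1 ≤ k → ∀ j, Measurable fun y => ∫⁻ u, ENNReal.ofReal (g k (y - u)) ∂(Hm μ j) := by
    intro k hk j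
    have := S.gm k hk
    exact Measurable.lintegral_prod_right' (f := fun q : ℝ × ℝ => ENNReal.ofReal (g k (q.1 - q.2))) (by fun_prop)
  rw [withDensity_apply _ hs, lintegral_finsetSum _ fun ij _ => (hm _ (by omega) _).const_mul _, Measure.finset_sum_apply]
  refine Finset.sum_congr rfl fun ij _ => ?_
  haveI := Dm_sfin (pw μ (ij.1 + 1))
  rw [conv_dens_l _ _ _ (S.gm (ij.1 + 1) (by omega)) (S.gd _ (by omega)), lintegral_const_mul _ (hm _ (by omega) _),
    Measure.smul_apply, withDensity_apply _ hs, smul_eq_mul]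

end

section
variable {μ : Measure ℝ} [IsProbabilityMeasure μ] {p : ℝ → ℝ} {g : ℕ → ℝ → ℝ} {M C : ℝ} 

lemma sq_dens (S : Setup μ p g M C) : Integrable (fun w => w ^ 2 * p w) ∧ ∫ w, w ^ 2 * p w = 1 := by
  constructor
  · have := S.mom.i2
    rw [S.hμ, integrable_withDensity_iff_integrable_smul' (by have := S.hp; fun_prop) (ae_of_all _ fun x => by finiteness)] at this
    refine this.congr (ae_of_all _ fun x => ?_)
    simp [ENNReal.toReal_ofReal (S.hp0 _), mul_comm]
  · rw [← S.mom.m2, int_dens μ p S.hp S.hp0 S.hμ]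
    congr 1; ext w; ring

lemma Hm_restrict_le (S : Setup μ p g M C) (n : ℕ) :
    (Hm μ (n + 1)).restrict (Ioi 0) ≤ (ENNReal.ofReal M) • volume := by
  rw [Measure.le_iff]
  intro s hs
  rw [Measure.restrict_apply hs, Measure.smul_apply, smul_eq_mul]
  refine (Hm_dens μ n (ENNReal.ofReal M) (fun s hs => ?_) _ (hs.inter measurableSet_Ioi) inter_subset_right).trans ?_
  · nth_rewrite 1 [S.hμ]
    rw [withDensity_apply _ hs, ← setLIntegral_const]
    exact lintegral_mono fun x => ENNReal.ofReal_le_ofReal (S.hpM x)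
  · gcongr; exact inter_subset_left

lemma T1_bound (S : Setup μ p g M C) (n m : ℕ) (hm : 1 ≤ m) (hmn : m ≤ n) (y : ℝ) :
    ∫ u in Ioi 0, g 1 (y - u) ∂(Hm μ n) ≤ Real.sqrt m * M * (C * ((m:ℝ)/n)^(1/8:ℝ)) + M / Real.sqrt m := by
  obtain ⟨n, rfl⟩ : ∃ k, n = k + 1 := ⟨n - 1, by omega⟩
  have hA : 0 < Real.sqrt m := by positivity
  set A := Real.sqrt m
  have hM := S.hM
  obtain ⟨hi, he⟩ := sq_dens S
  have hle := Hm_restrict_le S n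
  have i1 : Integrable (fun u => (y - u) ^ 2 * p (y - u)) (ENNReal.ofReal M • (volume : Measure ℝ)) :=
    (hi.comp_sub_left y).smul_measure (by finiteness)
  have i2 : Integrable (fun u => (y - u) ^ 2 * p (y - u)) ((Hm μ (n + 1)).restrict (Ioi 0)) := i1.mono_measure hle
  have i3 : Integrable ((Icc (y - A) (y - A + A)).indicator fun _ => A * M) (Hm μ (n + 1)) :=
    (integrable_const _).indicator measurableSet_Icc
  calc ∫ u in Ioi 0, g 1 (y - u) ∂(Hm μ (n + 1)) 
      ≤ ∫ u in Ioi 0, (((Icc (y - A) (y - A + A)).indicator (fun _ => A * M) u) + ((y - u) ^ 2 * p (y - u)) * A⁻¹) ∂(Hm μ (n + 1)) := by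
        refine integral_mono (g1_int S _ y).integrableOn (i3.integrableOn.add (i2.mul_const _)) fun u => ?_
        simp only [S.g1]
        have hq : 0 ≤ (y - u) ^ 2 * p (y - u) * A⁻¹ := mul_nonneg (mul_nonneg (sq_nonneg _) (S.hp0 _)) (by positivity)
        have hind : 0 ≤ (Icc (y - A) (y - A + A)).indicator (fun _ => A * M) u := indicator_nonneg (fun _ _ => by positivity) _
        rcases le_or_gt (y - u) 0 with h1 | h1
        · rw [max_eq_right h1]; linarith
        · rw [max_eq_left h1.le]
          rcases le_or_gt (y - u) A with h2 | h2
          · rw [indicator_of_mem (by constructor <;> linarith)]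
            have : (y - u) * p (y - u) ≤ A * M := mul_le_mul h2 (S.hpM _) (S.hp0 _) hA.le
            linarith
          · have : (y - u) * p (y - u) ≤ (y - u) ^ 2 * p (y - u) * A⁻¹ := by
              rw [← div_eq_mul_inv, le_div_iff₀ hA, sq]
              have : (y - u) * p (y - u) * A ≤ (y - u) * p (y - u) * (y - u) := 
                mul_le_mul_of_nonneg_left h2.le (mul_nonneg h1.le (S.hp0 _))
              linarith
            linarith
    _ = (∫ u in Ioi 0, ((Icc (y - A) (y - A + A)).indicator (fun _ => A * M) u) ∂(Hm μ (n + 1))) + (∫ u in Ioi 0, ((y - u) ^ 2 * p (y - u)) ∂(Hm μ (n + 1))) * A⁻¹ := by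
        rw [integral_add i3.integrableOn (i2.mul_const _), integral_mul_const]
    _ ≤ _ := by
        gcongr ?_ + ?_
        · refine (setIntegral_le_integral i3 (ae_of_all _ fun u => indicator_nonneg (fun _ _ => by positivity) _)).trans ?_
          rw [integral_indicator_const _ measurableSet_Icc, smul_eq_mul, mul_comm]
          gcongr
          exact S.hc (n + 1) m hm hmn _
        · rw [div_eq_mul_inv]
          gcongr
          refine (integral_mono_measure hle (ae_of_all _ fun u => mul_nonneg (sq_nonneg _) (S.hp0 _)) i1).trans ?_
          rw [integral_smul_measure, integral_sub_left_eq_self (fun w => w ^ 2 * p w) _ y, he]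
          simp [ENNReal.toReal_ofReal hM]

lemma T1_small (S : Setup μ p g M C) (ε : ℝ) (hε : 0 < ε) : ∃ n0 : ℕ, ∀ n ≥ n0, ∀ y,
    ∫ u in Ioi 0, g 1 (y - u) ∂(Hm μ n) ≤ ε := by
  have hM := S.hM
  have t1 : Tendsto (fun m : ℕ => M / Real.sqrt m) atTop (nhds 0) :=
    tendsto_const_nhds.div_atTop (Real.tendsto_sqrt_atTop.comp tendsto_natCast_atTop_atTop)
  obtain ⟨m, hm1, hm⟩ := ((eventually_ge_atTop 1).and (t1.eventually (gt_mem_nhds (half_pos hε)))).exists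
  have t2 : Tendsto (fun n : ℕ => Real.sqrt m * M * (C * ((m:ℝ)/n)^(1/8:ℝ))) atTop (nhds (Real.sqrt m * M * (C * (0:ℝ)^(1/8:ℝ)))) := by
    have t3 : Tendsto (fun n : ℕ => (m:ℝ) / n) atTop (nhds 0) := tendsto_const_nhds.div_atTop tendsto_natCast_atTop_atTop
    exact ((t3.rpow_const (Or.inr (by norm_num))).const_mul _).const_mul _
  rw [Real.zero_rpow (by norm_num), mul_zero, mul_zero] at t2
  obtain ⟨n0, hn0⟩ := eventually_atTop.1 ((eventually_ge_atTop m).and (t2.eventually (gt_mem_nhds (half_pos hε))))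
  refine ⟨n0, fun n hn y => ?_⟩
  obtain ⟨h1, h2⟩ := hn0 n hn
  have := T1_bound S n m hm1 h1 y
  linarith

lemma hc' (S : Setup μ p g M C) (n m : ℕ) (hm : 1 ≤ m) (hn : 1 ≤ n) (u : ℝ) :
    (Hm μ n).real (Icc u (u + Real.sqrt m)) ≤ (C + 1) * ((m:ℝ)/n)^(1/8:ℝ) := by
  have hC := S.hC
  rcases le_or_gt m n with h | h
  · refine (S.hc n m hm h u).trans ?_
    gcongr; linarith
  · have h1 : (1:ℝ) ≤ (m:ℝ)/n := by
      rw [le_div_iff₀ (by positivity)]; simp; exact_mod_cast h.le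
    have := Real.one_le_rpow h1 (by norm_num : (0:ℝ) ≤ 1/8)
    have h2 : (Hm μ n).real (Icc u (u + Real.sqrt m)) ≤ 1 := measureReal_le_one
    nlinarith

lemma gk_small (S : Setup μ p g M C) (n k : ℕ) (hk : 2 ≤ k) (hkn : 2 * k ≤ n) (y : ℝ) :
    ∫ u, g k (y - u) ∂(Hm μ (n - k)) ≤ (3 * C * (C + 1) + C) * ((k:ℝ)/n)^(1/16:ℝ) := by
  have hC := S.hC
  have hkR : (0:ℝ) < k := by positivity
  have hnR : (0:ℝ) < n := by have : 0 < n := by omega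
                             positivity
  set r : ℝ := (k:ℝ)/n with hr
  have hr0 : 0 < r := by positivity
  have hr1 : r ≤ 1 := by rw [hr, div_le_one hnR]; exact_mod_cast (by omega : k ≤ n)
  set J : ℝ := r ^ (-(1/4) : ℝ) with hJ
  have hJ1 : 1 ≤ J := by rw [hJ]; exact Real.one_le_rpow_of_pos_of_le_one_of_nonpos hr0 hr1 (by norm_num)
  set m := ⌈4 * J ^ 2 * k⌉₊ with hm
  have hm4 : 4 * J ^ 2 * k ≤ m := Nat.le_ceil _
  have hJ2 : 1 ≤ J ^ 2 := by nlinarith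
  have hJk : 1 ≤ J ^ 2 * k := by
    have : (2:ℝ) ≤ k := by exact_mod_cast hk
    nlinarith
  have hm5 : (m:ℝ) ≤ 5 * (J ^ 2 * k) := by
    have := (Nat.ceil_lt_add_one (by positivity : 0 ≤ 4 * J ^ 2 * k)).le
    rw [← hm] at this
    linarith
  have hm1 : 1 ≤ m := by
    have : (1:ℝ) ≤ m := by nlinarith
    exact_mod_cast this
  have hms : 2 * (J * Real.sqrt k) ≤ Real.sqrt m := by
    apply Real.le_sqrt_of_sq_le
    have : (2 * (J * Real.sqrt k)) ^ 2 = 4 * J ^ 2 * (Real.sqrt k) ^ 2 := by ring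
    rw [this, Real.sq_sqrt hkR.le]; exact hm4
  have hj1 : 1 ≤ n - k := by omega
  have hjR : (n:ℝ) / 2 ≤ ((n - k : ℕ) : ℝ) := by
    rw [Nat.cast_sub (by omega)]
    have : (2 * k : ℝ) ≤ n := by exact_mod_cast hkn
    linarith
  set j := n - k
  have hr4 : J ^ 2 * r = r ^ (1/2:ℝ) := by
    rw [hJ, ← Real.rpow_natCast, ← Real.rpow_mul hr0.le]
    nth_rewrite 2 [← Real.rpow_one r]
    rw [← Real.rpow_add hr0]; norm_num
  have hmj : ((m:ℝ)/j)^(1/8:ℝ) ≤ 3 * r ^ (1/16:ℝ) := by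
    calc ((m:ℝ)/j)^(1/8:ℝ) ≤ (10 * r ^ (1/2:ℝ)) ^ (1/8:ℝ) := by
          gcongr
          rw [← hr4, div_le_iff₀ (by linarith), hr]
          calc (m:ℝ) ≤ 5 * (J ^ 2 * k) := hm5
            _ = 10 * (J ^ 2 * (k / n)) * (n / 2) := by field_simp; norm_num
            _ ≤ _ := by gcongr
      _ = (10:ℝ) ^ (1/8:ℝ) * r ^ (1/16:ℝ) := by
          rw [Real.mul_rpow (by norm_num) (by positivity), ← Real.rpow_mul hr0.le]; norm_num
      _ ≤ _ := by
          gcongr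
          have : (10:ℝ) ^ (1/8:ℝ) ≤ (3 ^ (8:ℝ)) ^ (1/8:ℝ) := by gcongr; norm_num
          rwa [← Real.rpow_mul (by norm_num), show (8:ℝ) * (1/8) = 1 by norm_num, Real.rpow_one] at this
  have hJinv : J⁻¹ ≤ r ^ (1/16:ℝ) := by
    rw [hJ, ← Real.rpow_neg hr0.le]
    exact Real.rpow_le_rpow_of_exponent_ge hr0 hr1 (by norm_num)
  set a := y - J * Real.sqrt k
  have i3 : Integrable ((Icc a (a + Real.sqrt m)).indicator fun _ => C) (Hm μ j) :=
    (integrable_const _).indicator measurableSet_Icc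
  calc ∫ u, g k (y - u) ∂(Hm μ j) ≤ ∫ u, ((Icc a (a + Real.sqrt m)).indicator (fun _ => C) u + C * J⁻¹) ∂(Hm μ j) := by
        refine integral_mono (gk_int S _ k hk y) (i3.add (integrable_const _)) fun u => ?_
        by_cases hu : u ∈ Icc a (a + Real.sqrt m)
        · simp only [indicator_of_mem hu]
          have := S.gC k hk (y - u)
          have : 0 ≤ C * J⁻¹ := by positivity
          linarith
        · simp only [indicator_of_notMem hu]
          rw [zero_add]
          have hw : J * Real.sqrt k < |y - u| := by
            by_contra hcon
            push Not at hcon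
            rw [abs_le] at hcon
            exact hu ⟨by linarith [hcon.2], by linarith [hcon.1]⟩
          have h1 := S.gz k hk (y - u)
          have h2 : g k (y - u) * (J * Real.sqrt k) ≤ C * Real.sqrt k :=
            (mul_le_mul_of_nonneg_left hw.le (S.g0 k (by omega) _)).trans h1
          have hsk : 0 < Real.sqrt k := by positivity
          rw [← mul_assoc] at h2
          have := le_of_mul_le_mul_right h2 hsk
          rw [← div_eq_mul_inv, le_div_iff₀ (by linarith)]
          exact this
    _ = (Hm μ j).real (Icc a (a + Real.sqrt m)) * C + C * J⁻¹ := by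
        rw [integral_add i3 (integrable_const _), integral_indicator_const _ measurableSet_Icc]
        simp
    _ ≤ ((C + 1) * (3 * r ^ (1/16:ℝ))) * C + C * r ^ (1/16:ℝ) := by
        gcongr
        exact (hc' S j m hm1 hj1 a).trans (by gcongr)
    _ = _ := by ring

end

lemma sum_rpow_le (K : ℕ) : ∑ i ∈ Finset.range K, ((i:ℝ) + 1) ^ (1/16 - 1 : ℝ) ≤ 16 * (K:ℝ) ^ (1/16:ℝ) := by
  induction K with
  | zero => simp
  | succ K ih =>
    rw [Finset.sum_range_succ]
    have hK : (0:ℝ) < (K:ℝ) + 1 := by positivity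
    have hb := rpow_one_add_le_one_add_mul_self (s := -1 / ((K:ℝ) + 1)) (by rw [le_div_iff₀ hK]; linarith) (p := 1/16) (by norm_num) (by norm_num)
    have e : (K:ℝ) ^ (1/16:ℝ) = ((K:ℝ) + 1) ^ (1/16:ℝ) * (1 + -1 / ((K:ℝ) + 1)) ^ (1/16:ℝ) := by
      rw [← Real.mul_rpow hK.le]
      · congr 1; field_simp; ring
      · have : 1 + -1 / ((K:ℝ) + 1) = K / (K + 1) := by field_simp; ring
        rw [this]; positivity
    have h2 : (K:ℝ) ^ (1/16:ℝ) ≤ ((K:ℝ) + 1) ^ (1/16:ℝ) * (1 + 1/16 * (-1 / ((K:ℝ) + 1))) := by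
      rw [e]; gcongr
    rw [Real.rpow_sub_one hK.ne']
    have e3 : ((K:ℝ) + 1) ^ (1/16:ℝ) * (1 + 1/16 * (-1 / ((K:ℝ) + 1))) = ((K:ℝ) + 1) ^ (1/16:ℝ) - 1/16 * (((K:ℝ) + 1) ^ (1/16:ℝ) / ((K:ℝ) + 1)) := by
      ring
    push_cast
    linarith

section
variable {μ : Measure ℝ} [IsProbabilityMeasure μ] {p : ℝ → ℝ} {g : ℕ → ℝ → ℝ} {M C : ℝ} 

noncomputable def Lt (μ : Measure ℝ) (g : ℕ → ℝ → ℝ) (δ : ℝ) (n : ℕ) (y : ℝ) : ℝ :=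
    ∑ i ∈ Finset.range n with ¬ (((i:ℕ):ℝ) + 2 ≤ δ * (n + 1)), (1 / ((i:ℝ) + 2)) * ∫ u, g (i + 2) (y - u) ∂(Hm μ (n - (i + 1)))

lemma head_bound (S : Setup μ p g M C) (δ : ℝ) (hδ : 0 < δ) (hδ2 : δ ≤ 1/2) (n : ℕ) (y : ℝ) :
    ∑ i ∈ Finset.range n with (((i:ℕ):ℝ) + 2 ≤ δ * (n + 1)), (1 / ((i:ℝ) + 2)) * ∫ u, g (i + 2) (y - u) ∂(Hm μ (n - (i + 1)))
      ≤ (3 * C * (C + 1) + C) * 16 * δ ^ (1/16:ℝ) := by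
  have hC := S.hC
  have hN : (0:ℝ) < (n:ℝ) + 1 := by positivity
  set B := 3 * C * (C + 1) + C
  have hB : 0 < B := by positivity
  calc _ ≤ ∑ i ∈ Finset.range n with (((i:ℕ):ℝ) + 2 ≤ δ * (n + 1)), B * ((n:ℝ) + 1) ^ (-(1/16):ℝ) * ((i:ℝ) + 1) ^ (1/16 - 1 : ℝ) := by
        refine Finset.sum_le_sum fun i hi => ?_
        rw [Finset.mem_filter, Finset.mem_range] at hi
        have h2 : 2 * (i + 2) ≤ n + 1 := by
          have : 2 * ((i:ℝ) + 2) ≤ n + 1 := by nlinarith [hi.2]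
          exact_mod_cast this
        have := gk_small S (n + 1) (i + 2) (by omega) h2 y
        rw [show n + 1 - (i + 2) = n - (i + 1) by omega] at this
        push_cast at this
        have hi2 : (0:ℝ) < (i:ℝ) + 2 := by positivity
        calc _ ≤ (1 / ((i:ℝ) + 2)) * (B * (((i:ℝ) + 2) / (n + 1)) ^ (1/16:ℝ)) := by gcongr
          _ = B * ((n:ℝ) + 1) ^ (-(1/16):ℝ) * ((i:ℝ) + 2) ^ (1/16 - 1 : ℝ) := by
              rw [Real.div_rpow hi2.le hN.le, Real.rpow_neg hN.le, Real.rpow_sub_one hi2.ne']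
              field_simp
          _ ≤ _ := by
              gcongr ?_ * ?_
              exact Real.rpow_le_rpow_of_nonpos (by positivity) (by linarith) (by norm_num)
    _ ≤ ∑ i ∈ Finset.range ⌊δ * (n + 1)⌋₊, B * ((n:ℝ) + 1) ^ (-(1/16):ℝ) * ((i:ℝ) + 1) ^ (1/16 - 1 : ℝ) := by
        refine Finset.sum_le_sum_of_subset_of_nonneg (fun i hi => ?_) fun i _ _ => by positivity
        rw [Finset.mem_filter, Finset.mem_range] at hi
        rw [Finset.mem_range]
        have : i + 2 ≤ ⌊δ * (n + 1)⌋₊ := Nat.le_floor (by push_cast; exact hi.2)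
        omega
    _ ≤ B * ((n:ℝ) + 1) ^ (-(1/16):ℝ) * (16 * (δ * (n + 1)) ^ (1/16:ℝ)) := by
        rw [← Finset.mul_sum]
        gcongr
        refine (sum_rpow_le _).trans ?_
        gcongr
        exact Nat.floor_le (by positivity)
    _ = _ := by
        rw [Real.mul_rpow hδ.le hN.le, Real.rpow_neg hN.le]
        field_simp

lemma Lf_split (S : Setup μ p g M C) (ε : ℝ) (hε : 0 < ε) : ∃ δ > 0, ∃ n0 : ℕ, ∀ n ≥ n0, ∀ y,
    0 ≤ Lf μ g n y - Lt μ g δ n y ∧ Lf μ g n y - Lt μ g δ n y ≤ ε := by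
  obtain ⟨n0, hn0⟩ := T1_small S (ε / 2) (half_pos hε)
  have t : Tendsto (fun δ : ℝ => (3 * C * (C + 1) + C) * 16 * δ ^ (1/16:ℝ)) (nhdsWithin 0 (Ioi 0)) (nhds ((3 * C * (C + 1) + C) * 16 * (0:ℝ) ^ (1/16:ℝ))) := by
    refine Tendsto.const_mul _ ?_
    exact (tendsto_id.mono_left nhdsWithin_le_nhds).rpow_const (Or.inr (by norm_num))
  rw [Real.zero_rpow (by norm_num), mul_zero] at t
  have e2 : ∀ᶠ δ : ℝ in nhdsWithin 0 (Ioi 0), δ < 1/2 := nhdsWithin_le_nhds (gt_mem_nhds (by norm_num))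
  obtain ⟨δ, ⟨h1, h2⟩, h3⟩ := (((t.eventually (gt_mem_nhds (half_pos hε))).and e2).and self_mem_nhdsWithin).exists
  refine ⟨δ, h3, n0, fun n hn y => ?_⟩
  have hh := head_bound S δ h3 h2.le n y
  have hh0 : 0 ≤ ∑ i ∈ Finset.range n with (((i:ℕ):ℝ) + 2 ≤ δ * (n + 1)), (1 / ((i:ℝ) + 2)) * ∫ u, g (i + 2) (y - u) ∂(Hm μ (n - (i + 1))) :=
    Finset.sum_nonneg fun i _ => mul_nonneg (by positivity) (integral_nonneg fun u => S.g0 _ (by omega) _)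
  have hT := hn0 n hn y
  have hT0 : 0 ≤ ∫ u in Ioi 0, g 1 (y - u) ∂(Hm μ n) := integral_nonneg fun u => S.g0 1 le_rfl _
  have e : Lf μ g n y - Lt μ g δ n y = (∫ u in Ioi 0, g 1 (y - u) ∂(Hm μ n)) + ∑ i ∈ Finset.range n with (((i:ℕ):ℝ) + 2 ≤ δ * (n + 1)), (1 / ((i:ℝ) + 2)) * ∫ u, g (i + 2) (y - u) ∂(Hm μ (n - (i + 1))) := by
    rw [Lf, Lt, ← Finset.sum_filter_add_sum_filter_not (Finset.range n) (fun i => (i:ℝ) + 2 ≤ δ * (n + 1))]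
    ring
  rw [e]
  constructor <;> linarith

lemma tail_sum (δ : ℝ) (hδ : 0 < δ) (n : ℕ) (f : ℕ → ℝ) (B : ℝ) (hB : 0 ≤ B)
    (hf : ∀ i, i < n → δ * (n + 1) < (i:ℝ) + 2 → |f i| ≤ B) :
    |∑ i ∈ Finset.range n with ¬ (((i:ℕ):ℝ) + 2 ≤ δ * (n + 1)), (1 / ((i:ℝ) + 2)) * f i| ≤ B / δ := by
  have hN : (0:ℝ) < (n:ℝ) + 1 := by positivity
  calc _ ≤ ∑ i ∈ Finset.range n with ¬ (((i:ℕ):ℝ) + 2 ≤ δ * (n + 1)), |(1 / ((i:ℝ) + 2)) * f i| := Finset.abs_sum_le_sum_abs _ _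
    _ ≤ ∑ i ∈ Finset.range n with ¬ (((i:ℕ):ℝ) + 2 ≤ δ * (n + 1)), 1 / (δ * (n + 1)) * B := by
        refine Finset.sum_le_sum fun i hi => ?_
        rw [Finset.mem_filter, Finset.mem_range, not_le] at hi
        rw [abs_mul, abs_of_nonneg (by positivity)]
        have := hf i hi.1 hi.2
        gcongr
        exact hi.2.le
    _ ≤ ∑ i ∈ Finset.range n, 1 / (δ * (n + 1)) * B :=
        Finset.sum_le_sum_of_subset_of_nonneg (Finset.filter_subset _ _) fun _ _ _ => by positivity
    _ = n / (n + 1) * (B / δ) := by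
        rw [Finset.sum_const, Finset.card_range, nsmul_eq_mul]
        field_simp
    _ ≤ 1 * (B / δ) := by
        gcongr
        rw [div_le_one hN]; linarith
    _ = _ := one_mul _

lemma Lt_equi (S : Setup μ p g M C) (δ : ℝ) (hδ : 0 < δ) (n : ℕ) (hn : 4 ≤ δ * (n + 1)) (y y' : ℝ) :
    |Lt μ g δ n y - Lt μ g δ n y'| ≤ C * (|y - y'| + 1) / Real.sqrt (δ * (n + 1)) / δ := by
  have hC := S.hC
  rw [Lt, Lt, ← Finset.sum_sub_distrib]
  simp only [← mul_sub]
  refine tail_sum δ hδ n _ _ (by positivity) fun i hi hi2 => ?_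
  have hi4 : 4 ≤ i + 2 := by
    have : (4:ℝ) ≤ (i:ℝ) + 2 := by linarith
    exact_mod_cast this
  rw [← integral_sub (gk_int S _ _ (by omega) _) (gk_int S _ _ (by omega) _), ← Real.norm_eq_abs]
  have := norm_integral_le_of_norm_le_const (μ := Hm μ (n - (i + 1))) (f := fun u => g (i + 2) (y - u) - g (i + 2) (y' - u)) (C := C * (|y - y'| + 1) / Real.sqrt (δ * (n + 1))) (ae_of_all _ fun u => by
    have h1 := S.gl (i + 2) hi4 (y - u) (y' - u)
    rw [sub_sub_sub_cancel_right] at h1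
    rw [Real.norm_eq_abs]
    refine h1.trans ?_
    gcongr
    push_cast; exact hi2.le)
  simpa using this

lemma Lt_decay (S : Setup μ p g M C) (δ : ℝ) (hδ : 0 < δ) (n : ℕ) (x : ℝ) (hx : 0 < x) :
    Lt μ g δ n (Real.sqrt (n + 1) * x) ≤ (C * (64 / x ^ 2) + 2 * C / x) / δ := by
  have hC := S.hC
  refine (le_abs_self _).trans (tail_sum δ hδ n _ _ (by positivity) fun i hi _ => ?_)
  set y := Real.sqrt (n + 1) * x with hy
  have hsN : 0 < Real.sqrt ((n:ℝ) + 1) := by positivity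
  have hy0 : 0 < y := by positivity
  rw [abs_of_nonneg (integral_nonneg fun u => S.g0 _ (by omega) _)]
  have i3 : Integrable ((Ioi (y/2)).indicator fun _ => C) (Hm μ (n - (i+1))) :=
    (integrable_const _).indicator measurableSet_Ioi
  calc ∫ u, g (i + 2) (y - u) ∂(Hm μ (n - (i+1))) ≤ ∫ u, ((Ioi (y/2)).indicator (fun _ => C) u + 2 * C / x) ∂(Hm μ (n - (i + 1))) := by
        refine integral_mono (gk_int S _ _ (by omega) y) (i3.add (integrable_const _)) fun u => ?_
        by_cases hu : u ∈ Ioi (y / 2)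
        · simp only [indicator_of_mem hu]
          have := S.gC (i + 2) (by omega) (y - u)
          have : 0 ≤ 2 * C / x := by positivity
          linarith
        · simp only [indicator_of_notMem hu]
          rw [zero_add]
          have hu' : u ≤ y / 2 := not_lt.1 hu
          have h1 := S.gz (i + 2) (by omega) (y - u)
          have h2 : g (i + 2) (y - u) * (y / 2) ≤ C * Real.sqrt (n + 1) := by
            refine (mul_le_mul_of_nonneg_left ?_ (S.g0 _ (by omega) _)).trans (h1.trans ?_)
            · exact (by linarith : y / 2 ≤ y - u).trans (le_abs_self _)
            · gcongr
              have : i + 2 ≤ n + 1 := by omega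
              exact_mod_cast this
          rw [le_div_iff₀ hx]
          have h3 : g (i + 2) (y - u) * x * Real.sqrt (n + 1) ≤ 2 * C * Real.sqrt (n + 1) := by
            rw [hy] at h2; rw [hy]; linarith
          exact le_of_mul_le_mul_right h3 hsN
    _ = (Hm μ (n - (i + 1))).real (Ioi (y/2)) * C + 2 * C / x := by
        rw [integral_add i3 (integrable_const _), integral_indicator_const _ measurableSet_Ioi]
        simp
    _ ≤ (64 / x ^ 2) * C + 2 * C / x := by
        gcongr
        have h1 : (Hm μ (n - (i + 1))).real (Ioi (y/2)) ≤ (Hm μ (n + 1)).real (Ioi (y/2)) := by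
          have := Hm_Iic_anti μ (show n - (i + 1) ≤ n + 1 by omega) (y / 2)
          have h2 := ENNReal.toReal_mono (by finiteness) this
          have e : ∀ k, (Hm μ k).real (Ioi (y / 2)) = 1 - (Hm μ k).real (Iic (y / 2)) := fun k => by
            rw [← compl_Iic, probReal_compl_eq_one_sub measurableSet_Iic]
          rw [e, e]
          change (Hm μ (n+1)).real _ ≤ (Hm μ _).real _ at h2
          linarith
        have h2 := Hm_tail μ S.mom (n + 1) (by omega) (x / 2) (by positivity)
        push_cast at h2
        rw [show x / 2 * Real.sqrt (n + 1) = y / 2 by rw [hy]; ring] at h2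
        refine h1.trans (h2.trans (le_of_eq ?_))
        field_simp; norm_num
    _ = _ := by ring

noncomputable def Lam (μ : Measure ℝ) (g : ℕ → ℝ → ℝ) (n : ℕ) (x : ℝ) : ℝ := Lf μ g n (Real.sqrt (n + 1) * x)

lemma Lam_equi (S : Setup μ p g M C) (ε : ℝ) (hε : 0 < ε) : ∃ ρ > 0, ∃ n0 : ℕ, ∀ n ≥ n0, ∀ x x' : ℝ,
    |x - x'| ≤ ρ → |Lam μ g n x - Lam μ g n x'| ≤ ε := by
  have hC := S.hC
  obtain ⟨δ, hδ, n0, h0⟩ := Lf_split S (ε / 3) (by positivity)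
  have t : Tendsto (fun n : ℕ => δ * ((n:ℝ) + 1)) atTop atTop :=
    Tendsto.const_mul_atTop hδ (tendsto_atTop_add_const_right _ _ tendsto_natCast_atTop_atTop)
  have t2 : Tendsto (fun n : ℕ => C / Real.sqrt (δ * ((n:ℝ) + 1)) / δ) atTop (nhds (0 / δ)) :=
    (tendsto_const_nhds.div_atTop (Real.tendsto_sqrt_atTop.comp t)).div_const _
  rw [zero_div] at t2
  obtain ⟨n1, hn1⟩ := eventually_atTop.1 ((t.eventually_ge_atTop 4).and (t2.eventually (gt_mem_nhds (by positivity : 0 < ε / 3))))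
  refine ⟨ε / 3 * δ * Real.sqrt δ / C, by positivity, max n0 n1, fun n hn x x' hx => ?_⟩
  obtain ⟨h4, h5⟩ := hn1 n (le_of_max_le_right hn)
  have a1 := h0 n (le_of_max_le_left hn) (Real.sqrt (n + 1) * x)
  have a2 := h0 n (le_of_max_le_left hn) (Real.sqrt (n + 1) * x')
  have a3 := Lt_equi S δ hδ n h4 (Real.sqrt (n + 1) * x) (Real.sqrt (n + 1) * x')
  have hs : 0 < Real.sqrt ((n:ℝ) + 1) := by positivity
  have hsd : 0 < Real.sqrt δ := by positivity
  have a4 : C * (|Real.sqrt (n + 1) * x - Real.sqrt (n + 1) * x'| + 1) / Real.sqrt (δ * (n + 1)) / δ ≤ ε / 3 + ε / 3 := by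
    have e : C * (|Real.sqrt (n + 1) * x - Real.sqrt (n + 1) * x'| + 1) / Real.sqrt (δ * (n + 1)) / δ =
        C * |x - x'| / Real.sqrt δ / δ + C / Real.sqrt (δ * (n + 1)) / δ := by
      rw [← mul_sub, abs_mul, abs_of_pos hs, Real.sqrt_mul hδ.le]
      field_simp
    rw [e]
    have : C * |x - x'| / Real.sqrt δ / δ ≤ ε / 3 := by
      rw [div_div, div_le_iff₀ (by positivity)]
      rw [le_div_iff₀ hC] at hx
      linarith
    linarith
  have a5 := abs_le.1 (a3.trans a4)
  unfold Lam
  rw [abs_le]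
  constructor <;> linarith [a1.1, a1.2, a2.1, a2.2, a5.1, a5.2]

lemma Lam_decay (S : Setup μ p g M C) (ε : ℝ) (hε : 0 < ε) : ∃ A > 0, ∃ n0 : ℕ, ∀ n ≥ n0, ∀ x : ℝ,
    A ≤ x → Lam μ g n x ≤ ε := by
  have hC := S.hC
  obtain ⟨δ, hδ, n0, h0⟩ := Lf_split S (ε / 2) (by positivity)
  have t : Tendsto (fun x : ℝ => (C * (64 / x ^ 2) + 2 * C / x) / δ) atTop (nhds ((C * 0 + 0) / δ)) :=
    (((tendsto_const_nhds.div_atTop (tendsto_pow_atTop (by norm_num))).const_mul _).add (tendsto_const_nhds.div_atTop tendsto_id)).div_const _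
  rw [mul_zero, add_zero, zero_div] at t
  obtain ⟨A, hA⟩ := eventually_atTop.1 ((t.eventually (gt_mem_nhds (half_pos hε))))
  refine ⟨max A 1, by positivity, n0, fun n hn x hx => ?_⟩
  have h1 := hA x (le_of_max_le_left hx)
  have h2 := Lt_decay S δ hδ n x (by linarith [le_of_max_le_right hx])
  have h3 := h0 n hn (Real.sqrt (n + 1) * x)
  unfold Lam
  linarith [h3.2]

end

lemma abs_unif (D : ℕ → ℝ → ℝ)
    (equi : ∀ ε > 0, ∃ ρ > 0, ∃ n0 : ℕ, ∀ n ≥ n0, ∀ x x' : ℝ, |x - x'| ≤ ρ → |D n x - D n x'| ≤ ε)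
    (decay : ∀ ε > 0, ∃ A > 0, ∃ n0 : ℕ, ∀ n ≥ n0, ∀ x : ℝ, A ≤ x → |D n x| ≤ ε)
    (hIntg : ∀ n, ∀ a b : ℝ, 0 < a → a < b → IntervalIntegrable (fun x => D n x / x) volume a b)
    (conv : ∀ a b : ℝ, 0 < a → a < b → Tendsto (fun n => ∫ x in a..b, D n x / x) atTop (nhds 0)) :
    ∀ ε > 0, ∃ n0 : ℕ, ∀ n ≥ n0, ∀ x, 0 < x → |D n x| ≤ ε := by
  have pt : ∀ x, 0 < x → ∀ ε > 0, ∀ᶠ n in atTop, |D n x| ≤ ε := by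
    intro x hx ε hε
    obtain ⟨ρ, hρ, n0, h0⟩ := equi (ε / 2) (by positivity)
    set l := ∫ t in x..(x + ρ), 1 / t with hl
    have hl0 : 0 < l := by
      rw [hl, integral_one_div_of_pos hx (by positivity)]
      apply Real.log_pos
      rw [lt_div_iff₀ hx]; linarith
    have il : IntervalIntegrable (fun t : ℝ => 1 / t) volume x (x + ρ) := by
      refine intervalIntegral.intervalIntegrable_one_div (fun t ht => ?_) continuousOn_id
      rw [uIcc_of_le (by linarith)] at ht
      exact (hx.trans_le ht.1).ne'
    have t := conv x (x + ρ) hx (by linarith)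
    filter_upwards [eventually_ge_atTop n0, t.abs.eventually (gt_mem_nhds (show |(0:ℝ)| < ε / 2 * l by simp; positivity))] with n hn ht
    have e : D n x * l = (∫ t in x..(x + ρ), D n t / t) + ∫ t in x..(x + ρ), (D n x - D n t) * (1 / t) := by
      rw [hl, ← intervalIntegral.integral_const_mul, ← intervalIntegral.integral_add (hIntg n _ _ hx (by linarith))]
      · congr 1; ext t; ring
      · have := (il.const_mul (D n x)).sub (hIntg n _ _ hx (by linarith : x < x + ρ))
        refine this.congr (fun t _ => ?_)
        beta_reduce; ring
    have e2 : |∫ t in x..(x + ρ), (D n x - D n t) * (1 / t)| ≤ ε / 2 * l := by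
      rw [hl, ← intervalIntegral.integral_const_mul, ← Real.norm_eq_abs]
      refine intervalIntegral.norm_integral_le_of_norm_le (by linarith) (ae_of_all _ fun t ht => ?_) (il.const_mul _)
      have ht0 : 0 < t := hx.trans ht.1
      rw [Real.norm_eq_abs, abs_mul, abs_of_pos (by positivity : 0 < 1 / t)]
      gcongr
      refine h0 n hn _ _ ?_
      rw [abs_le]; constructor <;> linarith [ht.1, ht.2]
    have e3 : |D n x| * l ≤ ε * l := by
      rw [← abs_of_pos hl0, ← abs_mul, abs_of_pos hl0, e]
      refine (abs_add_le _ _).trans ?_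
      linarith
    exact le_of_mul_le_mul_right e3 hl0
  intro ε hε
  obtain ⟨ρ, hρ, n0, h0⟩ := equi (ε / 2) (by positivity)
  obtain ⟨A, hA, n1, h1⟩ := decay ε hε
  have hev : ∀ᶠ n in atTop, ∀ j ∈ Finset.range (⌈A / ρ⌉₊ + 1), 0 < j → |D n (j * ρ)| ≤ ε / 2 := by
    rw [Filter.eventually_all_finset]
    intro j _
    rcases Nat.eq_zero_or_pos j with rfl | hj
    · simp
    · filter_upwards [pt (j * ρ) (by positivity) (ε / 2) (by positivity)] with n hn _ using hn
  obtain ⟨n2, h2⟩ := eventually_atTop.1 hev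
  refine ⟨max n0 (max n1 n2), fun n hn x hx => ?_⟩
  simp only [ge_iff_le, max_le_iff] at hn
  rcases le_or_gt A x with hAx | hAx
  · exact h1 n hn.2.1 x hAx
  · have hj := h2 n hn.2.2 ⌈x / ρ⌉₊ (by
      rw [Finset.mem_range, Nat.lt_succ_iff]
      apply Nat.ceil_mono; gcongr) (Nat.ceil_pos.2 (by positivity))
    have c1 : x ≤ ⌈x / ρ⌉₊ * ρ := by
      have := Nat.le_ceil (x / ρ)
      rwa [div_le_iff₀ hρ] at this
    have c2 : ⌈x / ρ⌉₊ * ρ ≤ x + ρ := by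
      have := (Nat.ceil_lt_add_one (by positivity : 0 ≤ x / ρ)).le
      have := mul_le_mul_of_nonneg_right this hρ.le
      rw [add_mul, div_mul_cancel₀ _ hρ.ne', one_mul] at this
      exact this
    have h3 := h0 n hn.1 x (⌈x / ρ⌉₊ * ρ) (by rw [abs_le]; constructor <;> linarith)
    have := abs_add_le (D n x - D n (⌈x / ρ⌉₊ * ρ)) (D n (⌈x / ρ⌉₊ * ρ))
    rw [sub_add_cancel] at this
    linarith

noncomputable def hh (x : ℝ) : ℝ := x * (Real.sqrt (2 / Real.pi) * Real.exp (-x ^ 2 / 2))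

lemma phip_eq (x : ℝ) : Real.sqrt (2 / Real.pi) * Real.exp (-x ^ 2 / 2) = 2 * gaussianPDFReal 0 1 x := by
  rw [gaussianPDFReal]
  have : Real.sqrt (2 / Real.pi) = 2 * (Real.sqrt (2 * Real.pi * (1 : NNReal)))⁻¹ := by
    have hpi := Real.pi_pos
    rw [Real.sqrt_eq_iff_mul_self_eq (by positivity) (by positivity)]
    have h2 : Real.sqrt (2 * Real.pi) * Real.sqrt (2 * Real.pi) = 2 * Real.pi := Real.mul_self_sqrt (by positivity)
    have h3 : 0 < Real.sqrt (2 * Real.pi) := by positivity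
    simp only [NNReal.coe_one, mul_one]
    field_simp
    nlinarith
  rw [this]
  simp only [sub_zero, NNReal.coe_one, mul_one]
  ring

lemma sqrt_pi_le : Real.sqrt (2 / Real.pi) ≤ 1 := by
  rw [Real.sqrt_le_left (by norm_num), one_pow, div_le_one Real.pi_pos]
  linarith [Real.pi_gt_three]

lemma exp_bd (x : ℝ) : (1 + x ^ 2 / 2) * Real.exp (-x ^ 2 / 2) ≤ 1 := by
  have := Real.add_one_le_exp (x ^ 2 / 2)
  calc (1 + x ^ 2 / 2) * Real.exp (-x ^ 2 / 2) ≤ Real.exp (x ^ 2 / 2) * Real.exp (-x ^ 2 / 2) := by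
        gcongr; linarith
    _ = 1 := by rw [← Real.exp_add]; ring_nf; simp

lemma hh_deriv (x : ℝ) : HasDerivAt hh (Real.sqrt (2 / Real.pi) * ((1 - x ^ 2) * Real.exp (-x ^ 2 / 2))) x := by
  have h1 : HasDerivAt (fun x : ℝ => -x ^ 2 / 2) (-x) x := by
    have := ((hasDerivAt_pow 2 x).neg).div_const 2
    refine this.congr_deriv ?_
    simp
    ring
  have := (hasDerivAt_id x).mul (h1.exp.const_mul (Real.sqrt (2 / Real.pi)))
  refine this.congr_deriv ?_
  simp only [id]; ring

lemma hh_lip (x x' : ℝ) : |hh x - hh x'| ≤ 2 * |x - x'| := by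
  have := Convex.norm_image_sub_le_of_norm_hasDerivWithin_le (f := hh) (s := univ) (C := 2) (x := x') (y := x)
    (fun x _ => (hh_deriv x).hasDerivWithinAt) (fun x _ => by
      have h0 := Real.exp_pos (-x ^ 2 / 2)
      have h2 := exp_bd x
      have hs := sqrt_pi_le
      have hs0 := Real.sqrt_nonneg (2 / Real.pi)
      rw [Real.norm_eq_abs, abs_mul, abs_of_nonneg hs0]
      have h4 : |(1 - x ^ 2) * Real.exp (-x ^ 2 / 2)| ≤ 2 := by
        rw [abs_le]
        have h5 : 0 ≤ x ^ 2 * Real.exp (-x ^ 2 / 2) := by positivity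
        constructor <;> linarith
      exact (mul_le_mul hs h4 (abs_nonneg _) zero_le_one).trans (by norm_num)) convex_univ (mem_univ _) (mem_univ _)
  exact this

lemma hh_nonneg (x : ℝ) (hx : 0 ≤ x) : 0 ≤ hh x := by unfold hh; positivity

lemma hh_decay (x : ℝ) (hx : 0 < x) : hh x ≤ 2 / x := by
  rw [le_div_iff₀ hx, hh]
  have h2 := exp_bd x
  have h0 := Real.exp_pos (-x ^ 2 / 2)
  have hs := sqrt_pi_le
  calc x * (Real.sqrt (2 / Real.pi) * Real.exp (-x ^ 2 / 2)) * x ≤ x * (1 * Real.exp (-x ^ 2 / 2)) * x := by gcongr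
    _ ≤ 2 := by nlinarith

section
variable {μ : Measure ℝ} [IsProbabilityMeasure μ] {p : ℝ → ℝ} {g : ℕ → ℝ → ℝ} {M C : ℝ} 

lemma Lf_meas (S : Setup μ p g M C) (n : ℕ) : Measurable (Lf μ g n) := by
  have hm : ∀ k, 1 ≤ k → ∀ ν : Measure ℝ, SFinite ν → Measurable fun y => ∫ u, g k (y - u) ∂ν := by
    intro k hk ν _
    have := S.gm k hk
    exact (StronglyMeasurable.integral_prod_right (f := fun y u => g k (y - u)) 
      (by simp only [Function.uncurry_def]; exact (this.comp (by fun_prop)).stronglyMeasurable)).measurable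
  refine (hm 1 le_rfl _ inferInstance).add (Finset.measurable_sum _ fun i _ => (hm _ (by omega) _ inferInstance).const_mul _)

lemma Hm_dens_pos (S : Setup μ p g M C) (n : ℕ) (s : Set ℝ) (hs : MeasurableSet s) (h0 : s ⊆ Ioi 0) :
    Hm μ (n + 1) s = ENNReal.ofReal ((Hm μ n).real {0}) * μ s + ∫⁻ y in s, ENNReal.ofReal (Lf μ g n y / y) := by
  have hL := Lf_meas S n
  have hp := S.hp
  have h1 : Hm μ (n + 1) s = ∫⁻ x, s.indicator (fun y => ENNReal.ofReal (y⁻¹)) x ∂(Dm (Hm μ (n + 1))) := by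
    rw [lint_Dm _ _ (Measurable.indicator (by fun_prop) hs), ← lintegral_indicator_one hs]
    refine lintegral_congr fun x => ?_
    by_cases hx : x ∈ s
    · have hx0 : 0 < x := h0 hx
      simp only [indicator_of_mem hx, Pi.one_apply]
      rw [← ENNReal.ofReal_mul (by positivity)]
      field_simp; simp
    · simp [indicator_of_notMem hx]
  rw [h1, Dm_Hm S n, lintegral_withDensity_eq_lintegral_mul _ (by fun_prop) (Measurable.indicator (by fun_prop) hs)]
  conv_rhs => rw [S.hμ]
  rw [withDensity_apply _ hs, ← lintegral_const_mul _ (by fun_prop), ← lintegral_add_left (by fun_prop), ← lintegral_indicator hs, ← S.hμ]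
  refine lintegral_congr fun x => ?_
  by_cases hx : x ∈ s
  · have hx0 : 0 < x := h0 hx
    simp only [Pi.mul_apply, indicator_of_mem hx]
    have hL0 := Lf_nonneg S n x
    have hp0 := S.hp0 x
    have hb : 0 ≤ (Hm μ n).real {0} := measureReal_nonneg
    rw [max_eq_left hx0.le, ← ENNReal.ofReal_mul (by positivity), ← ENNReal.ofReal_mul (by positivity), ← ENNReal.ofReal_add (by positivity) (by positivity)]
    congr 1
    field_simp
  · simp [indicator_of_notMem hx]

lemma Lf_div_int (S : Setup μ p g M C) (n : ℕ) (s : Set ℝ) (hs : MeasurableSet s) (h0 : s ⊆ Ioi 0) :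
    IntegrableOn (fun y => Lf μ g n y / y) s ∧
    (Hm μ (n + 1)).real s = (Hm μ n).real {0} * μ.real s + ∫ y in s, Lf μ g n y / y := by
  have hL := Lf_meas S n
  have h := Hm_dens_pos S n s hs h0
  have hnn : 0 ≤ᵐ[volume.restrict s] fun y => Lf μ g n y / y := by
    filter_upwards [ae_restrict_mem hs] with y hy
    exact div_nonneg (Lf_nonneg S n y) (le_of_lt (h0 hy))
  have hfin : ∫⁻ y in s, ENNReal.ofReal (Lf μ g n y / y) ≠ ⊤ := by
    have : ∫⁻ y in s, ENNReal.ofReal (Lf μ g n y / y) ≤ Hm μ (n + 1) s := by rw [h]; exact le_add_self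
    exact ne_top_of_le_ne_top (by finiteness) this
  constructor
  · refine ⟨(hL.div measurable_id).aestronglyMeasurable, ?_⟩
    rw [hasFiniteIntegral_iff_ofReal hnn]
    exact hfin.lt_top
  · rw [integral_eq_lintegral_of_nonneg_ae hnn (hL.div measurable_id).aestronglyMeasurable, Measure.real, h, ENNReal.toReal_add (by finiteness) hfin, ENNReal.toReal_mul, ENNReal.toReal_ofReal measureReal_nonneg]
    rfl

end

section
variable {μ : Measure ℝ} [IsProbabilityMeasure μ] {p : ℝ → ℝ} {g : ℕ → ℝ → ℝ} {M C : ℝ} 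

lemma Lam_int (S : Setup μ p g M C) (n : ℕ) (a b : ℝ) (ha : 0 < a) (hab : a < b) :
    IntervalIntegrable (fun x => Lam μ g n x / x) volume a b ∧
    ∫ x in a..b, Lam μ g n x / x = ((Hm μ (n + 1)).real (Ioi (a * Real.sqrt (n + 1))) - (Hm μ (n + 1)).real (Ioi (b * Real.sqrt (n + 1))))
      - (Hm μ n).real {0} * μ.real (Ioc (a * Real.sqrt (n + 1)) (b * Real.sqrt (n + 1))) := by
  have hc : 0 < Real.sqrt ((n:ℝ) + 1) := by positivity
  set c := Real.sqrt ((n:ℝ) + 1) with hcdef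
  have hlt : c * a < c * b := by gcongr
  obtain ⟨i1, e1⟩ := Lf_div_int S n (Ioc (c * a) (c * b)) measurableSet_Ioc (fun y hy => lt_trans (by positivity) hy.1)
  have i2 : IntervalIntegrable (fun y => Lf μ g n y / y) volume (c * a) (c * b) :=
    (intervalIntegrable_iff_integrableOn_Ioc_of_le hlt.le).2 i1
  have ef : (fun x => Lam μ g n x / x) = fun x => c * (Lf μ g n (c * x) / (c * x)) := by
    ext x
    rw [Lam, ← hcdef, ← mul_div_assoc, mul_div_mul_left _ _ hc.ne']
  constructor
  · rw [ef]
    have := (i2.comp_mul_left (c := c)).const_mul c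
    rwa [mul_div_cancel_left₀ _ hc.ne', mul_div_cancel_left₀ _ hc.ne'] at this
  · rw [ef, intervalIntegral.integral_const_mul, intervalIntegral.integral_comp_mul_left (fun y => Lf μ g n y / y) hc.ne', smul_eq_mul, mul_inv_cancel_left₀ hc.ne', intervalIntegral.integral_of_le hlt.le]
    have : Ioi (c * a) \ Ioi (c * b) = Ioc (c * a) (c * b) := by ext x; simp
    rw [mul_comm a, mul_comm b, ← measureReal_sdiff (Ioi_subset_Ioi hlt.le) measurableSet_Ioi, this, e1]
    ring

lemma Lam_conv (S : Setup μ p g M C) (a b : ℝ) (ha : 0 < a) (hab : a < b) :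
    Tendsto (fun n => ∫ x in a..b, Lam μ g n x / x) atTop (nhds (∫ x in a..b, hh x / x)) := by
  have e : ∫ x in a..b, hh x / x = 2 * Gt a - 2 * Gt b - 0 := by
    rw [sub_zero, ← mul_sub, Gt_sub hab.le, ← intervalIntegral.integral_const_mul]
    refine intervalIntegral.integral_congr fun x hx => ?_
    rw [uIcc_of_le hab.le] at hx
    have hx0 : x ≠ 0 := (ha.trans_le hx.1).ne'
    beta_reduce
    rw [hh, mul_div_cancel_left₀ _ hx0, phip_eq]
  rw [e]
  have t1 := (tendsto_add_atTop_iff_nat 1).2 (Hm_clt μ S.mom a ha)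
  have t2 := (tendsto_add_atTop_iff_nat 1).2 (Hm_clt μ S.mom b (ha.trans hab))
  push_cast at t1 t2
  have t3 : Tendsto (fun n : ℕ => (Hm μ n).real {0} * μ.real (Ioc (a * Real.sqrt (n + 1)) (b * Real.sqrt (n + 1)))) atTop (nhds 0) := by
    have t4 : Tendsto (fun n : ℕ => (1:ℝ) / (a ^ 2 * ((n:ℝ) + 1))) atTop (nhds 0) :=
      tendsto_const_nhds.div_atTop (Tendsto.const_mul_atTop (by positivity) (tendsto_atTop_add_const_right _ _ tendsto_natCast_atTop_atTop))
    refine squeeze_zero (fun n => by positivity) (fun n => ?_) t4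
    have hc : 0 < Real.sqrt ((n:ℝ) + 1) := by positivity
    have h1 := pw_cheb μ S.mom 1 (a * Real.sqrt (n + 1)) (by positivity)
    rw [pw_one, mul_pow, Real.sq_sqrt (by positivity)] at h1
    push_cast at h1
    have h2 : μ.real (Ioc (a * Real.sqrt (n + 1)) (b * Real.sqrt (n + 1))) ≤ μ.real {x | a * Real.sqrt (n + 1) ≤ |x|} := by
      refine measureReal_mono fun y hy => ?_
      exact hy.1.le.trans (le_abs_self _)
    have h3 : (Hm μ n).real {0} ≤ 1 := measureReal_le_one
    calc _ ≤ 1 * μ.real (Ioc (a * Real.sqrt (n + 1)) (b * Real.sqrt (n + 1))) := by gcongr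
      _ ≤ _ := by rw [one_mul]; exact h2.trans h1
  refine ((t1.sub t2).sub t3).congr fun n => ?_
  rw [(Lam_int S n a b ha hab).2]

lemma Lam_unif (S : Setup μ p g M C) : ∀ ε > 0, ∃ n0 : ℕ, ∀ n ≥ n0, ∀ x, 0 < x → |Lam μ g n x - hh x| ≤ ε := by
  have hhi : ∀ a b : ℝ, 0 < a → a < b → IntervalIntegrable (fun x => hh x / x) volume a b := by
    intro a b ha hab
    refine ContinuousOn.intervalIntegrable_of_Icc hab.le (ContinuousOn.div ?_ continuousOn_id fun x hx => (ha.trans_le hx.1).ne')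
    exact fun x _ => (hh_deriv x).continuousAt.continuousWithinAt
  refine abs_unif (fun n x => Lam μ g n x - hh x) ?_ ?_ ?_ ?_
  · intro ε hε
    obtain ⟨ρ, hρ, n0, h0⟩ := Lam_equi S (ε / 2) (by positivity)
    refine ⟨min ρ (ε / 4), by positivity, n0, fun n hn x x' hx => ?_⟩
    have h1 := abs_le.1 (h0 n hn x x' (hx.trans (min_le_left _ _)))
    have h2 := abs_le.1 ((hh_lip x x').trans (mul_le_mul_of_nonneg_left (hx.trans (min_le_right _ _)) (by norm_num)))
    rw [abs_le]
    constructor <;> linarith [h1.1, h1.2, h2.1, h2.2]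
  · intro ε hε
    obtain ⟨A, hA, n0, h0⟩ := Lam_decay S ε hε
    refine ⟨max A (2 / ε), by positivity, n0, fun n hn x hx => ?_⟩
    have hx0 : 0 < x := hA.trans_le (le_of_max_le_left hx)
    have h1 := h0 n hn x (le_of_max_le_left hx)
    have h2 := hh_decay x hx0
    have h3 : 2 / x ≤ ε := by
      have := le_of_max_le_right hx
      rw [div_le_iff₀ hε] at this
      rw [div_le_iff₀ hx0]; linarith
    have h4 : 0 ≤ Lam μ g n x := Lf_nonneg S n _
    have h5 := hh_nonneg x hx0.le
    rw [abs_le]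
    constructor <;> linarith
  · intro n a b ha hab
    refine ((Lam_int S n a b ha hab).1.sub (hhi a b ha hab)).congr fun x _ => ?_
    beta_reduce; ring
  · intro a b ha hab
    have := (Lam_conv S a b ha hab).sub_const (∫ x in a..b, hh x / x)
    rw [sub_self] at this
    refine this.congr fun n => ?_
    rw [← intervalIntegral.integral_sub (Lam_int S n a b ha hab).1 (hhi a b ha hab)]
    congr 1; ext x; ring

end

def Rr {Ω : Type*} (X : ℕ → Ω → ℝ) : ℕ → ℕ → Ω → ℝ
  | 0, _, _ => 0
  | n + 1, i, ω => max (X i ω + Rr X n (i + 1) ω) 0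

lemma Rr_le {Ω : Type*} (X : ℕ → Ω → ℝ) (ω : Ω) (n : ℕ) : ∀ i t, Rr X n i ω ≤ t ↔
    ∀ k ≤ n, ∑ j ∈ Finset.range k, X (i + j) ω ≤ t := by
  induction n with
  | zero => 
    intro i t
    simp [Rr]
  | succ n ih =>
    intro i t
    rw [Rr, max_le_iff, ← le_sub_iff_add_le', ih]
    have e : ∀ k, ∑ j ∈ Finset.range (k + 1), X (i + j) ω = (∑ j ∈ Finset.range k, X (i + 1 + j) ω) + X i ω := by
      intro k
      rw [Finset.sum_range_succ']
      simp only [add_zero, add_assoc, add_comm 1]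
    constructor
    · rintro ⟨h1, h2⟩ k hk
      rcases k with _ | k
      · simpa using h2
      · rw [e]
        linarith [h1 k (by omega)]
    · intro h
      refine ⟨fun k hk => ?_, by simpa using h 0 (by omega)⟩
      have := h (k + 1) (by omega)
      rw [e] at this
      linarith

section
variable {Ω : Type*} [MeasureSpace Ω] [IsProbabilityMeasure (ℙ : Measure Ω)]
    (X : ℕ → Ω → ℝ)

lemma Rr_sigma (n : ℕ) : ∀ i, Measurable[⨆ j ∈ Ici i, (inferInstance : MeasurableSpace ℝ).comap (X j)] (Rr X n i) := by
  induction n with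
  | zero => intro i; exact measurable_const
  | succ n ih =>
    intro i
    have h1 : Measurable[⨆ j ∈ Ici i, (inferInstance : MeasurableSpace ℝ).comap (X j)] (Rr X n (i + 1)) := by
      refine (ih (i + 1)).mono ?_ le_rfl
      exact iSup₂_mono' fun j hj => ⟨j, (Nat.le_succ i).trans hj, le_rfl⟩
    have h2 : Measurable[⨆ j ∈ Ici i, (inferInstance : MeasurableSpace ℝ).comap (X j)] (X i) := by
      refine (comap_measurable (X i)).mono ?_ le_rfl
      exact le_iSup₂_of_le i (mem_Ici.2 le_rfl) le_rfl
    exact (h2.add h1).max measurable_const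

lemma Rr_meas (hmeas : ∀ i, Measurable (X i)) (n i : ℕ) : Measurable (Rr X n i) :=
  (Rr_sigma X n i).mono (iSup₂_le fun j _ => (hmeas j).comap_le) le_rfl

lemma Rr_law (hmeas : ∀ i, Measurable (X i))
    (hindep : iIndepFun X ℙ)
    (hident : ∀ i, Measure.map (X i) ℙ = Measure.map (X 0) ℙ) (n : ℕ) : ∀ i, Measure.map (Rr X n i) ℙ = Hm (Measure.map (X 0) ℙ) n := by
  induction n with
  | zero =>
    intro i
    have : Rr X 0 i = fun _ => 0 := rfl
    rw [this, Measure.map_const]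
    simp [Hm]
  | succ n ih =>
    intro i
    have hi : IndepFun (X i) (Rr X n (i + 1)) ℙ := by
      rw [IndepFun_iff_Indep]
      have := indep_iSup_of_disjoint (fun j => (hmeas j).comap_le) hindep.iIndep (S := {i}) (T := Ici (i + 1)) (by simp)
      refine indep_of_indep_of_le_left (indep_of_indep_of_le_right this ?_) ?_
      · exact measurable_iff_comap_le.1 (Rr_sigma X n (i + 1))
      · simp
    have e : Rr X (n + 1) i = (fun x => max x 0) ∘ (X i + Rr X n (i + 1)) := rfl
    rw [e, ← Measure.map_map (by fun_prop) ((hmeas i).add (Rr_meas X hmeas n (i + 1))), hi.map_add_eq_map_conv_map (hmeas i) (Rr_meas X hmeas n (i + 1)), ih, hident]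
    rfl

end

lemma lint_scale (c : ℝ) (hc : 0 < c) (F : ℝ → ℝ≥0∞) (hF : Measurable F) (s : Set ℝ) (hs : MeasurableSet s) :
    ∫⁻ y in {y | y / c ∈ s}, F y = ∫⁻ x in s, ENNReal.ofReal c * F (c * x) := by
  have hs' : MeasurableSet {y : ℝ | y / c ∈ s} := hs.preimage (by fun_prop)
  have hm : Measurable fun x : ℝ => c * x := by fun_prop
  have hm2 : Measurable fun x : ℝ => {y : ℝ | y / c ∈ s}.indicator F (c * x) := (hF.indicator hs').comp hm
  rw [← lintegral_indicator hs']
  conv_lhs => rw [← Real.smul_map_volume_mul_left hc.ne']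
  rw [lintegral_smul_measure, lintegral_map (hF.indicator hs') hm, abs_of_pos hc, smul_eq_mul,
    ← lintegral_const_mul _ hm2, ← lintegral_indicator hs]
  refine lintegral_congr fun x => ?_
  have e : c * x / c = x := by field_simp
  by_cases hx : x ∈ s
  · rw [indicator_of_mem (show c * x ∈ {y : ℝ | y / c ∈ s} by simpa [e] using hx), indicator_of_mem hx]
  · rw [indicator_of_notMem (show c * x ∉ {y : ℝ | y / c ∈ s} by simpa [e] using hx), indicator_of_notMem hx, mul_zero]

lemma Sbar_le {Ω : Type*} (X : ℕ → Ω → ℝ) (Sbar : ℕ → Ω → ℝ)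
    (hSbar : ∀ n, ∀ hn : 1 ≤ n, ∀ ω, Sbar n ω =
      (Finset.Icc 1 n).sup' (Finset.nonempty_Icc.mpr hn)
        (fun k => ∑ i ∈ Finset.range k, X i ω)) (n : ℕ) (hn : 1 ≤ n) (ω : Ω) (t : ℝ) :
    Sbar n ω ≤ t ↔ ∀ k, 1 ≤ k → k ≤ n → ∑ i ∈ Finset.range k, X i ω ≤ t := by
  rw [hSbar n hn, Finset.sup'_le_iff]
  simp only [Finset.mem_Icc, and_imp]

lemma Sbar_eq {Ω : Type*} (X : ℕ → Ω → ℝ) (Sbar : ℕ → Ω → ℝ)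
    (hSbar : ∀ n, ∀ hn : 1 ≤ n, ∀ ω, Sbar n ω =
      (Finset.Icc 1 n).sup' (Finset.nonempty_Icc.mpr hn)
        (fun k => ∑ i ∈ Finset.range k, X i ω)) (n : ℕ) (ω : Ω) :
    Sbar (n + 1) ω = X 0 ω + Rr X n 1 ω := by
  refine eq_of_forall_ge_iff fun t => ?_
  rw [Sbar_le X Sbar hSbar _ (by omega), ← le_sub_iff_add_le', Rr_le]
  have e : ∀ k, ∑ j ∈ Finset.range (k + 1), X j ω = (∑ j ∈ Finset.range k, X (1 + j) ω) + X 0 ω := by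
    intro k
    rw [Finset.sum_range_succ']
    simp only [add_comm 1]
  constructor
  · intro h k hk
    have := h (k + 1) (by omega) (by omega)
    rw [e] at this; linarith
  · intro h k hk1 hk
    obtain ⟨k, rfl⟩ : ∃ j, k = j + 1 := ⟨k - 1, by omega⟩
    rw [e]; linarith [h k (by omega)]

lemma final_aux {Ω : Type*} [MeasureSpace Ω] [IsProbabilityMeasure (ℙ : Measure Ω)]
    (X : ℕ → Ω → ℝ) (hmeas : ∀ i, Measurable (X i))
    (hindep : iIndepFun X ℙ)
    (hident : ∀ i, Measure.map (X i) ℙ = Measure.map (X 0) ℙ)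
    (p : ℝ → ℝ) (g : ℕ → ℝ → ℝ) (M C : ℝ) (S : Setup (Measure.map (X 0) ℙ) p g M C)
    (Sbar : ℕ → Ω → ℝ)
    (hSbar : ∀ n, ∀ hn : 1 ≤ n, ∀ ω, Sbar n ω =
      (Finset.Icc 1 n).sup' (Finset.nonempty_Icc.mpr hn)
        (fun k => ∑ i ∈ Finset.range k, X i ω))
    (pstar : ℕ → ℝ → ℝ) (hpstarmeas : ∀ n, Measurable (pstar n))
    (hpstar0 : ∀ n x, 0 ≤ pstar n x)
    (hpstar : ∀ n, 1 ≤ n → Measure.map (fun ω => Sbar n ω / Real.sqrt n) ℙ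
      = volume.withDensity (fun x => ENNReal.ofReal (pstar n x))) (n : ℕ) (hn : 1 ≤ n) :
    ∀ᵐ x ∂(volume.restrict (Ioi (0 : ℝ))), pstar (n + 1) x =
      (ℙ {ω | Sbar n ω < 0}).toReal * Real.sqrt (n + 1) * p (Real.sqrt (n + 1) * x) + Lam (Measure.map (X 0) ℙ) g n x / x := by
  have hprob : IsProbabilityMeasure (Measure.map (X 0) ℙ) := Measure.isProbabilityMeasure_map (hmeas 0).aemeasurable
  have hSm : ∀ k, Measurable (Sbar (k + 1)) := fun k => by
    have : Sbar (k + 1) = fun ω => X 0 ω + Rr X k 1 ω := funext fun ω => Sbar_eq X Sbar hSbar k ω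
    rw [this]
    exact (hmeas 0).add (Rr_meas X hmeas k 1)
  have hR : ∀ k ω, Rr X (k + 1) 0 ω = max (Sbar (k + 1) ω) 0 := fun k ω => by
    rw [Sbar_eq X Sbar hSbar]; rfl
  set μ := Measure.map (X 0) ℙ with hμdef
  have hb : (ℙ {ω | Sbar n ω < 0}).toReal = (Hm μ n).real {0} := by
    obtain ⟨k, rfl⟩ : ∃ j, n = j + 1 := ⟨n - 1, by omega⟩
    rw [Measure.real, ← Rr_law X hmeas hindep hident (k + 1) 0, Measure.map_apply (Rr_meas X hmeas _ _) (measurableSet_singleton _)]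
    congr 1
    have hs : (0:ℝ) < Real.sqrt ((k + 1 : ℕ) : ℝ) := by positivity
    have hz : ℙ {ω | Sbar (k + 1) ω = 0} = 0 := by
      have h1 : Measure.map (fun ω => Sbar (k + 1) ω / Real.sqrt ((k + 1 : ℕ) : ℝ)) ℙ {0} = 0 := by
        rw [hpstar (k + 1) (by omega)]
        exact withDensity_absolutelyContinuous _ _ (by simp)
      rw [Measure.map_apply ((hSm k).div_const _) (measurableSet_singleton _)] at h1
      refine measure_mono_null (fun ω hω => ?_) h1
      have hω' : Sbar (k + 1) ω = 0 := hω
      simp [hω']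
    refine le_antisymm (measure_mono fun ω hω => ?_) ?_
    · have hω' : Sbar (k + 1) ω < 0 := hω
      simp [hR, hω'.le]
    · refine (measure_mono (t := {ω | Sbar (k + 1) ω < 0} ∪ {ω | Sbar (k + 1) ω = 0}) fun ω hω => ?_).trans ((measure_union_le _ _).trans (by rw [hz, add_zero]))
      have hω' : Rr X (k + 1) 0 ω = 0 := hω
      rw [hR, max_eq_right_iff] at hω'
      exact hω'.lt_or_eq
  rw [hb]
  set b := (Hm μ n).real {0} with hbdef
  have hb0 : 0 ≤ b := measureReal_nonneg
  have hc : 0 < Real.sqrt ((n:ℝ) + 1) := by positivity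
  set c := Real.sqrt ((n:ℝ) + 1) with hcdef
  have hL := Lf_meas S n
  have hp := S.hp
  have hLam : Measurable (Lam μ g n) := hL.comp (by fun_prop : Measurable fun x : ℝ => Real.sqrt (n + 1) * x)
  have hps := hpstarmeas (n + 1)
  have hrhs : Measurable fun x => b * c * p (c * x) + Lam μ g n x / x := by fun_prop
  have key : (fun x => ENNReal.ofReal (pstar (n + 1) x)) =ᵐ[volume.restrict (Ioi (0:ℝ))] fun x => ENNReal.ofReal (b * c * p (c * x) + Lam μ g n x / x) := by
    refine ae_eq_of_forall_setLIntegral_eq_of_sigmaFinite (by fun_prop) (by fun_prop) fun s hs _ => ?_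
    rw [Measure.restrict_restrict hs]
    have hs2 : MeasurableSet (s ∩ Ioi 0) := hs.inter measurableSet_Ioi
    have hpos : s ∩ Ioi 0 ⊆ Ioi 0 := inter_subset_right
    set s' := s ∩ Ioi (0:ℝ)
    have hs' : MeasurableSet {y : ℝ | y / c ∈ s'} := hs2.preimage (by fun_prop)
    have hpos' : {y : ℝ | y / c ∈ s'} ⊆ Ioi 0 := fun y hy => by
      have : 0 < y / c := hpos hy
      have h2 := mul_pos this hc
      rwa [div_mul_cancel₀ _ hc.ne'] at h2
    have h1 : ∫⁻ x in s', ENNReal.ofReal (pstar (n + 1) x) = Hm μ (n + 1) {y : ℝ | y / c ∈ s'} := by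
      have := hpstar (n + 1) (by omega)
      push_cast at this
      rw [← withDensity_apply _ hs2, ← this, Measure.map_apply ((hSm n).div_const _) hs2, ← Rr_law X hmeas hindep hident (n + 1) 0, Measure.map_apply (Rr_meas X hmeas _ _) hs']
      congr 1
      refine Set.ext fun ω => ?_
      change Sbar (n + 1) ω / c ∈ s' ↔ Rr X (n + 1) 0 ω / c ∈ s'
      rw [hR]
      rcases le_or_gt (Sbar (n + 1) ω) 0 with hneg | hp1
      · rw [max_eq_right hneg]
        constructor
        · intro h
          have : 0 < Sbar (n + 1) ω / c := hpos h
          exact absurd this (not_lt.2 (div_nonpos_of_nonpos_of_nonneg hneg hc.le))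
        · intro h
          have : 0 < (0:ℝ) / c := hpos h
          simp at this
      · rw [max_eq_left hp1.le]
    rw [h1, Hm_dens_pos S n _ hs' hpos']
    conv_lhs => rw [S.hμ]
    rw [withDensity_apply _ hs', ← S.hμ, lint_scale c hc _ (by fun_prop) s' hs2, lint_scale c hc _ (by fun_prop) s' hs2,
      ← lintegral_const_mul _ (by fun_prop), ← lintegral_add_left (by fun_prop)]
    refine setLIntegral_congr_fun hs2 fun x hx => ?_
    have hx0 : 0 < x := hpos hx
    have hL0 := Lf_nonneg S n (c * x)
    have hp0 := S.hp0 (c * x)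
    beta_reduce
    rw [← ENNReal.ofReal_mul hc.le, ← ENNReal.ofReal_mul hb0, ← ENNReal.ofReal_mul hc.le, ← ENNReal.ofReal_add (by positivity) (by positivity)]
    congr 1
    rw [Lam, ← hcdef]
    field_simp
  filter_upwards [key, ae_restrict_mem measurableSet_Ioi] with x hx hx0
  have hx0' : 0 < x := hx0
  have hL0 : 0 ≤ Lam μ g n x := Lf_nonneg S n _
  have hp0 := S.hp0 (c * x)
  have := congrArg ENNReal.toReal hx
  rwa [ENNReal.toReal_ofReal (hpstar0 _ _), ENNReal.toReal_ofReal (by positivity)] at this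

theorem stmt14 {Ω : Type*} [MeasureSpace Ω] [IsProbabilityMeasure (ℙ : Measure Ω)]
    (X : ℕ → Ω → ℝ) (hmeas : ∀ i, Measurable (X i))
    (hindep : iIndepFun X ℙ)
    (hident : ∀ i, Measure.map (X i) ℙ = Measure.map (X 0) ℙ)
    (hL2 : MemLp (X 0) 2 ℙ)
    (hmean : ∫ ω, X 0 ω ∂ℙ = 0)
    (hvar : ∫ ω, (X 0 ω) ^ 2 ∂ℙ = 1)
    (p : ℝ → ℝ) (hpmeas : Measurable p) (hp0 : ∀ x, 0 ≤ p x)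
    (hpbdd : ∃ M : ℝ, ∀ x, p x ≤ M)
    (hpdens : Measure.map (X 0) ℙ = volume.withDensity (fun x => ENNReal.ofReal (p x)))
    (Sbar : ℕ → Ω → ℝ)
    (hSbar : ∀ n, ∀ hn : 1 ≤ n, ∀ ω, Sbar n ω =
      (Finset.Icc 1 n).sup' (Finset.nonempty_Icc.mpr hn)
        (fun k => ∑ i ∈ Finset.range k, X i ω))
    (pstar : ℕ → ℝ → ℝ) (hpstarmeas : ∀ n, Measurable (pstar n))
    (hpstar0 : ∀ n x, 0 ≤ pstar n x)
    (hpstar : ∀ n, 1 ≤ n → Measure.map (fun ω => Sbar n ω / Real.sqrt n) ℙ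
      = volume.withDensity (fun x => ENNReal.ofReal (pstar n x))) :
    ∃ ε : ℕ → ℝ, (∀ n, 0 < ε n) ∧ Tendsto ε atTop (nhds 0) ∧
      ∃ N : ℕ, ∀ n ≥ N,
        ∀ᵐ x ∂(volume.restrict (Ioi (0 : ℝ))),
          |pstar n x - Real.sqrt (2 / Real.pi) * Real.exp (-x ^ 2 / 2)
              - (ℙ {ω | Sbar (n - 1) ω < 0}).toReal * Real.sqrt n * p (Real.sqrt n * x)|
            ≤ ε n / x := by
  obtain ⟨M, hM⟩ := hpbdd
  have hprob : IsProbabilityMeasure (Measure.map (X 0) ℙ) := Measure.isProbabilityMeasure_map (hmeas 0).aemeasurable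
  have hmom : Mom (Measure.map (X 0) ℙ) := by
    constructor
    · rw [integrable_map_measure (by fun_prop) (hmeas 0).aemeasurable]
      exact hL2.integrable_sq
    · rw [integral_map (hmeas 0).aemeasurable (by fun_prop)]; exact hmean
    · rw [integral_map (hmeas 0).aemeasurable (by fun_prop)]; exact hvar
  obtain ⟨g, C, S⟩ := setup_exists _ hmom p hpmeas hp0 M hM hpdens
  have hU := Lam_unif S
  have hA := final_aux X hmeas hindep hident p g M C S Sbar hSbar pstar hpstarmeas hpstar0 hpstar
  set μ := Measure.map (X 0) ℙ
  set E : ℕ → ℝ := fun n => ⨆ x : Ioi (0:ℝ), |Lam μ g n x - hh x| with hE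
  have hE0 : ∀ n, 0 ≤ E n := fun n => Real.iSup_nonneg fun x => abs_nonneg _
  have hEt : Tendsto E atTop (nhds 0) := by
    rw [Metric.tendsto_atTop]
    intro e he
    obtain ⟨n0, h0⟩ := hU (e / 2) (by positivity)
    refine ⟨n0, fun n hn => ?_⟩
    rw [Real.dist_eq, sub_zero, abs_of_nonneg (hE0 n)]
    have : Nonempty (Ioi (0:ℝ)) := ⟨⟨1, mem_Ioi.2 one_pos⟩⟩
    have : E n ≤ e / 2 := ciSup_le fun x => h0 n hn x x.2
    linarith
  obtain ⟨n1, h1⟩ := hU 1 one_pos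
  have hEl : ∀ n ≥ n1, ∀ x, 0 < x → |Lam μ g n x - hh x| ≤ E n := by
    intro n hn x hx
    exact le_ciSup (f := fun x : Ioi (0:ℝ) => |Lam μ g n x - hh x|) ⟨1, by rintro _ ⟨z, rfl⟩; exact h1 n hn z z.2⟩ ⟨x, hx⟩
  refine ⟨fun n => E (n - 1) + 1 / ((n:ℝ) + 1), fun n => ?_, ?_, n1 + 2, fun n hn => ?_⟩
  · have := hE0 (n - 1)
    positivity
  · have := (hEt.comp (tendsto_sub_atTop_nat 1)).add (tendsto_one_div_add_atTop_nhds_zero_nat (𝕜 := ℝ))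
    simpa using this
  · obtain ⟨n, rfl⟩ : ∃ j, n = j + 1 := ⟨n - 1, by omega⟩
    filter_upwards [hA n (by omega), ae_restrict_mem measurableSet_Ioi] with x hx hx0
    have hx0' : 0 < x := hx0
    rw [Nat.add_sub_cancel, hx]
    push_cast
    have h2 := hEl n (by omega) x hx0'
    have e : (ℙ {ω | Sbar n ω < 0}).toReal * Real.sqrt (n + 1) * p (Real.sqrt (n + 1) * x) + Lam μ g n x / x - Real.sqrt (2 / Real.pi) * Real.exp (-x ^ 2 / 2) - (ℙ {ω | Sbar n ω < 0}).toReal * Real.sqrt (n + 1) * p (Real.sqrt (n + 1) * x) = (Lam μ g n x - hh x) / x := by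
      rw [hh, sub_div, mul_div_cancel_left₀ _ hx0'.ne']
      ring
    rw [e, abs_div, abs_of_pos hx0']
    gcongr
    have : (0:ℝ) ≤ 1 / ((n:ℝ) + 1 + 1) := by positivity
    linarith
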